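/- arXiv:2504.14198 — 5 statements merged into one kernel-verified Lean document; each statement's English description precedes it below -/
import Mathlib

section
/- Let F be a field with char(F) ≠ 2, let n ≥ 2, and let T : M_n(F) → M_n(F) be a bijective linear map. Then T(C_n) ⊆ C_n if and only if there exist invertible matrices P, Q ∈ M_n(F) with PQ ∈ Λ_n(F) such that either T(X) = P·X·Q for all X ∈ M_n(F), or T(X) = P·Xᵗ·Q for all X ∈ M_n(F). -/
open Matrix

/-- The set of matrices that are products of three involutions. -/
def ProdInv3 (F : Type*) [Field F] (n : ℕ) : Set (Matrix (Fin n) (Fin n) F) :=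
  {A | ∃ J₁ J₂ J₃ : Matrix (Fin n) (Fin n) F,
    J₁ * J₁ = 1 ∧ J₂ * J₂ = 1 ∧ J₃ * J₃ = 1 ∧ A = J₁ * J₂ * J₃}

/-- `Λ_n(F)`: matrices whose left multiplication preserves products of three involutions. -/
def LambdaSet (F : Type*) [Field F] (n : ℕ) : Set (Matrix (Fin n) (Fin n) F) :=
  {P | ∀ A ∈ ProdInv3 F n, P * A ∈ ProdInv3 F n}

theorem exists_dual_ext {F L V : Type*} [Field F] [AddCommGroup L] [Module F L] [AddCommGroup V]
    [Module F V] (e : L →ₗ[F] V) (r : L →ₗ[F] F) (h : ∀ l, e l = 0 → r l = 0) :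
    ∃ φ : V →ₗ[F] F, ∀ l, φ (e l) = r l := by
  have : r ∈ LinearMap.range e.dualMap := by
    rw [LinearMap.range_dualMap_eq_dualAnnihilator_ker]
    rw [Submodule.mem_dualAnnihilator]
    intro w hw
    exact h w hw
  obtain ⟨φ, hφ⟩ := this
  exact ⟨φ, fun l => by rw [← hφ]; rfl⟩

theorem exists_dual_ext' {F L V : Type*} [Field F] [AddCommGroup L] [Module F L] [AddCommGroup V]
    [Module F V] (e : L →ₗ[F] V) (r : L →ₗ[F] F) (h : ∀ l, e l = 0 → r l = 0)
    (x : V) (hx : ∀ l, e l ≠ x) :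
    ∃ φ : V →ₗ[F] F, (∀ l, φ (e l) = r l) ∧ φ x = 1 := by
  obtain ⟨φ, hφ⟩ := exists_dual_ext (e.coprod (LinearMap.toSpanSingleton F V x))
    (r.coprod LinearMap.id) (by
      rintro ⟨l, t⟩ hl
      simp only [LinearMap.coprod_apply, LinearMap.toSpanSingleton_apply, LinearMap.id_apply] at hl ⊢
      by_cases ht : t = 0
      · subst ht; simp at hl; simp [h l hl]
      · exfalso
        apply hx (-(t⁻¹ • l))
        rw [map_neg, map_smul, eq_neg_of_add_eq_zero_left hl, smul_neg, neg_neg, smul_smul,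
          inv_mul_cancel₀ ht, one_smul])
  refine ⟨φ, fun l => ?_, ?_⟩
  · simpa using hφ (l, 0)
  · simpa using hφ (0, 1)

theorem exists_not_mem_two {F V : Type*} [Field F] [AddCommGroup V] [Module F V]
    (S p q : Submodule F V) (hp : ¬ S ≤ p) (hq : ¬ S ≤ q) : ∃ s ∈ S, s ∉ p ∧ s ∉ q := by
  obtain ⟨a, haS, ha⟩ := Set.not_subset.1 hp
  obtain ⟨b, hbS, hb⟩ := Set.not_subset.1 hq
  by_cases ha' : a ∈ q
  · by_cases hb' : b ∈ p
    · exact ⟨a + b, S.add_mem haS hbS, fun h => ha ((p.add_mem_iff_left hb').1 h),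
        fun h => hb ((q.add_mem_iff_right ha').1 h)⟩
    · exact ⟨b, hbS, hb', hb⟩
  · exact ⟨a, haS, ha, ha'⟩

/-- A nilpotent endomorphism anticommutes with some involution. -/
theorem nilp_anti {F : Type*} [Field F] (m : ℕ) : ∀ {V : Type*} [AddCommGroup V] [Module F V]
    [FiniteDimensional F V] (f : Module.End F V), Module.finrank F V = m → IsNilpotent f →
    ∃ J : Module.End F V, J * J = 1 ∧ J * f = - (f * J) := by
  induction m using Nat.strong_induction_on with
  | _ m ih =>
  intro V _ _ _ f hm hf
  by_cases hV : Subsingleton V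
  · exact ⟨1, by simp, LinearMap.ext fun v => Subsingleton.elim _ _⟩
  rw [not_subsingleton_iff_nontrivial] at hV
  -- top power
  obtain ⟨k, hk0, hk⟩ : ∃ k, f ^ k ≠ 0 ∧ f ^ (k + 1) = 0 := by
    classical
    have hne : Nat.find hf ≠ 0 := by
      intro h
      have := Nat.find_spec hf
      rw [h, pow_zero] at this
      exact one_ne_zero this
    obtain ⟨k, hk⟩ := Nat.exists_eq_succ_of_ne_zero hne
    refine ⟨k, Nat.find_min hf (by omega), ?_⟩
    have := Nat.find_spec hf
    rwa [hk] at this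
  have hbig : ∀ j, k < j → f ^ j = 0 := fun j hj => pow_eq_zero_of_le hj hk
  obtain ⟨v, hv⟩ : ∃ v, (f ^ k) v ≠ 0 := by
    by_contra! h
    exact hk0 (LinearMap.ext h)
  -- the functional
  obtain ⟨ψ, hψ0, hψ1⟩ : ∃ ψ : V →ₗ[F] F, (∀ i, i < k → ψ ((f ^ i) v) = 0) ∧ ψ ((f ^ k) v) = 1 := by
    obtain ⟨φ, hφ, h1⟩ := exists_dual_ext' (Fintype.linearCombination F (fun i : Fin k => (f ^ (i : ℕ)) v))
      0 (by simp) ((f ^ k) v) (by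
        intro c hc
        rw [Fintype.linearCombination_apply] at hc
        have hall : ∀ j (hj : j < k), c ⟨j, hj⟩ = 0 := by
          intro j
          induction j using Nat.strong_induction_on with
          | _ j ihj =>
          intro hj
          have h2 := congrArg (f ^ (k - j)) hc
          rw [map_sum, Finset.sum_eq_single ⟨j, hj⟩] at h2
          · rw [map_smul, ← Module.End.mul_apply, ← pow_add, ← Module.End.mul_apply, ← pow_add,
              hbig (k - j + k) (by omega)] at h2
            simp only [LinearMap.zero_apply, smul_eq_zero] at h2
            rcases h2 with h2 | h2
            · exact h2
            · rw [show k - j + j = k by omega] at h2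
              exact absurd h2 hv
          · intro b _ hb
            rcases lt_trichotomy (b : ℕ) j with h | h | h
            · rw [show c b = 0 from ihj b h b.2]; simp
            · exact absurd (Fin.ext h) hb
            · rw [map_smul, ← Module.End.mul_apply, ← pow_add, hbig _ (by omega)]; simp
          · simp
        apply hv
        rw [← hc]
        exact Finset.sum_eq_zero fun i _ => by rw [hall i i.2, zero_smul])
    refine ⟨φ, fun i hi => ?_, h1⟩
    have := hφ (Pi.single ⟨i, hi⟩ 1)
    simpa using this
  have hψ : ∀ j, ψ ((f ^ j) v) = if j = k then 1 else 0 := by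
    intro j
    rcases lt_trichotomy j k with h | h | h
    · rw [hψ0 j h, if_neg h.ne]
    · rw [h, hψ1, if_pos rfl]
    · rw [hbig j h, if_neg h.ne']; simp
  let G : (ℕ → F) → Module.End F V := fun ε =>
    ∑ i ∈ Finset.range (k + 1), ε i • LinearMap.smulRight (ψ ∘ₗ (f ^ (k - i))) ((f ^ i) v)
  have hG : ∀ ε u, G ε u = ∑ i ∈ Finset.range (k + 1), (ε i * ψ ((f ^ (k - i)) u)) • (f ^ i) v := by
    intro ε u
    simp only [G, LinearMap.sum_apply, LinearMap.smul_apply, LinearMap.smulRight_apply,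
      LinearMap.comp_apply, smul_smul]
  have hGv : ∀ ε j, j ≤ k → G ε ((f ^ j) v) = ε j • (f ^ j) v := by
    intro ε j hj
    rw [hG, Finset.sum_eq_single j]
    · rw [← Module.End.mul_apply, ← pow_add, hψ, if_pos (by omega), mul_one]
    · intro i hi hij
      rw [Finset.mem_range] at hi
      rw [← Module.End.mul_apply (f ^ (k - i)), ← pow_add, hψ, if_neg (by omega)]; simp
    · intro h; exact absurd (Finset.mem_range.2 (by omega)) h
  have hGG : ∀ ε ε', G ε * G ε' = G (fun i => ε i * ε' i) := by
    intro ε ε'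
    ext u
    rw [Module.End.mul_apply, hG ε', map_sum, hG]
    refine Finset.sum_congr rfl fun i hi => ?_
    rw [Finset.mem_range] at hi
    rw [map_smul, hGv _ _ (by omega), smul_smul]
    congr 1; ring
  have hGf : ∀ ε ε' : ℕ → F, (∀ i, ε (i + 1) = ε' i) → G ε * f = f * G ε' := by
    intro ε ε' h
    ext u
    rw [Module.End.mul_apply, Module.End.mul_apply, hG, hG, map_sum, Finset.sum_range_succ',
      Finset.sum_range_succ]
    congr 1
    · refine Finset.sum_congr rfl fun i hi => ?_
      rw [Finset.mem_range] at hi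
      rw [map_smul, h, ← Module.End.mul_apply, ← pow_succ, ← Module.End.mul_apply f, ← pow_succ',
        show k - (i + 1) + 1 = k - i by omega]
    · rw [← Module.End.mul_apply, ← pow_succ, map_smul, ← Module.End.mul_apply f, ← pow_succ', hk]
      simp [hk]
  set π := G (fun _ => 1) with hπ
  set θ := G (fun i => (-1) ^ i) with hθ
  have hππ : π * π = π := by rw [hπ, hGG]; simp
  have hθθ : θ * θ = π := by
    rw [hθ, hGG, hπ]; congr 1; ext i; rw [← mul_pow]; simp
  have hθπ : θ * π = θ := by rw [hθ, hπ, hGG]; simp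
  have hπθ : π * θ = θ := by rw [hθ, hπ, hGG]; simp
  have hπf : π * f = f * π := hGf _ _ (by simp)
  have hθf : θ * f = - (f * θ) := by
    rw [hθ, hGf _ (fun i => -(-1) ^ i) (by intro i; rw [pow_succ]; ring)]
    rw [← mul_neg]; congr 1
    ext u; rw [LinearMap.neg_apply, hG, hG, ← Finset.sum_neg_distrib]
    refine Finset.sum_congr rfl fun i _ => ?_
    rw [neg_mul, neg_smul]
  let W := LinearMap.ker π
  have hWf : ∀ w ∈ W, f w ∈ W := by
    intro w hw
    rw [LinearMap.mem_ker] at hw ⊢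
    rw [← Module.End.mul_apply, hπf, Module.End.mul_apply, hw, map_zero]
  have hv0 : π v ≠ 0 := by
    have := hGv (fun _ => 1) 0 (by omega)
    simp only [pow_zero, Module.End.one_apply, one_smul] at this
    rw [this]
    rintro rfl
    simp at hv
  have hWlt : Module.finrank F W < m := by
    rw [← hm]
    apply Submodule.finrank_lt
    intro h
    apply hv0
    have : v ∈ W := h ▸ Submodule.mem_top
    exact this
  obtain ⟨J, hJ1, hJ2⟩ := ih _ hWlt (f.restrict hWf) rfl (by
    obtain ⟨r, hr⟩ := hf
    exact ⟨r, by
      rw [Module.End.pow_restrict]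
      ext w
      simp [hr]⟩)
  have hp : ∀ u, (1 - π) u ∈ W := by
    intro u
    rw [LinearMap.mem_ker, ← Module.End.mul_apply, mul_sub, hππ, mul_one, sub_self]; simp
  let p : V →ₗ[F] W := (1 - π).codRestrict W hp
  have hpι : ∀ w : W, p w = w := by
    intro w
    ext
    have : π (w : V) = 0 := w.2
    simp [p, this]
  have hpθ : ∀ u, p (θ u) = 0 := by
    intro u
    ext
    simp only [p, LinearMap.codRestrict_apply, LinearMap.sub_apply, Module.End.one_apply,
      ← Module.End.mul_apply, one_mul, hπθ, sub_self, ZeroMemClass.coe_zero]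
  have hθι : ∀ w : W, θ w = 0 := by
    intro w
    have : π (w : V) = 0 := w.2
    rw [← hθπ, Module.End.mul_apply, this, map_zero]
  have hpf : ∀ u, p (f u) = f.restrict hWf (p u) := by
    intro u
    ext
    simp only [p, LinearMap.codRestrict_apply, LinearMap.sub_apply, Module.End.one_apply,
      LinearMap.coe_restrict_apply, map_sub, ← Module.End.mul_apply, one_mul, hπf]
  refine ⟨θ + W.subtype ∘ₗ J ∘ₗ p, ?_, ?_⟩
  · ext u
    have h1 : J (J (p u)) = p u := by rw [← Module.End.mul_apply, hJ1]; rfl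
    have h2 : θ (θ u) = π u := by rw [← Module.End.mul_apply, hθθ]
    simp only [Module.End.mul_apply, LinearMap.add_apply, LinearMap.comp_apply, map_add, hpθ, hpι,
      hθι, Submodule.subtype_apply, h1, h2]
    simp [p]
  · ext u
    have h1 : J (f.restrict hWf (p u)) = - f.restrict hWf (J (p u)) := by
      rw [← Module.End.mul_apply, hJ2]; rfl
    have h2 : θ (f u) = - f (θ u) := by rw [← Module.End.mul_apply, hθf]; rfl
    simp only [Module.End.mul_apply, LinearMap.add_apply, LinearMap.comp_apply, map_add,
      LinearMap.neg_apply, hpf, h1, h2, Submodule.subtype_apply]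
    simp
    abel

theorem unip_two {F V : Type*} [Field F] [AddCommGroup V] [Module F V] [FiniteDimensional F V]
    (h2 : (2 : F) ≠ 0) (N : Module.End F V) (hN : IsNilpotent N) :
    ∃ J K : Module.End F V, J * J = 1 ∧ K * K = 1 ∧ 1 + N = J * K := by
  -- `Y` is the inverse of `2 + N`
  have hu : IsUnit (algebraMap F (Module.End F V) 2 + N) := by
    have hc : Commute (algebraMap F (Module.End F V) 2) N := Algebra.commutes _ _
    exact hN.isUnit_add_left_of_commute ((IsUnit.mk0 _ h2).map _) hc.symm
  set c := algebraMap F (Module.End F V) 2 with hc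
  set d := algebraMap F (Module.End F V) 2⁻¹ with hd
  have hcd : c * d = 1 := by rw [hc, hd, ← map_mul, mul_inv_cancel₀ h2, map_one]
  have hc2 : c = 1 + 1 := by rw [hc, ← map_one (algebraMap F (Module.End F V)), ← map_add]; norm_num
  have hdN : ∀ X, d * X = X * d := fun X => Algebra.commutes _ _
  obtain ⟨u, hu⟩ := hu
  set Y : Module.End F V := ↑u⁻¹ with hY
  have hY1 : Y * (c + N) = 1 := by rw [← hu]; simp [hY]
  have hY2 : (c + N) * Y = 1 := by rw [← hu]; simp [hY]
  have hNc : Commute N (c + N) := by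
    have : Commute N c := (Algebra.commutes _ _ : c * N = N * c).symm
    exact this.add_right (Commute.refl N)
  have hNY : Commute N Y := by
    have : Commute N (u : Module.End F V) := by rw [hu]; exact hNc
    exact this.units_inv_right
  obtain ⟨J, hJ, hJM⟩ := nilp_anti _ (N * Y) rfl (hNY.isNilpotent_mul_right hN)
  set M := N * Y with hM
  have e1 : M * (c + N) = N := by rw [hM, mul_assoc, hY1, mul_one]
  have e1' : (c + N) * M = N := by rw [hM, ← mul_assoc, ← hNc.eq, mul_assoc, hY2, mul_one]
  set Vv := (c + N) * d with hVv
  have e2 : (1 - M) * Vv = 1 := by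
    rw [hVv, ← mul_assoc, sub_mul, one_mul, e1, add_sub_cancel_right, hcd]
  have e3 : Vv * (1 - M) = 1 := by
    rw [hVv, mul_assoc, hdN, ← mul_assoc, mul_sub, mul_one, e1', add_sub_cancel_right, hcd]
  have e4 : (1 + M) * Vv = 1 + N := by
    rw [hVv, ← mul_assoc, add_mul, one_mul, e1]
    have : c + N + N = (1 + N) * c := by rw [hc2]; noncomm_ring
    rw [this, mul_assoc, hcd, mul_one]
  have e5 : J * (1 + M) = (1 - M) * J := by
    rw [mul_add, hJM]; noncomm_ring
  have e6 : J * (1 - M) = (1 + M) * J := by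
    rw [mul_sub, hJM]; noncomm_ring
  refine ⟨J, J * (1 + N), hJ, ?_, ?_⟩
  · rw [← e4]
    calc J * ((1 + M) * Vv) * (J * ((1 + M) * Vv))
        = (J * (1 + M)) * Vv * (J * (1 + M)) * Vv := by noncomm_ring
      _ = (1 - M) * J * (Vv * (1 - M)) * J * Vv := by rw [e5]; noncomm_ring
      _ = (1 - M) * (J * J) * Vv := by rw [e3]; noncomm_ring
      _ = 1 := by rw [hJ, mul_one, e2]
  · rw [← mul_assoc, hJ, one_mul]

/-- `A` is an involution times a unipotent. -/
def GoodEnd {F V : Type*} [Field F] [AddCommGroup V] [Module F V] (A : Module.End F V) : Prop :=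
  ∃ J : Module.End F V, J * J = 1 ∧ IsNilpotent (J * A - 1)

theorem good_one {F V : Type*} [Field F] [AddCommGroup V] [Module F V] :
    GoodEnd (1 : Module.End F V) := ⟨1, by simp, by simp⟩

theorem good_build {F V : Type*} [Field F] [AddCommGroup V] [Module F V] [FiniteDimensional F V]
    (x y : V) (g g' : V →ₗ[F] F) (hgx : g x = 1) (hgy : g y = 0) (hgx' : g' x = 0)
    (hgy' : g' y = 1) :
    ∃ (M : Submodule F V) (p : V →ₗ[F] M), Module.finrank F M + 2 = Module.finrank F V ∧
      (∀ K : Module.End F M, GoodEnd K → ∀ (z : V) (φ : V →ₗ[F] F), g z = 1 → φ x = 1 →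
        GoodEnd (M.subtype ∘ₗ K ∘ₗ p + φ.smulRight y + g'.smulRight z)) ∧
      (∀ (K : Module.End F M) (z : V) (φ : V →ₗ[F] F) (L : Module.End F V),
        LinearMap.trace F V ((M.subtype ∘ₗ K ∘ₗ p + φ.smulRight y + g'.smulRight z) * L) =
          LinearMap.trace F M (K * (p ∘ₗ L ∘ₗ M.subtype)) + φ (L y) + g' (L z)) ∧
      p x = 0 := by
  let M : Submodule F V := LinearMap.ker (g.prod g')
  have hM : ∀ m : M, g m = 0 ∧ g' m = 0 := by
    intro m
    have := m.2
    rw [LinearMap.mem_ker, LinearMap.prod_apply] at this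
    simpa using this
  let p : V →ₗ[F] M := (1 - g.smulRight x - g'.smulRight y).codRestrict M (by
    intro v
    rw [LinearMap.mem_ker, LinearMap.prod_apply]
    simp [hgx, hgy, hgx', hgy'])
  have hp : ∀ v, (p v : V) = v - g v • x - g' v • y := by
    intro v; simp [p]
  have hpm : ∀ m : M, p m = m := by
    intro m; ext; rw [hp, (hM m).1, (hM m).2]; simp
  have hpx : p x = 0 := by ext; rw [hp, hgx, hgx']; simp
  have hpy : p y = 0 := by ext; rw [hp, hgy, hgy']; simp
  refine ⟨M, p, ?_, ?_, ?_, hpx⟩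
  · have h1 := LinearMap.finrank_range_add_finrank_ker (g.prod g')
    have h2 : LinearMap.range (g.prod g') = ⊤ := by
      rw [LinearMap.range_eq_top]
      rintro ⟨a, b⟩
      refine ⟨a • x + b • y, ?_⟩
      simp [hgx, hgy, hgx', hgy']
    rw [h2, finrank_top, Module.finrank_prod, Module.finrank_self] at h1
    change Module.finrank F (LinearMap.ker (g.prod g')) + 2 = _
    omega
  · rintro K ⟨J, hJ, k, hk⟩ z φ hz hφ
    refine ⟨M.subtype ∘ₗ J ∘ₗ p + g.smulRight y + g'.smulRight x, ?_, ?_⟩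
    · ext v
      have h1 : J (J (p v)) = p v := by rw [← Module.End.mul_apply, hJ]; rfl
      simp [hgx, hgy, hgx', hgy', hpm, hpx, hpy, h1, hM]
      rw [hp]; abel
    · set N := (M.subtype ∘ₗ J ∘ₗ p + g.smulRight y + g'.smulRight x) *
        (M.subtype ∘ₗ K ∘ₗ p + φ.smulRight y + g'.smulRight z) - 1 with hN
      have hNx : N x = 0 := by
        simp [hN, hgx, hgy, hgx', hgy', hpx, hpy, hφ]
      have hNg : ∀ v, g' (N v) = 0 := by
        intro v
        simp [hN, hgx, hgy, hgx', hgy', hpx, hpy, hz, hM]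
      have hNp : ∀ v, g' v = 0 → p (N v) = (J * K - 1) (p v) := by
        intro v hv
        simp [hN, hv, hpx, hpy, hpm, hM]
      have hpow : ∀ j v, g' v = 0 → p ((N ^ j) v) = ((J * K - 1) ^ j) (p v) ∧ g' ((N ^ j) v) = 0 := by
        intro j
        induction j with
        | zero => intro v hv; simpa using hv
        | succ j ihj =>
          intro v hv
          rw [pow_succ', pow_succ', Module.End.mul_apply, Module.End.mul_apply]
          exact ⟨by rw [hNp _ (ihj v hv).2, (ihj v hv).1], hNg _⟩
      refine ⟨k + 2, ?_⟩
      ext v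
      have h := hpow k (N v) (hNg v)
      rw [hk] at h
      have h3 := hp ((N ^ k) (N v))
      rw [h.1, h.2] at h3
      simp only [LinearMap.zero_apply, ZeroMemClass.coe_zero, zero_smul, sub_zero] at h3
      have h4 : (N ^ (k + 2)) v = N ((N ^ k) (N v)) := by
        rw [show k + 2 = 1 + k + 1 by omega, pow_succ, pow_add, pow_one]; rfl
      rw [h4, sub_eq_zero.1 h3.symm, map_smul, hNx]; simp
  · intro K z φ L
    have h1 : LinearMap.trace F V ((M.subtype ∘ₗ K ∘ₗ p) * L) =
        LinearMap.trace F M (K * (p ∘ₗ L ∘ₗ M.subtype)) := by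
      rw [Module.End.mul_eq_comp, Module.End.mul_eq_comp]
      rw [LinearMap.comp_assoc, LinearMap.comp_assoc, LinearMap.trace_comp_comm']
      rfl
    have h2 : ∀ (φ : V →ₗ[F] F) (y : V), (φ.smulRight y : Module.End F V) * L = (φ ∘ₗ L).smulRight y := by
      intro φ y; ext v; simp
    rw [add_mul, add_mul, map_add, map_add, h1, h2, h2, LinearMap.trace_smulRight,
      LinearMap.trace_smulRight]
    rfl

theorem exists_g' {F V : Type*} [Field F] [AddCommGroup V] [Module F V]
    (x y w : V) (hyx : ∀ t : F, t • x ≠ y) (hw : ∀ t : F, t • x ≠ w) :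
    ∃ g' : V →ₗ[F] F, g' x = 0 ∧ g' y = 1 ∧ g' w ≠ 0 := by
  obtain ⟨b, hb, hb1⟩ := exists_dual_ext' (LinearMap.toSpanSingleton F V x) 0 (by simp) y
    (fun t => by simpa using hyx t)
  obtain ⟨c, hc, hc1⟩ := exists_dual_ext' (LinearMap.toSpanSingleton F V x) 0 (by simp) w
    (fun t => by simpa using hw t)
  have hb := hb 1
  have hc := hc 1
  simp only [LinearMap.toSpanSingleton_apply, one_smul, LinearMap.zero_apply] at hb hc
  obtain ⟨s, hs, h1, h2⟩ := exists_not_mem_two (LinearMap.ker (Module.Dual.eval F V x))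
    (LinearMap.ker (Module.Dual.eval F V y)) (LinearMap.ker (Module.Dual.eval F V w))
    (fun h => by
      have : b ∈ LinearMap.ker (Module.Dual.eval F V y) := h (by simpa using hb)
      simp [hb1] at this)
    (fun h => by
      have : c ∈ LinearMap.ker (Module.Dual.eval F V w) := h (by simpa using hc)
      simp [hc1] at this)
  simp only [LinearMap.mem_ker, Module.Dual.eval_apply] at hs h1 h2
  exact ⟨(s y)⁻¹ • s, by simp [hs], by simp [h1], by simp [h1, h2]⟩

theorem exists_g {F V : Type*} [Field F] [AddCommGroup V] [Module F V] [FiniteDimensional F V]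
    (x y : V) (hxy : ∀ t : F, t • y ≠ x) (D : Submodule F (V →ₗ[F] F))
    (hD : Module.finrank F D + 1 < Module.finrank F V) :
    ∃ g : V →ₗ[F] F, g y = 0 ∧ g x = 1 ∧ g ∉ D := by
  obtain ⟨b, hb, hb1⟩ := exists_dual_ext' (LinearMap.toSpanSingleton F V y) 0 (by simp) x
    (fun t => by simpa using hxy t)
  have hb := hb 1
  simp only [LinearMap.toSpanSingleton_apply, one_smul, LinearMap.zero_apply] at hb
  obtain ⟨s, hs, h1, h2⟩ := exists_not_mem_two (LinearMap.ker (Module.Dual.eval F V y))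
    (LinearMap.ker (Module.Dual.eval F V x)) D
    (fun h => by
      have : b ∈ LinearMap.ker (Module.Dual.eval F V x) := h (by simpa using hb)
      simp [hb1] at this)
    (fun h => by
      have h3 := Submodule.finrank_mono h
      have h4 := LinearMap.finrank_range_add_finrank_ker (Module.Dual.eval F V y)
      have h5 := Submodule.finrank_le (LinearMap.range (Module.Dual.eval F V y))
      rw [Module.finrank_self] at h5
      rw [Subspace.dual_finrank_eq] at h4
      change Module.finrank F (LinearMap.ker (Module.Dual.eval F V y)) ≤ Module.finrank F D at h3
      omega)
  simp only [LinearMap.mem_ker, Module.Dual.eval_apply] at hs h1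
  refine ⟨(s x)⁻¹ • s, by simp [hs], by simp [h1], fun h => h2 ?_⟩
  have := D.smul_mem (s x) h
  rwa [smul_smul, mul_inv_cancel₀ h1, one_smul] at this

theorem exists_vec {F V L : Type*} [Field F] [AddCommGroup V] [Module F V] [FiniteDimensional F V]
    [AddCommGroup L] [Module F L] (e : L →ₗ[F] (V →ₗ[F] F)) (r : L →ₗ[F] F)
    (h : ∀ l, e l = 0 → r l = 0) (g : V →ₗ[F] F) (hg : ∀ l, e l ≠ g) :
    ∃ z : V, (∀ l, e l z = r l) ∧ g z = 1 := by
  obtain ⟨Φ, h1, h2⟩ := exists_dual_ext' e r h g hg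
  obtain ⟨z, hz⟩ := (Module.evalEquiv F V).surjective Φ
  refine ⟨z, fun l => ?_, ?_⟩
  · rw [← h1, ← hz]; rfl
  · rw [← h2, ← hz]; rfl

def OrthGood {F V : Type*} [Field F] [AddCommGroup V] [Module F V]
    (L : Submodule F (Module.End F V)) : Prop :=
  ∃ A : Module.End F V, GoodEnd A ∧ ∀ l ∈ L, LinearMap.trace F V (A * l) = 0

theorem step {F V : Type*} [Field F] [AddCommGroup V] [Module F V] [FiniteDimensional F V]
    (ih : ∀ M : Submodule F V, Module.finrank F M + 2 = Module.finrank F V →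
      ∀ L' : Submodule F (Module.End F M),
        (L' = ⊥ ∨ Module.finrank F L' < Module.finrank F M) → OrthGood L')
    (L : Submodule F (Module.End F V)) (y : V) (hy : y ≠ 0)
    (hE : L.map (LinearMap.applyₗ y : Module.End F V →ₗ[F] V) ≠ ⊤)
    (L1 : Submodule F (Module.End F V)) (hL1 : ∀ l, l ∈ L1 ↔ l ∈ L ∧ l y = 0)
    (hd : Module.finrank F L1 + 2 ≤ Module.finrank F V) : OrthGood L := by
  obtain ⟨x, -, hxE, hxy⟩ := exists_not_mem_two (⊤ : Submodule F V)
    (L.map (LinearMap.applyₗ y : Module.End F V →ₗ[F] V)) (Submodule.span F {y})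
    (fun h => hE (top_le_iff.1 h)) (fun h => by
      have h1 := finrank_span_singleton (K := F) hy
      rw [top_le_iff.1 h, finrank_top] at h1
      omega)
  have hxy : ∀ t : F, t • y ≠ x := fun t ht => hxy (Submodule.mem_span_singleton.2 ⟨t, ht⟩)
  have hyx : ∀ t : F, t • x ≠ y := by
    intro t ht
    by_cases h0 : t = 0
    · subst h0; rw [zero_smul] at ht; exact hy ht.symm
    · apply hxy t⁻¹; rw [← ht, smul_smul, inv_mul_cancel₀ h0, one_smul]
  -- choice of the functional
  obtain ⟨g', hgx', hgy', hg'⟩ : ∃ g' : V →ₗ[F] F, g' x = 0 ∧ g' y = 1 ∧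
      ((∀ l ∈ L1, ∀ u, ∃ t : F, t • x = l u) ∨ ∃ l ∈ L1, g' ∘ₗ l ≠ 0) := by
    by_cases h : ∀ l ∈ L1, ∀ u, ∃ t : F, t • x = l u
    · obtain ⟨g', h1, h2, -⟩ := exists_g' x y y hyx hyx
      exact ⟨g', h1, h2, Or.inl h⟩
    · push Not at h
      obtain ⟨l, hl, u, hu⟩ := h
      obtain ⟨g', h1, h2, h3⟩ := exists_g' x y (l u) hyx hu
      refine ⟨g', h1, h2, Or.inr ⟨l, hl, fun h0 => h3 ?_⟩⟩
      simpa using LinearMap.congr_fun h0 u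
  let c : Module.End F V →ₗ[F] (V →ₗ[F] F) := LinearMap.compRight F g'
  have hc : ∀ l, c l = g' ∘ₗ l := fun l => rfl
  obtain ⟨g, hgy, hgx, hgD⟩ := exists_g x y hxy (L1.map c) (by
    have := Submodule.finrank_map_le c L1
    omega)
  obtain ⟨M, p, hM, hgood, htr, hpx⟩ := good_build x y g g' hgx hgy hgx' hgy'
  let q : Module.End F V →ₗ[F] Module.End F M :=
    (LinearMap.lcomp F M M.subtype) ∘ₗ (LinearMap.compRight F p)
  have hq : ∀ l, q l = p ∘ₗ l ∘ₗ M.subtype := fun l => rfl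
  have hL2 : (L1 ⊓ LinearMap.ker c).map q = ⊥ ∨
      Module.finrank F ((L1 ⊓ LinearMap.ker c).map q) < Module.finrank F M := by
    rcases hg' with h | ⟨l, hl, hl'⟩
    · left
      rw [eq_bot_iff]
      rintro _ ⟨l, hl, rfl⟩
      rw [Submodule.mem_bot, hq]
      ext m
      obtain ⟨t, ht⟩ := h l hl.1 m
      simp only [LinearMap.comp_apply, Submodule.subtype_apply]
      rw [← ht, map_smul, hpx]; simp
    · right
      have h1 := Submodule.finrank_map_le q (L1 ⊓ LinearMap.ker c)
      have h2 : L1 ⊓ LinearMap.ker c < L1 := by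
        refine lt_of_le_of_ne inf_le_left fun h => hl' ?_
        rw [← h] at hl
        exact hl.2
      have h3 := Submodule.finrank_lt_finrank_of_lt h2
      omega
  obtain ⟨K, hK, hKt⟩ := ih M hM _ hL2
  let τ : Module.End F V →ₗ[F] F := LinearMap.trace F M ∘ₗ LinearMap.mulLeft F K ∘ₗ q
  have hτ : ∀ l, τ l = LinearMap.trace F M (K * (p ∘ₗ l ∘ₗ M.subtype)) := fun l => rfl
  obtain ⟨z, hz, hgz⟩ := exists_vec (c ∘ₗ L1.subtype) (-(τ ∘ₗ L1.subtype)) (by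
      rintro ⟨l, hl⟩ h0
      have : τ l = 0 := hKt (q l) ⟨l, ⟨hl, h0⟩, rfl⟩
      simp [this]) g (by
      rintro ⟨l, hl⟩ h
      exact hgD ⟨l, hl, h⟩)
  obtain ⟨φ, hφ, hφx⟩ := exists_dual_ext'
    ((LinearMap.applyₗ y : Module.End F V →ₗ[F] V) ∘ₗ L.subtype)
    (-(τ ∘ₗ L.subtype) - (g' ∘ₗ (LinearMap.applyₗ z : Module.End F V →ₗ[F] V) ∘ₗ L.subtype)) (by
      rintro ⟨l, hl⟩ h0
      have h1 := hz ⟨l, (hL1 l).2 ⟨hl, h0⟩⟩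
      simp only [LinearMap.comp_apply, Submodule.subtype_apply, hc, LinearMap.neg_apply] at h1
      simp [h1]) x (by
      rintro ⟨l, hl⟩ h
      exact hxE ⟨l, hl, h⟩)
  refine ⟨_, hgood K hK z φ hgz hφx, fun l hl => ?_⟩
  rw [htr, ← hτ]
  have := hφ ⟨l, hl⟩
  simp only [LinearMap.comp_apply, Submodule.subtype_apply, LinearMap.applyₗ_apply_apply,
    LinearMap.sub_apply, LinearMap.neg_apply] at this
  rw [this]; ring

theorem orth_small {F : Type*} [Field F] (m : ℕ) : ∀ {V : Type*} [AddCommGroup V] [Module F V]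
    [FiniteDimensional F V], Module.finrank F V = m → ∀ L : Submodule F (Module.End F V),
    (L = ⊥ ∨ Module.finrank F L < Module.finrank F V) → OrthGood L := by
  induction m using Nat.strong_induction_on with
  | _ m ih =>
  intro V _ _ _ hm L hL
  by_cases h0 : L = ⊥
  · exact ⟨1, good_one, by rintro l hl; rw [h0, Submodule.mem_bot] at hl; simp [hl]⟩
  have hL := hL.resolve_left h0
  obtain ⟨l, hl, hl0⟩ := L.exists_mem_ne_zero_of_ne_bot h0
  obtain ⟨y, hy⟩ : ∃ y, l y ≠ 0 := by
    by_contra! h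
    exact hl0 (LinearMap.ext h)
  let e : Module.End F V →ₗ[F] V := LinearMap.applyₗ y
  refine step (fun M hM L' hL' => ih _ (by omega) rfl L' hL') L y (by rintro rfl; simp at hy) ?_
    (L ⊓ LinearMap.ker e) (fun l => Iff.rfl) ?_
  · intro h
    have := Submodule.finrank_map_le e L
    rw [h, finrank_top] at this
    omega
  · have h2 : L ⊓ LinearMap.ker e < L := by
      refine lt_of_le_of_ne inf_le_left fun h => hy ?_
      rw [← h] at hl
      exact hl.2
    have h3 := Submodule.finrank_lt_finrank_of_lt h2
    omega

theorem caseA {F V : Type*} [Field F] [AddCommGroup V] [Module F V] [FiniteDimensional F V]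
    (L : Submodule F (Module.End F V)) (hL : Module.finrank F L ≤ Module.finrank F V) (y : V)
    (h2 : 2 ≤ Module.finrank F (L.map (LinearMap.applyₗ y : Module.End F V →ₗ[F] V)))
    (hE : L.map (LinearMap.applyₗ y : Module.End F V →ₗ[F] V) ≠ ⊤) : OrthGood L := by
  let e : Module.End F V →ₗ[F] V := LinearMap.applyₗ y
  refine step (fun M hM L' hL' => orth_small _ rfl L' hL') L y ?_ hE
    (L ⊓ LinearMap.ker e) (fun l => Iff.rfl) ?_
  · rintro rfl
    have : L.map (LinearMap.applyₗ (0 : V) : Module.End F V →ₗ[F] V) = ⊥ := by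
      rw [eq_bot_iff]
      rintro _ ⟨l, hl, rfl⟩
      simp
    rw [this, finrank_bot] at h2
    omega
  · have h3 := LinearMap.finrank_range_add_finrank_ker (e ∘ₗ L.subtype)
    rw [LinearMap.range_comp, Submodule.range_subtype] at h3
    have h4 : Module.finrank F (LinearMap.ker (e ∘ₗ L.subtype)) =
        Module.finrank F (L ⊓ LinearMap.ker e : Submodule F (Module.End F V)) := by
      rw [LinearMap.ker_comp, ← Submodule.map_comap_subtype]
      exact (LinearEquiv.finrank_eq (Submodule.equivMapOfInjective _ L.injective_subtype _))
    change 2 ≤ Module.finrank F (L.map e) at h2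
    omega

theorem caseB {F V : Type*} [Field F] [AddCommGroup V] [Module F V] [FiniteDimensional F V]
    (hn : 3 ≤ Module.finrank F V)
    (L : Submodule F (Module.End F V)) (y : V) (hinj : ∀ l ∈ L, l y = 0 → l = 0)
    (Z : Module.End F V) (hZ : Z ∈ L) (hZy : ∀ t : F, t • y ≠ Z y) (u : V)
    (hu : ∀ t : F, t • Z y ≠ Z u) : OrthGood L := by
  have hy : y ≠ 0 := by
    rintro rfl
    exact hZy 0 (by simp)
  have hyx : ∀ t : F, t • Z y ≠ y := by
    intro t ht
    by_cases h0 : t = 0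
    · subst h0; rw [zero_smul] at ht; exact hy ht.symm
    · apply hZy t⁻¹
      nth_rw 1 [← ht]
      rw [smul_smul, inv_mul_cancel₀ h0, one_smul]
  obtain ⟨g', hgx', hgy', hg'⟩ := exists_g' (Z y) y (Z u) hyx hu
  obtain ⟨g, hgy, hgx, hgD⟩ := exists_g (Z y) y hZy (Submodule.span F {g' ∘ₗ Z}) (by
    have := finrank_span_singleton (K := F) (v := g' ∘ₗ Z) (by
      intro h; exact hg' (by simpa using LinearMap.congr_fun h u))
    omega)
  obtain ⟨M, p, hM, hgood, htr, hpx⟩ := good_build (Z y) y g g' hgx hgy hgx' hgy'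
  let q : Module.End F V →ₗ[F] Module.End F M :=
    (LinearMap.lcomp F M M.subtype) ∘ₗ (LinearMap.compRight F p)
  let τ : Module.End F V →ₗ[F] F := LinearMap.trace F M ∘ₗ LinearMap.mulLeft F 1 ∘ₗ q
  have hτ : ∀ l, τ l = LinearMap.trace F M (1 * (p ∘ₗ l ∘ₗ M.subtype)) := fun l => rfl
  obtain ⟨z, hz, hgz⟩ := exists_vec (LinearMap.toSpanSingleton F _ (g' ∘ₗ Z))
    (LinearMap.toSpanSingleton F F (-1 - τ Z)) (by
      intro t ht
      rw [LinearMap.toSpanSingleton_apply] at ht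
      have := LinearMap.congr_fun ht u
      simp only [LinearMap.smul_apply, LinearMap.comp_apply, LinearMap.zero_apply, smul_eq_mul,
        mul_eq_zero, hg', or_false] at this
      simp [this]) g (by
      intro t ht
      exact hgD (Submodule.mem_span_singleton.2 ⟨t, ht⟩))
  obtain ⟨φ, hφ⟩ := exists_dual_ext
    ((LinearMap.applyₗ y : Module.End F V →ₗ[F] V) ∘ₗ L.subtype)
    (-(τ ∘ₗ L.subtype) - (g' ∘ₗ (LinearMap.applyₗ z : Module.End F V →ₗ[F] V) ∘ₗ L.subtype)) (by
      rintro ⟨l, hl⟩ h0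
      have := hinj l hl h0
      subst this
      simp)
  have hφ' : ∀ l ∈ L, φ (l y) = - τ l - g' (l z) := by
    intro l hl
    have := hφ ⟨l, hl⟩
    simpa only [LinearMap.comp_apply, Submodule.subtype_apply, LinearMap.applyₗ_apply_apply,
      LinearMap.sub_apply, LinearMap.neg_apply] using this
  have hz1 := hz 1
  simp only [LinearMap.toSpanSingleton_apply, one_smul, LinearMap.comp_apply] at hz1
  refine ⟨_, hgood 1 good_one z φ hgz (by rw [hφ' Z hZ, hz1]; ring), fun l hl => ?_⟩
  rw [htr, ← hτ, hφ' l hl]; ring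

theorem special_two {F V : Type*} [Field F] [AddCommGroup V] [Module F V]
    (h2 : (2 : F) ≠ 0) (hV : ∀ y : V, ∃ w : V, ∀ t : F, t • y ≠ w)
    (L : Submodule F (Module.End F V)) (y : V) (hinj : ∀ l ∈ L, l y = 0 → l = 0)
    (hsurj : ∀ v, ∃ l ∈ L, l y = v)
    (h : ∀ l ∈ L, (∀ t : F, t • y ≠ l y) → ∀ u, ∃ t : F, t • l y = l u) :
    ∃ ψ : V →ₗ[F] F, ∀ l ∈ L, ∀ u, l u = ψ u • l y := by
  let ev : L →ₗ[F] V := (LinearMap.applyₗ y : Module.End F V →ₗ[F] V) ∘ₗ L.subtype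
  have hev : ∀ l : L, ev l = l.1 y := fun l => rfl
  have hbij : Function.Bijective ev := by
    constructor
    · rw [injective_iff_map_eq_zero]
      intro l hl
      exact Subtype.ext (hinj l.1 l.2 hl)
    · intro v
      obtain ⟨l, hl, e⟩ := hsurj v
      exact ⟨⟨l, hl⟩, e⟩
  let e := LinearEquiv.ofBijective ev hbij
  let B : V → V →ₗ[F] V := fun u =>
    (LinearMap.applyₗ u : Module.End F V →ₗ[F] V) ∘ₗ L.subtype ∘ₗ e.symm.toLinearMap
  have hB : ∀ (u : V) (l : L), B u (l.1 y) = l.1 u := by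
    intro u l
    have : e.symm (l.1 y) = l := by
      rw [← hev l]; exact e.symm_apply_apply l
    change (e.symm (l.1 y)).1 u = _
    rw [this]
  have hB1 : ∀ u v : V, (∀ t : F, t • y ≠ v) → ∃ t : F, t • v = B u v := by
    intro u v hv
    obtain ⟨l, hl, rfl⟩ := hsurj v
    obtain ⟨t, ht⟩ := h l hl hv u
    exact ⟨t, by rw [ht]; exact (hB u ⟨l, hl⟩).symm⟩
  have hBy : ∀ u, ∃ t : F, t • y = B u y := by
    intro u
    by_cases hy : y = 0
    · exact ⟨0, by simp [hy]⟩
    obtain ⟨w, hw⟩ := hV y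
    obtain ⟨a, ha⟩ := hB1 u w hw
    obtain ⟨b, hb⟩ := hB1 u (w + y) (fun t ht => hw (t - 1) (by rw [sub_smul, ht]; simp))
    obtain ⟨c, hc⟩ := hB1 u (w - y) (fun t ht => hw (t + 1) (by rw [add_smul, ht]; simp))
    rw [map_add, ← ha] at hb
    rw [map_sub, ← ha] at hc
    have k1 : (2 * a - b - c) • w = (b - c) • y := by
      have : b • (w + y) + c • (w - y) = a • w + a • w := by rw [hb, hc]; abel
      have h3 : (2 * a - b - c) • w - (b - c) • y
        = (a • w + a • w) - (b • (w + y) + c • (w - y)) := by module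
      rw [this, sub_self] at h3
      exact sub_eq_zero.1 h3
    have k2 : 2 * a - b - c = 0 := by
      by_contra hne
      refine hw ((2 * a - b - c)⁻¹ * (b - c)) ?_
      rw [mul_smul, ← k1, smul_smul, inv_mul_cancel₀ hne, one_smul]
    rw [k2, zero_smul] at k1
    have k3 : b - c = 0 := by
      rcases smul_eq_zero.1 k1.symm with h | h
      · exact h
      · exact absurd h hy
    have k4 : a = b := by
      have : 2 * (a - b) = 0 := by linear_combination k2 - k3
      rcases mul_eq_zero.1 this with h | h
      · exact absurd h h2
      · exact sub_eq_zero.1 h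
    refine ⟨b, ?_⟩
    rw [k4, smul_add] at hb
    exact add_left_cancel hb
  have hBall : ∀ u v : V, ∃ t : F, t • v = B u v := by
    intro u v
    by_cases hv : ∀ t : F, t • y ≠ v
    · exact hB1 u v hv
    · push Not at hv
      obtain ⟨s, rfl⟩ := hv
      obtain ⟨t, ht⟩ := hBy u
      exact ⟨t, by rw [map_smul, ← ht, smul_comm]⟩
  have hhom : ∀ u, ∃ a : F, B u = a • 1 := by
    intro u
    apply LinearMap.exists_eq_smul_id_of_forall_notLinearIndependent
    intro v hli
    obtain ⟨t, ht⟩ := hBall u v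
    rw [LinearIndependent.pair_iff] at hli
    have := hli t (-1) (by rw [ht]; simp)
    simp at this
  obtain ⟨w, hw⟩ := hV 0
  have hw0 : w ≠ 0 := fun h => hw 0 (by simp [h])
  obtain ⟨η, hη⟩ := Module.Projective.exists_dual_ne_zero F hw0
  obtain ⟨l0, hl0, hl0y⟩ := hsurj w
  refine ⟨(η w)⁻¹ • (η ∘ₗ l0), ?_⟩
  intro l hl u
  obtain ⟨a, ha⟩ := hhom u
  have e1 := hB u ⟨l, hl⟩
  have e2 := hB u ⟨l0, hl0⟩
  simp only [ha, LinearMap.smul_apply, Module.End.one_apply] at e1 e2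
  rw [hl0y] at e2
  simp only [LinearMap.smul_apply, LinearMap.comp_apply, ← e2, ← e1, map_smul, smul_eq_mul]
  congr 1
  field_simp

theorem special_one {F V : Type*} [Field F] [AddCommGroup V] [Module F V]
    (L : Submodule F (Module.End F V))
    (H : ∀ l ∈ L, ∀ l' ∈ L, ∀ y, l y ≠ 0 → ∃ t : F, l' y = t • l y)
    (h2 : ∀ l₀, ∃ l ∈ L, ∀ t : F, l ≠ t • l₀) :
    ∃ x : V, ∀ l ∈ L, ∀ v, ∃ t : F, l v = t • x := by
  obtain ⟨la, hla, hla0⟩ := h2 0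
  have hla0 : la ≠ 0 := fun h => hla0 0 (by simp [h])
  obtain ⟨y1, hy1⟩ : ∃ y1, la y1 ≠ 0 := by
    by_contra hc
    push Not at hc
    exact hla0 (LinearMap.ext hc)
  refine ⟨la y1, ?_⟩
  by_contra hc
  push Not at hc
  obtain ⟨lb, hlb, y2, hb⟩ := hc
  have hb0 : lb y2 ≠ 0 := fun h => hb 0 (by simp [h])
  have indep : ∀ s t : F, s • la y1 = t • lb y2 → s = 0 ∧ t = 0 := by
    intro s t h
    have ht : t = 0 := by
      by_contra ht
      refine hb (t⁻¹ * s) ?_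
      rw [mul_smul, h, smul_smul, inv_mul_cancel₀ ht, one_smul]
    rw [ht, zero_smul] at h
    exact ⟨(smul_eq_zero.1 h).resolve_right hy1, ht⟩
  obtain ⟨βa, hβa⟩ := H lb hlb la hla y2 hb0
  have rel : ∀ l ∈ L, ∃ α : F, l y1 = α • la y1 ∧ l y2 = (α * βa) • lb y2 := by
    intro l hl
    obtain ⟨α, hα⟩ := H la hla l hl y1 hy1
    obtain ⟨β, hβ⟩ := H lb hlb l hl y2 hb0
    have hne : la (y1 + y2) ≠ 0 := by
      rw [map_add, hβa]
      intro h
      have := indep 1 (-βa) (by rw [one_smul, neg_smul]; exact eq_neg_of_add_eq_zero_left h)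
      exact one_ne_zero this.1
    obtain ⟨t, ht⟩ := H la hla l hl (y1 + y2) hne
    rw [map_add, map_add, hα, hβ, hβa] at ht
    have := indep (α - t) (t * βa - β) (by
      have : (α - t) • la y1 - (t * βa - β) • lb y2
        = (α • la y1 + β • lb y2) - t • (la y1 + βa • lb y2) := by module
      rw [ht, sub_self] at this
      exact sub_eq_zero.1 this)
    refine ⟨α, hα, ?_⟩
    rw [hβ]
    congr 1
    linear_combination -this.2 - βa * this.1
  obtain ⟨αb, hαb, hb'⟩ := rel lb hlb
  have hβ0 : βa ≠ 0 := by
    rintro rfl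
    simp at hb'
    exact hb0 hb'
  have kill : ∀ m ∈ L, m y1 = 0 → m y2 = 0 → m = 0 := by
    intro m hm h1 h2
    ext y
    rw [LinearMap.zero_apply]
    by_contra hne
    obtain ⟨s, hs⟩ := H m hm la hla y hne
    obtain ⟨t1, ht1⟩ := H m hm la hla (y + y1) (by rwa [map_add, h1, add_zero])
    obtain ⟨t2, ht2⟩ := H m hm la hla (y + y2) (by rwa [map_add, h2, add_zero])
    rw [map_add, map_add, hs, h1, add_zero] at ht1
    rw [map_add, map_add, hs, h2, add_zero, hβa] at ht2
    have q1 : la y1 = (t1 - s) • m y := by rw [sub_smul, ← ht1]; abel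
    have q2 : βa • lb y2 = (t2 - s) • m y := by rw [sub_smul, ← ht2]; abel
    have := indep (t2 - s) ((t1 - s) * βa) (by
      rw [mul_smul, q1, q2, smul_smul, smul_smul, mul_comm])
    rcases mul_eq_zero.1 this.2 with h | h
    · rw [h, zero_smul] at q1; exact hy1 q1
    · exact hβ0 h
  obtain ⟨l, hl, hlt⟩ := h2 la
  obtain ⟨α, h1, h2'⟩ := rel l hl
  refine hlt α ?_
  rw [← sub_eq_zero]
  apply kill _ (L.sub_mem hl (L.smul_mem _ hla))
  · simp [h1]
  · simp [h2', hβa, smul_smul]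

theorem finrank_le_one_rel {F V : Type*} [Field F] [AddCommGroup V] [Module F V]
    [FiniteDimensional F V] (E : Submodule F V) (h : Module.finrank F E ≤ 1) (a b : V)
    (ha : a ∈ E) (hb : b ∈ E) (h0 : a ≠ 0) : ∃ t : F, b = t • a := by
  have h1 : Module.finrank F E = 1 := by
    refine le_antisymm h ?_
    have : Nontrivial E := ⟨⟨⟨a, ha⟩, 0, fun h => h0 (congrArg Subtype.val h)⟩⟩
    exact Module.finrank_pos
  obtain ⟨t, ht⟩ := (finrank_eq_one_iff_of_nonzero' (⟨a, ha⟩ : E)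
    (fun h => h0 (congrArg Subtype.val h))).1 h1 ⟨b, hb⟩
  exact ⟨t, (congrArg Subtype.val ht).symm⟩

theorem exists_not_multiple {F V : Type*} [Field F] [AddCommGroup V] [Module F V]
    (h : 2 ≤ Module.finrank F V) (y : V) : ∃ w : V, ∀ t : F, t • y ≠ w := by
  by_contra hc
  push Not at hc
  have := finrank_le_one y hc
  omega

theorem exists_not_multiple_sub {F V : Type*} [Field F] [AddCommGroup V] [Module F V]
    (L : Submodule F V)
    (h : 2 ≤ Module.finrank F L) (y : V) : ∃ w ∈ L, ∀ t : F, w ≠ t • y := by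
  by_contra hc
  push Not at hc
  have h1 : L ≤ Submodule.span F {y} := by
    intro w hw
    obtain ⟨t, ht⟩ := hc w hw
    exact Submodule.mem_span_singleton.2 ⟨t, ht.symm⟩
  have h2 := Submodule.finrank_mono h1
  have := finrank_span_le_card (R := F) ({y} : Set V)
  simp only [Set.toFinset_singleton, Finset.card_singleton] at this
  omega

/-- The dichotomy. -/
def Special {F V : Type*} [Field F] [AddCommGroup V] [Module F V]
    (L : Submodule F (Module.End F V)) : Prop :=
  (∃ x : V, ∀ l ∈ L, ∀ v, ∃ t : F, l v = t • x) ∨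
  (∃ (ψ : V →ₗ[F] F) (y : V), ∀ l ∈ L, ∀ u, l u = ψ u • l y)

theorem special_of {F V : Type*} [Field F] [AddCommGroup V] [Module F V] [FiniteDimensional F V]
    (h2 : (2 : F) ≠ 0) (hV : 2 ≤ Module.finrank F V) (L : Submodule F (Module.End F V))
    (hL : Module.finrank F L = Module.finrank F V)
    (hA : ∀ y, 2 ≤ Module.finrank F (L.map (LinearMap.applyₗ y : Module.End F V →ₗ[F] V)) →
      L.map (LinearMap.applyₗ y : Module.End F V →ₗ[F] V) = ⊤)
    (hB : ∀ y, (∀ l ∈ L, l y = 0 → l = 0) → ∀ l ∈ L, (∀ t : F, t • y ≠ l y) →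
      ∀ u, ∃ t : F, t • l y = l u) : Special L := by
  by_cases h : ∀ y, Module.finrank F (L.map (LinearMap.applyₗ y : Module.End F V →ₗ[F] V)) ≤ 1
  · left
    apply special_one
    · intro l hl l' hl' y h0
      exact finrank_le_one_rel _ (h y) _ _ ⟨l, hl, rfl⟩ ⟨l', hl', rfl⟩ h0
    · intro l₀
      exact exists_not_multiple_sub L (by omega) l₀
  · push Not at h
    obtain ⟨y, hy⟩ := h
    right
    have htop := hA y hy
    have hsurj : ∀ v, ∃ l ∈ L, l y = v := by
      intro v
      have : v ∈ L.map (LinearMap.applyₗ y : Module.End F V →ₗ[F] V) := by rw [htop]; trivial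
      obtain ⟨l, hl, e⟩ := this
      exact ⟨l, hl, e⟩
    have hinj : ∀ l ∈ L, l y = 0 → l = 0 := by
      let ev : L →ₗ[F] V := (LinearMap.applyₗ y : Module.End F V →ₗ[F] V) ∘ₗ L.subtype
      have hs : Function.Surjective ev := by
        intro v
        obtain ⟨l, hl, e⟩ := hsurj v
        exact ⟨⟨l, hl⟩, e⟩
      have hi := (LinearMap.injective_iff_surjective_of_finrank_eq_finrank hL).2 hs
      intro l hl h0
      have : (⟨l, hl⟩ : L) = 0 := hi (by rw [map_zero]; exact h0)
      exact congrArg Subtype.val this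
    obtain ⟨ψ, hψ⟩ := special_two h2 (exists_not_multiple hV) L y hinj hsurj (hB y hinj)
    exact ⟨ψ, y, hψ⟩

theorem special_of_three {F V : Type*} [Field F] [AddCommGroup V] [Module F V]
    [FiniteDimensional F V]
    (h2 : (2 : F) ≠ 0) (hV : 3 ≤ Module.finrank F V) (L : Submodule F (Module.End F V))
    (hL : Module.finrank F L = Module.finrank F V) (hO : ¬ OrthGood L) : Special L := by
  apply special_of h2 (by omega) L hL
  · intro y hy
    by_contra hc
    exact hO (caseA L hL.le y hy hc)
  · intro y hinj l hl hly u
    by_contra hc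
    push Not at hc
    exact hO (caseB hV L y hinj l hl hly u hc)

theorem special_of_two {F V : Type*} [Field F] [AddCommGroup V] [Module F V]
    [FiniteDimensional F V]
    (h2 : (2 : F) ≠ 0) (hV : Module.finrank F V = 2) (L : Submodule F (Module.End F V))
    (hL : Module.finrank F L = Module.finrank F V)
    (hs : ∀ l ∈ L, ∃ z, z ≠ 0 ∧ l z = 0) : Special L := by
  apply special_of h2 (by omega) L hL
  · intro y hy
    apply Submodule.eq_top_of_finrank_eq
    refine le_antisymm (Submodule.finrank_le _) (by omega)
  · intro y hinj l hl hly u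
    by_cases hl0 : l y = 0
    · rw [hinj l hl hl0]; exact ⟨0, by simp⟩
    obtain ⟨z, hz, hlz⟩ := hs l hl
    have hr := LinearMap.finrank_range_add_finrank_ker l
    have hk : 1 ≤ Module.finrank F (LinearMap.ker l) := by
      have : Nontrivial (LinearMap.ker l) := ⟨⟨⟨z, hlz⟩, 0, fun h => hz (congrArg Subtype.val h)⟩⟩
      exact Module.finrank_pos
    obtain ⟨t, ht⟩ := finrank_le_one_rel (LinearMap.range l) (by omega) (l y) (l u) ⟨y, rfl⟩ ⟨u, rfl⟩ hl0
    exact ⟨t, ht.symm⟩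

theorem vmv_left_cancel {F : Type*} [Field F] {n : ℕ} {x h h' : Fin n → F} (hx : x ≠ 0)
    (e : vecMulVec x h = vecMulVec x h') : h = h' := by
  obtain ⟨i, hi⟩ := Function.ne_iff.1 hx
  funext j
  have := congrFun (congrFun e i) j
  simp only [vecMulVec_apply] at this
  exact mul_left_cancel₀ hi this

theorem type1_struct {F : Type*} [Field F] {n : ℕ} (hn : 2 ≤ n)
    (S : Matrix (Fin n) (Fin n) F →ₗ[F] Matrix (Fin n) (Fin n) F) (hS : Function.Injective S)
    (v x : Fin n → F) (hv : v ≠ 0)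
    (h : ∀ g : Fin n → F, ∃ k : Fin n → F, S (vecMulVec v g) = vecMulVec x k) :
    x ≠ 0 ∧ ∃ R : (Fin n → F) →ₗ[F] (Fin n → F), Function.Injective R ∧ Function.Surjective R ∧
      ∀ g, S (vecMulVec v g) = vecMulVec x (R g) := by
  have hz : ∀ g, S (vecMulVec v g) = 0 → g = 0 := by
    intro g hg
    have : vecMulVec v g = 0 := hS (by rw [hg, map_zero])
    exact vmv_left_cancel hv (by rw [this, vecMulVec_zero])
  have hx : x ≠ 0 := by
    rintro rfl
    obtain ⟨k, hk⟩ := h (fun _ => 1)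
    rw [zero_vecMulVec] at hk
    have := congrFun (hz _ hk) ⟨0, by omega⟩
    simp at this
  refine ⟨hx, ?_⟩
  choose R hR using h
  let R' : (Fin n → F) →ₗ[F] (Fin n → F) :=
    { toFun := R
      map_add' := by
        intro a b
        apply vmv_left_cancel hx
        rw [← hR, vecMulVec_add, map_add, hR, hR, vecMulVec_add]
      map_smul' := by
        intro c a
        apply vmv_left_cancel hx
        rw [← hR, vecMulVec_smul, map_smul, hR, RingHom.id_apply, vecMulVec_smul] }
  have hi : Function.Injective R' := by
    rw [injective_iff_map_eq_zero]
    intro g hg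
    apply hz
    rw [hR]
    change vecMulVec x (R' g) = 0
    rw [hg, vecMulVec_zero]
  exact ⟨R', hi, LinearMap.injective_iff_surjective.1 hi, hR⟩

theorem vmv_dep {F : Type*} [Field F] {n : ℕ} {v w g h : Fin n → F} (hg : g ≠ 0)
    (e : vecMulVec v g = vecMulVec w h) : ∃ c : F, v = c • w := by
  obtain ⟨j, hj⟩ := Function.ne_iff.1 hg
  have hj : g j ≠ 0 := hj
  refine ⟨h j / g j, ?_⟩
  funext i
  have := congrFun (congrFun e i) j
  simp only [vecMulVec_apply] at this
  simp only [Pi.smul_apply, smul_eq_mul]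
  field_simp
  linear_combination this

theorem finish_one {F : Type*} [Field F] {n : ℕ} (hn : 2 ≤ n)
    (S : Matrix (Fin n) (Fin n) F →ₗ[F] Matrix (Fin n) (Fin n) F) (hS : Function.Injective S)
    (h : ∀ v : Fin n → F, v ≠ 0 → ∃ x : Fin n → F, ∀ g : Fin n → F, ∃ k : Fin n → F,
      S (vecMulVec v g) = vecMulVec x k) :
    ∃ P Q : Matrix (Fin n) (Fin n) F, ∀ Y, S Y = P * Y * Q := by
  have h' : ∀ v : Fin n → F, v ≠ 0 → ∃ x : Fin n → F, x ≠ 0 ∧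
      ∃ R : (Fin n → F) →ₗ[F] (Fin n → F), Function.Injective R ∧ Function.Surjective R ∧
      ∀ g, S (vecMulVec v g) = vecMulVec x (R g) := by
    intro v hv
    obtain ⟨x, hx⟩ := h v hv
    exact ⟨x, type1_struct hn S hS v x hv hx⟩
  let i0 : Fin n := ⟨0, by omega⟩
  obtain ⟨x0, hx0, R0, hi0, hs0, hR0⟩ := h' (Pi.single i0 1) (by simp)
  have key : ∀ i : Fin n, ∃ y : Fin n → F, ∀ g, S (vecMulVec (Pi.single i 1) g)
      = vecMulVec y (R0 g) := by
    intro i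
    by_cases hii : i = i0
    · exact ⟨x0, by rw [hii]; exact hR0⟩
    obtain ⟨xi, hxi, Ri, hii', hsi, hRi⟩ := h' (Pi.single i 1) (by simp)
    have hsum0 : (Pi.single i0 1 + Pi.single i 1 : Fin n → F) ≠ 0 := by
      intro hc
      have := congrFun hc i
      simp [hii] at this
    obtain ⟨x', hx', R', hi', hs', hR'⟩ := h' _ hsum0
    have hone : (fun _ => 1 : Fin n → F) ≠ 0 := by
      intro hc
      have := congrFun hc i
      simp at this
    have ind : ∀ c : F, x0 ≠ c • xi := by
      intro c hc
      obtain ⟨g, hg⟩ := hs0 (fun _ => 1)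
      obtain ⟨g', hg'⟩ := hsi (c • fun _ => 1)
      have e1 : S (vecMulVec (Pi.single i0 1) g) = S (vecMulVec (Pi.single i 1) g') := by
        rw [hR0, hRi, hg, hg', hc, smul_vecMulVec, vecMulVec_smul]
      have hg0 : g ≠ 0 := by
        rintro rfl
        rw [map_zero] at hg
        exact hone hg.symm
      obtain ⟨d, hd⟩ := vmv_dep hg0 (hS e1)
      have := congrFun hd i0
      simp [Pi.single_apply, Ne.symm hii] at this
    have ind2 : ∀ s t : F, s • x0 + t • xi = 0 → s = 0 ∧ t = 0 := by
      intro s t hst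
      have hs : s = 0 := by
        by_contra hs
        apply ind (-(s⁻¹ * t))
        have : x0 = s⁻¹ • (s • x0) := by rw [smul_smul, inv_mul_cancel₀ hs, one_smul]
        rw [this, eq_neg_of_add_eq_zero_left hst, smul_neg, smul_smul, neg_smul]
      rw [hs, zero_smul, zero_add] at hst
      exact ⟨hs, (smul_eq_zero.1 hst).resolve_right hxi⟩
    let e : (F × F) →ₗ[F] (Fin n → F) :=
      LinearMap.coprod (LinearMap.toSpanSingleton F _ x0) (LinearMap.toSpanSingleton F _ xi)
    have he : ∀ p : F × F, e p = p.1 • x0 + p.2 • xi := fun p => rfl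
    obtain ⟨φ0, hφ0⟩ := exists_dual_ext e (LinearMap.fst F F F) (by
      intro p hp
      rw [he] at hp
      exact (ind2 _ _ hp).1)
    obtain ⟨φ1, hφ1⟩ := exists_dual_ext e (LinearMap.snd F F F) (by
      intro p hp
      rw [he] at hp
      exact (ind2 _ _ hp).2)
    have a00 : φ0 x0 = 1 := by simpa [he] using hφ0 (1, 0)
    have a01 : φ0 xi = 0 := by simpa [he] using hφ0 (0, 1)
    have a10 : φ1 x0 = 0 := by simpa [he] using hφ1 (1, 0)
    have a11 : φ1 xi = 1 := by simpa [he] using hφ1 (0, 1)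
    have E : ∀ (g : Fin n → F) (j : Fin n), R' g j • x' = R0 g j • x0 + Ri g j • xi := by
      intro g j
      have e1 : vecMulVec x' (R' g) = vecMulVec x0 (R0 g) + vecMulVec xi (Ri g) := by
        rw [← hR', add_vecMulVec, map_add, hR0, hRi]
      funext k
      have := congrFun (congrFun e1 k) j
      simp only [vecMulVec_apply, Matrix.add_apply] at this
      simp only [Pi.smul_apply, Pi.add_apply, smul_eq_mul]
      linear_combination this
    have E0 : ∀ g, R0 g = φ0 x' • R' g := by
      intro g
      funext j
      have := congrArg φ0 (E g j)
      simp only [map_add, map_smul, a00, a01, smul_eq_mul] at this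
      simp only [Pi.smul_apply, smul_eq_mul]
      linear_combination -this
    have E1 : ∀ g, Ri g = φ1 x' • R' g := by
      intro g
      funext j
      have := congrArg φ1 (E g j)
      simp only [map_add, map_smul, a10, a11, smul_eq_mul] at this
      simp only [Pi.smul_apply, smul_eq_mul]
      linear_combination -this
    have hp0 : φ0 x' ≠ 0 := by
      intro hc
      have h1 := E0 (fun _ => 1)
      rw [hc, zero_smul] at h1
      exact hone (hi0 (by rw [h1, map_zero]))
    refine ⟨(φ1 x' * (φ0 x')⁻¹) • xi, ?_⟩
    intro g
    rw [hRi, E1, E0, vecMulVec_smul, vecMulVec_smul, smul_vecMulVec, smul_smul]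
    congr 1
    field_simp
  choose y hy using key
  refine ⟨Matrix.of (fun k i => y i k), (LinearMap.toMatrix' R0)ᵀ, ?_⟩
  intro Y
  have hY : Y = ∑ i, vecMulVec (Pi.single i 1) (Y i) := by
    ext a b
    simp [Matrix.sum_apply, vecMulVec_apply, Pi.single_apply]
  conv_lhs => rw [hY]
  conv_rhs => rw [hY]
  rw [map_sum, Matrix.mul_sum, Matrix.sum_mul]
  refine Finset.sum_congr rfl fun i _ => ?_
  rw [hy, mul_vecMulVec, vecMulVec_mul, vecMul_transpose, ← Matrix.toLin'_apply (LinearMap.toMatrix' R0),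
    Matrix.toLin'_toMatrix']
  congr 1
  funext k
  simp

theorem finish_all {F : Type*} [Field F] {n : ℕ} (hn : 2 ≤ n)
    (S : Matrix (Fin n) (Fin n) F →ₗ[F] Matrix (Fin n) (Fin n) F) (hS : Function.Injective S)
    (h : ∀ v : Fin n → F, v ≠ 0 →
      (∃ x : Fin n → F, ∀ g : Fin n → F, ∃ k : Fin n → F, S (vecMulVec v g) = vecMulVec x k) ∨
      (∃ x : Fin n → F, ∀ g : Fin n → F, ∃ k : Fin n → F, S (vecMulVec v g) = vecMulVec k x)) :
    ∃ P Q : Matrix (Fin n) (Fin n) F, (∀ Y, S Y = P * Y * Q) ∨ (∀ Y, S Y = P * Yᵀ * Q) := by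
  let S' : Matrix (Fin n) (Fin n) F →ₗ[F] Matrix (Fin n) (Fin n) F :=
    (Matrix.transposeLinearEquiv (Fin n) (Fin n) F F).toLinearMap ∘ₗ S
  have hS'a : ∀ Y, S' Y = (S Y)ᵀ := fun _ => rfl
  have hS' : Function.Injective S' := by
    intro a b hab
    rw [hS'a, hS'a] at hab
    exact hS (Matrix.transpose_injective hab)
  by_cases h1 : ∀ v : Fin n → F, v ≠ 0 →
      (∃ x : Fin n → F, ∀ g : Fin n → F, ∃ k : Fin n → F, S (vecMulVec v g) = vecMulVec x k)
  · obtain ⟨P, Q, hPQ⟩ := finish_one hn S hS h1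
    exact ⟨P, Q, Or.inl hPQ⟩
  push Not at h1
  obtain ⟨w, hw, hw1⟩ := h1
  have hw2 : ∃ x : Fin n → F, ∀ g : Fin n → F, ∃ k : Fin n → F, S (vecMulVec w g) = vecMulVec k x := by
    rcases h w hw with ⟨x, hx⟩ | h'
    · obtain ⟨g, hg⟩ := hw1 x
      obtain ⟨k, hk⟩ := hx g
      exact absurd hk (hg k)
    · exact h'
  have h2 : ∀ v : Fin n → F, v ≠ 0 →
      (∃ x : Fin n → F, ∀ g : Fin n → F, ∃ k : Fin n → F, S' (vecMulVec v g) = vecMulVec x k) := by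
    intro v hv
    suffices hs : ∃ x : Fin n → F, ∀ g : Fin n → F, ∃ k : Fin n → F,
        S (vecMulVec v g) = vecMulVec k x by
      obtain ⟨x, hx⟩ := hs
      refine ⟨x, fun g => ?_⟩
      obtain ⟨k, hk⟩ := hx g
      exact ⟨k, by rw [hS'a, hk, transpose_vecMulVec]⟩
    rcases h v hv with ⟨x, hx⟩ | h'
    swap
    · exact h'
    exfalso
    obtain ⟨ψ, hψ⟩ := hw2
    obtain ⟨hx0, R, hRi, hRs, hR⟩ := type1_struct hn S hS v x hv hx
    obtain ⟨hψ0, R', hRi', hRs', hR'⟩ := type1_struct hn S' hS' w ψ hw (by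
      intro g
      obtain ⟨k, hk⟩ := hψ g
      exact ⟨k, by rw [hS'a, hk, transpose_vecMulVec]⟩)
    obtain ⟨g, hg⟩ := hRs ψ
    obtain ⟨g', hg'⟩ := hRs' x
    have e1 : S (vecMulVec v g) = S (vecMulVec w g') := by
      apply Matrix.transpose_injective
      rw [← hS'a (vecMulVec w g'), hR', hR, hg, hg', transpose_vecMulVec]
    have hg'0 : g' ≠ 0 := by
      rintro rfl
      rw [map_zero] at hg'
      exact hx0 hg'.symm
    obtain ⟨c, hc⟩ := vmv_dep hg'0 (hS e1).symm
    obtain ⟨g₂, hg₂⟩ := hw1 x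
    apply hg₂ (R (c • g₂))
    rw [← hR, hc, smul_vecMulVec, vecMulVec_smul]
  obtain ⟨P, Q, hPQ⟩ := finish_one hn S' hS' h2
  refine ⟨Qᵀ, Pᵀ, Or.inr fun Y => ?_⟩
  have := congrArg Matrix.transpose (hPQ Y)
  rw [hS'a, transpose_transpose] at this
  rw [this, transpose_mul, transpose_mul, Matrix.mul_assoc]

theorem ringChar_two {F : Type*} [Field F] (h : ringChar F ≠ 2) : (2 : F) ≠ 0 := Ring.two_ne_zero h

theorem good_prod {F : Type*} [Field F] (h2 : (2 : F) ≠ 0) {n : ℕ} (A : Matrix (Fin n) (Fin n) F)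
    (h : GoodEnd (Matrix.toLin' A)) : A ∈ ProdInv3 F n := by
  obtain ⟨J, hJ, hN⟩ := h
  obtain ⟨K₁, K₂, h1, h2, h3⟩ := unip_two h2 _ hN
  have hA : Matrix.toLin' A = J * K₁ * K₂ := by
    rw [mul_assoc, ← h3, add_sub_cancel, ← mul_assoc, hJ, one_mul]
  refine ⟨LinearMap.toMatrix' J, LinearMap.toMatrix' K₁, LinearMap.toMatrix' K₂, ?_, ?_, ?_, ?_⟩
  · rw [← LinearMap.toMatrix'_mul, hJ, LinearMap.toMatrix'_one]
  · rw [← LinearMap.toMatrix'_mul, h1, LinearMap.toMatrix'_one]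
  · rw [← LinearMap.toMatrix'_mul, h2, LinearMap.toMatrix'_one]
  · rw [← LinearMap.toMatrix'_mul, ← LinearMap.toMatrix'_mul, ← hA, LinearMap.toMatrix'_toLin']

theorem prod_det {F : Type*} [Field F] {n : ℕ} {A : Matrix (Fin n) (Fin n) F}
    (h : A ∈ ProdInv3 F n) : A.det * A.det = 1 := by
  obtain ⟨J, K, L, h1, h2, h3, rfl⟩ := h
  have d1 := congrArg Matrix.det h1
  have d2 := congrArg Matrix.det h2
  have d3 := congrArg Matrix.det h3
  simp only [det_mul, det_one] at *
  calc _ = (J.det * J.det) * (K.det * K.det) * (L.det * L.det) := by ring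
    _ = 1 := by rw [d1, d2, d3]; ring

theorem prod_isUnit {F : Type*} [Field F] {n : ℕ} {A : Matrix (Fin n) (Fin n) F}
    (h : A ∈ ProdInv3 F n) : IsUnit A := by
  rw [Matrix.isUnit_iff_isUnit_det]
  exact IsUnit.of_mul_eq_one _ (prod_det h)

theorem prod_transpose {F : Type*} [Field F] {n : ℕ} {A : Matrix (Fin n) (Fin n) F}
    (h : A ∈ ProdInv3 F n) : Aᵀ ∈ ProdInv3 F n := by
  obtain ⟨J, K, L, h1, h2, h3, rfl⟩ := h
  refine ⟨Lᵀ, Kᵀ, Jᵀ, ?_, ?_, ?_, ?_⟩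
  · rw [← transpose_mul, h3, transpose_one]
  · rw [← transpose_mul, h2, transpose_one]
  · rw [← transpose_mul, h1, transpose_one]
  · rw [transpose_mul, transpose_mul, Matrix.mul_assoc]

theorem prod_conj {F : Type*} [Field F] {n : ℕ} {A : Matrix (Fin n) (Fin n) F}
    (h : A ∈ ProdInv3 F n) (P Q : Matrix (Fin n) (Fin n) F) (hPQ : Q * P = 1) :
    P * A * Q ∈ ProdInv3 F n := by
  obtain ⟨J, K, L, h1, h2, h3, rfl⟩ := h
  have hPQ' : P * Q = 1 := mul_eq_one_comm.1 hPQ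
  have c : ∀ M N, P * M * Q * (P * N * Q) = P * (M * N) * Q := by
    intro M N
    calc _ = P * M * (Q * P) * N * Q := by simp only [Matrix.mul_assoc]
      _ = _ := by rw [hPQ, Matrix.mul_one]; simp only [Matrix.mul_assoc]
  refine ⟨P * J * Q, P * K * Q, P * L * Q, ?_, ?_, ?_, ?_⟩
  · rw [c, h1, Matrix.mul_one, hPQ']
  · rw [c, h2, Matrix.mul_one, hPQ']
  · rw [c, h3, Matrix.mul_one, hPQ']
  · rw [c, c]

theorem special_vmv {F : Type*} [Field F] {n : ℕ}
    (G : (Fin n → F) →ₗ[F] Matrix (Fin n) (Fin n) F)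
    (h : Special (LinearMap.range (Matrix.toLin'.toLinearMap ∘ₗ G))) :
    (∃ x : Fin n → F, ∀ g : Fin n → F, ∃ k : Fin n → F, G g = vecMulVec x k) ∨
    (∃ x : Fin n → F, ∀ g : Fin n → F, ∃ k : Fin n → F, G g = vecMulVec k x) := by
  have ent : ∀ (M : Matrix (Fin n) (Fin n) F) i j, M i j = Matrix.toLin' M (Pi.single j 1) i := by
    intro M i j
    simp
  rcases h with ⟨x, hx⟩ | ⟨ψ, y, hψ⟩
  · left
    refine ⟨x, fun g => ?_⟩
    have := hx (Matrix.toLin' (G g)) ⟨g, rfl⟩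
    choose t ht using this
    refine ⟨fun j => t (Pi.single j 1), ?_⟩
    ext i j
    rw [ent (G g) i j, ht, vecMulVec_apply]
    simp [mul_comm]
  · right
    refine ⟨fun j => ψ (Pi.single j 1), fun g => ?_⟩
    have := hψ (Matrix.toLin' (G g)) ⟨g, rfl⟩
    refine ⟨Matrix.toLin' (G g) y, ?_⟩
    ext i j
    rw [ent (G g) i j, this, vecMulVec_apply]
    simp [mul_comm]

theorem finrank_rng {F : Type*} [Field F] {n : ℕ}
    (G : (Fin n → F) →ₗ[F] Matrix (Fin n) (Fin n) F) (hG : Function.Injective G) :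
    Module.finrank F (LinearMap.range (Matrix.toLin'.toLinearMap ∘ₗ G))
      = Module.finrank F (Fin n → F) := by
  apply LinearMap.finrank_range_of_inj
  exact Matrix.toLin'.injective.comp hG

/-- The linear map `g ↦ v ⊗ g`. -/
def vmvLin {F : Type*} [Field F] {n : ℕ} (v : Fin n → F) :
    (Fin n → F) →ₗ[F] Matrix (Fin n) (Fin n) F where
  toFun g := vecMulVec v g
  map_add' := vecMulVec_add v
  map_smul' c g := vecMulVec_smul c v g

theorem vmvLin_inj {F : Type*} [Field F] {n : ℕ} {v : Fin n → F} (hv : v ≠ 0) :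
    Function.Injective (vmvLin v) := fun _ _ h => vmv_left_cancel hv h

/-- The trace adjoint of `T`. -/
def adjT {F : Type*} [Field F] {n : ℕ}
    (T : Matrix (Fin n) (Fin n) F →ₗ[F] Matrix (Fin n) (Fin n) F) :
    Matrix (Fin n) (Fin n) F →ₗ[F] Matrix (Fin n) (Fin n) F where
  toFun Y := Matrix.of fun j i => trace (T (Matrix.single i j 1) * Y)
  map_add' Y Z := by ext j i; simp [Matrix.mul_add, trace_add]
  map_smul' c Y := by ext j i; simp [trace_smul]

theorem adjT_trace {F : Type*} [Field F] {n : ℕ}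
    (T : Matrix (Fin n) (Fin n) F →ₗ[F] Matrix (Fin n) (Fin n) F)
    (X Y : Matrix (Fin n) (Fin n) F) : trace (X * adjT T Y) = trace (T X * Y) := by
  let f : Matrix (Fin n) (Fin n) F →ₗ[F] F :=
    Matrix.traceLinearMap (Fin n) F F ∘ₗ LinearMap.mulRight F (adjT T Y)
  let g : Matrix (Fin n) (Fin n) F →ₗ[F] F :=
    Matrix.traceLinearMap (Fin n) F F ∘ₗ LinearMap.mulRight F Y ∘ₗ T
  have : f = g := by
    apply Matrix.ext_linearMap
    intro i j
    ext
    change trace (Matrix.single i j 1 * adjT T Y) = trace (T (Matrix.single i j 1) * Y)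
    rw [Matrix.trace_single_mul, one_smul]
    rfl
  exact congrArg (fun f => f X) this

theorem trace_ext {F : Type*} [Field F] {n : ℕ} {A B : Matrix (Fin n) (Fin n) F}
    (h : ∀ X, trace (X * A) = trace (X * B)) : A = B := by
  ext i j
  have := h (Matrix.single j i 1)
  rwa [Matrix.trace_single_mul, Matrix.trace_single_mul, one_smul, one_smul] at this

theorem form_three {F : Type*} [Field F] (h2 : (2 : F) ≠ 0) {n : ℕ} (hn : 3 ≤ n)
    (T : Matrix (Fin n) (Fin n) F →ₗ[F] Matrix (Fin n) (Fin n) F)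
    (hT : Function.Bijective T) (h : ∀ A ∈ ProdInv3 F n, T A ∈ ProdInv3 F n) :
    ∃ P Q : Matrix (Fin n) (Fin n) F, (∀ Y, T Y = P * Y * Q) ∨ (∀ Y, T Y = P * Yᵀ * Q) := by
  have hinj : Function.Injective (adjT T) := by
    intro Y Z hYZ
    apply trace_ext
    intro X
    obtain ⟨W, rfl⟩ := hT.2 X
    rw [← adjT_trace, ← adjT_trace, hYZ]
  have hsp : ∀ v : Fin n → F, v ≠ 0 →
      (∃ x : Fin n → F, ∀ g : Fin n → F, ∃ k : Fin n → F, adjT T (vecMulVec v g) = vecMulVec x k) ∨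
      (∃ x : Fin n → F, ∀ g : Fin n → F, ∃ k : Fin n → F,
        adjT T (vecMulVec v g) = vecMulVec k x) := by
    intro v hv
    apply special_vmv (adjT T ∘ₗ vmvLin v)
    apply special_of_three h2 (by simpa using hn) _
      (finrank_rng _ (hinj.comp (vmvLin_inj hv)))
    rintro ⟨A, hA, hAL⟩
    obtain ⟨A', rfl⟩ := Matrix.toLin'.surjective A
    have hTA := prod_isUnit (h _ (good_prod h2 _ hA))
    apply hv
    have h0 : T A' *ᵥ v = 0 := by
      funext i
      have := hAL (Matrix.toLin' (adjT T (vecMulVec v (Pi.single i 1)))) ⟨Pi.single i 1, rfl⟩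
      rw [Module.End.mul_eq_comp, ← Matrix.toLin'_mul, Matrix.trace_toLin'_eq, adjT_trace, mul_vecMulVec,
        trace_vecMulVec] at this
      simpa using this
    have hu := Matrix.mulVec_injective_iff_isUnit.2 hTA
    exact hu (by simpa using h0)
  obtain ⟨P, Q, hPQ | hPQ⟩ := finish_all (by omega) (adjT T) hinj hsp
  · refine ⟨Q, P, Or.inl fun X => ?_⟩
    apply trace_ext
    intro Y
    rw [trace_mul_comm, ← adjT_trace, hPQ, trace_mul_comm]
    simp only [Matrix.mul_assoc]
    rw [trace_mul_comm]
    simp only [Matrix.mul_assoc]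
  · refine ⟨Pᵀ, Qᵀ, Or.inr fun X => ?_⟩
    apply trace_ext
    intro Y
    rw [trace_mul_comm, ← adjT_trace, hPQ, ← trace_transpose]
    simp only [transpose_mul, transpose_transpose, Matrix.mul_assoc]
    rw [trace_mul_comm]
    simp only [Matrix.mul_assoc]

theorem mat_two_ext {F : Type*} {a b c d a' b' c' d' : F} (h1 : a = a') (h2 : b = b')
    (h3 : c = c') (h4 : d = d') : !![a, b; c, d] = !![a', b'; c', d'] := by
  rw [h1, h2, h3, h4]

theorem prod_two {F : Type*} [Field F] (hF : ∀ a : F, a = 0 ∨ a = 1 ∨ a = -1)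
    (A : Matrix (Fin 2) (Fin 2) F) (hA : A.det ≠ 0) : A ∈ ProdInv3 F 2 := by
  have comp : ∀ δ τ : F, δ = 1 ∨ δ = -1 → !![0, -δ; 1, τ] ∈ ProdInv3 F 2 := by
    intro δ τ hδ
    rcases hδ with rfl | rfl
    · refine ⟨!![0, 1; 1, 0], !![1, τ; 0, -1], 1, ?_, ?_, ?_, ?_⟩
      · simp [Matrix.one_fin_two]
      · simp [Matrix.one_fin_two]
      · simp
      · simp
    · refine ⟨!![0, 1; 1, 0], !![1, 0; 0, -1], !![1, τ; 0, -1], ?_, ?_, ?_, ?_⟩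
      · simp [Matrix.one_fin_two]
      · simp [Matrix.one_fin_two]
      · simp [Matrix.one_fin_two]
      · simp
  have casec : ∀ a b c d : F, a * d - b * c ≠ 0 → c ≠ 0 → !![a, b; c, d] ∈ ProdInv3 F 2 := by
    intro a b c d hd hc
    have h := prod_conj (comp (a * d - b * c) (a + d) ((hF _).resolve_left hd))
      !![1, a; 0, c] !![1, -a / c; 0, 1 / c] (by
        rw [Matrix.one_fin_two, Matrix.mul_fin_two]
        apply mat_two_ext <;> field_simp <;> ring)
    convert h using 1
    rw [Matrix.mul_fin_two, Matrix.mul_fin_two]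
    apply mat_two_ext <;> field_simp <;> ring
  rw [Matrix.det_fin_two] at hA
  rw [Matrix.eta_fin_two A]
  generalize A 0 0 = a at *
  generalize A 0 1 = b at *
  generalize A 1 0 = c at *
  generalize A 1 1 = d at *
  by_cases hc : c = 0
  · by_cases hb : b = 0
    · subst hb hc
      have ha0 : a ≠ 0 := by rintro rfl; simp at hA
      have hd0 : d ≠ 0 := by rintro rfl; simp at hA
      refine ⟨!![a, 0; 0, d], 1, 1, ?_, by simp, by simp, by simp⟩
      rw [Matrix.one_fin_two, Matrix.mul_fin_two]
      rcases (hF a).resolve_left ha0 with rfl | rfl <;>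
      rcases (hF d).resolve_left hd0 with rfl | rfl <;> simp
    · have h := prod_transpose (casec a c b d (by rwa [mul_comm c b]) hb)
      convert h using 1
      ext i j
      fin_cases i <;> fin_cases j <;> rfl
  · exact casec a b c d hA hc

theorem exists_J {F : Type*} [Field F] (x f : Fin 2 → F) :
    ∃ J : Matrix (Fin 2) (Fin 2) F, J * J = 1 ∧ f ⬝ᵥ (J *ᵥ x) = 0 := by
  by_cases hs : f ⬝ᵥ x = 0
  · exact ⟨1, by simp, by simpa using hs⟩
  simp only [dotProduct, Fin.sum_univ_two] at hs
  obtain ⟨s, hsd⟩ : ∃ s, s = f 0 * x 0 + f 1 * x 1 := ⟨_, rfl⟩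
  rw [← hsd] at hs
  refine ⟨!![(f 1 * f 0 + x 0 * x 1) / s, (f 1 * f 1 - x 0 * x 0) / s;
      (x 1 * x 1 - f 0 * f 0) / s, -(f 1 * f 0 + x 0 * x 1) / s], ?_, ?_⟩
  · rw [Matrix.one_fin_two, Matrix.mul_fin_two]
    apply mat_two_ext <;> field_simp <;> (try rw [hsd]) <;> ring
  · simp [dotProduct, mulVec, Fin.sum_univ_two]
    field_simp
    ring

theorem sing_two {F : Type*} [Field F] (h2 : (2 : F) ≠ 0)
    (T : Matrix (Fin 2) (Fin 2) F →ₗ[F] Matrix (Fin 2) (Fin 2) F)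
    (hT : Function.Bijective T) (h : ∀ A ∈ ProdInv3 F 2, T A ∈ ProdInv3 F 2)
    (x f : Fin 2 → F) : (T (vecMulVec x f)).det = 0 := by
  by_cases hF : ∀ a : F, a = 0 ∨ a = 1 ∨ a = -1
  · by_contra hd
    have hfin : Finite F := by
      have : (Set.univ : Set F) ⊆ {0, 1, -1} := by
        intro a _
        simpa using hF a
      exact Set.finite_univ_iff.1 ((Set.toFinite _).subset this)
    let T' : ProdInv3 F 2 → ProdInv3 F 2 := fun A => ⟨T A.1, h A.1 A.2⟩
    have hi : Function.Injective T' := fun A B hAB =>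
      Subtype.ext (hT.1 (congrArg Subtype.val hAB))
    have hsurj := Finite.injective_iff_surjective.1 hi
    obtain ⟨A, hA⟩ := hsurj ⟨_, prod_two hF _ hd⟩
    have e : A.1 = vecMulVec x f := hT.1 (congrArg Subtype.val hA)
    have := prod_det A.2
    rw [e, Matrix.det_fin_two] at this
    simp only [vecMulVec_apply] at this
    apply one_ne_zero (α := F)
    rw [← this]
    ring
  · push Not at hF
    obtain ⟨a, ha0, ha1, ha2⟩ := hF
    obtain ⟨J, hJ, hJx⟩ := exists_J x f
    have hg : ∀ t : F, J + t • vecMulVec x f ∈ ProdInv3 F 2 := by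
      intro t
      apply good_prod h2
      refine ⟨Matrix.toLin' J, ?_, 2, ?_⟩
      · rw [Module.End.mul_eq_comp, ← Matrix.toLin'_mul, hJ, Matrix.toLin'_one]; rfl
      · have : Matrix.toLin' J * Matrix.toLin' (J + t • vecMulVec x f) - 1
            = t • Matrix.toLin' (vecMulVec (J *ᵥ x) f) := by
          rw [Module.End.mul_eq_comp, ← Matrix.toLin'_mul, Matrix.mul_add, hJ, Matrix.mul_smul,
            mul_vecMulVec, map_add, map_smul, Matrix.toLin'_one, Module.End.one_eq_id,
            add_sub_cancel_left]
        rw [this, smul_pow, pow_two (Matrix.toLin' _), Module.End.mul_eq_comp, ← Matrix.toLin'_mul,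
          vecMulVec_mul_vecMulVec, hJx]
        simp
    have hp : ∀ t : F, ((T J).det + t * ((T J) 0 0 * (T (vecMulVec x f)) 1 1
        + (T J) 1 1 * (T (vecMulVec x f)) 0 0 - (T J) 0 1 * (T (vecMulVec x f)) 1 0
        - (T J) 1 0 * (T (vecMulVec x f)) 0 1) + t ^ 2 * (T (vecMulVec x f)).det) ^ 2 = 1 := by
      intro t
      have := prod_det (h _ (hg t))
      rw [map_add, map_smul, Matrix.det_fin_two] at this
      simp only [Matrix.add_apply, Matrix.smul_apply, smul_eq_mul] at this
      rw [← this, Matrix.det_fin_two, Matrix.det_fin_two]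
      ring
    generalize (T (vecMulVec x f)).det = d2 at hp ⊢
    generalize ((T J) 0 0 * (T (vecMulVec x f)) 1 1
        + (T J) 1 1 * (T (vecMulVec x f)) 0 0 - (T J) 0 1 * (T (vecMulVec x f)) 1 0
        - (T J) 1 0 * (T (vecMulVec x f)) 0 1) = d1 at hp
    generalize (T J).det = d0 at hp
    have p0 := hp 0
    have p1 := hp 1
    have pm := hp (-1)
    have pa := hp a
    have pma := hp (-a)
    have hz : 2 * (a ^ 2 * ((a - 1) * (a + 1))) * d2 ^ 2 = 0 := by
      linear_combination pa + pma - a ^ 2 * (p1 + pm) - 2 * (1 - a ^ 2) * p0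
    have n1 : a - 1 ≠ 0 := sub_ne_zero.2 ha1
    have n2 : a + 1 ≠ 0 := fun hc => ha2 (eq_neg_of_add_eq_zero_left hc)
    have n3 : 2 * (a ^ 2 * ((a - 1) * (a + 1))) ≠ 0 :=
      mul_ne_zero h2 (mul_ne_zero (pow_ne_zero _ ha0) (mul_ne_zero n1 n2))
    exact pow_eq_zero_iff (two_ne_zero) |>.1 ((mul_eq_zero.1 hz).resolve_left n3)

theorem form_two {F : Type*} [Field F] (h2 : (2 : F) ≠ 0)
    (T : Matrix (Fin 2) (Fin 2) F →ₗ[F] Matrix (Fin 2) (Fin 2) F)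
    (hT : Function.Bijective T) (h : ∀ A ∈ ProdInv3 F 2, T A ∈ ProdInv3 F 2) :
    ∃ P Q : Matrix (Fin 2) (Fin 2) F, (∀ Y, T Y = P * Y * Q) ∨ (∀ Y, T Y = P * Yᵀ * Q) := by
  apply finish_all le_rfl T hT.1
  intro v hv
  apply special_vmv (T ∘ₗ vmvLin v)
  apply special_of_two h2 (by simp) _ (finrank_rng _ (hT.1.comp (vmvLin_inj hv)))
  rintro l ⟨g, rfl⟩
  obtain ⟨z, hz, hz0⟩ := Matrix.exists_mulVec_eq_zero_iff.2 (sing_two h2 T hT h v g)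
  exact ⟨z, hz, hz0⟩

theorem stmt13 (F : Type*) [Field F] (hchar : ringChar F ≠ 2) (n : ℕ) (hn : 2 ≤ n)
    (T : Matrix (Fin n) (Fin n) F →ₗ[F] Matrix (Fin n) (Fin n) F)
    (hT : Function.Bijective T) :
    (∀ A ∈ ProdInv3 F n, T A ∈ ProdInv3 F n) ↔
      ∃ P Q : Matrix (Fin n) (Fin n) F, IsUnit P ∧ IsUnit Q ∧ P * Q ∈ LambdaSet F n ∧
        ((∀ X, T X = P * X * Q) ∨ (∀ X, T X = P * Xᵀ * Q)) := by
  have h2 : (2 : F) ≠ 0 := ringChar_two hchar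
  constructor
  · intro h
    have hform : ∃ P Q : Matrix (Fin n) (Fin n) F,
        (∀ Y, T Y = P * Y * Q) ∨ (∀ Y, T Y = P * Yᵀ * Q) := by
      rcases Nat.lt_or_ge n 3 with h3 | h3
      · obtain rfl : n = 2 := by omega
        exact form_two h2 T hT h
      · exact form_three h2 h3 T hT h
    obtain ⟨P, Q, hPQ⟩ := hform
    obtain ⟨hP, hQ⟩ : IsUnit P ∧ IsUnit Q := by
      obtain ⟨X, hX⟩ := hT.2 1
      have : ∃ Z, P * Z * Q = 1 := by
        rcases hPQ with e | e
        · exact ⟨X, by rw [← e, hX]⟩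
        · exact ⟨Xᵀ, by rw [← e, hX]⟩
      obtain ⟨Z, hZ⟩ := this
      refine ⟨IsUnit.of_mul_eq_one (Z * Q) (by rw [← Matrix.mul_assoc, hZ]), ?_⟩
      exact IsUnit.of_mul_eq_one (P * Z) (mul_eq_one_comm.1 hZ)
    refine ⟨P, Q, hP, hQ, ?_, hPQ⟩
    intro A hA
    obtain ⟨u, rfl⟩ := hQ
    have hB := prod_conj hA u.1 u.inv u.inv_val
    have e : P * u.1 * A = P * (u.1 * A * u.inv) * u.1 := by
      simp only [Matrix.mul_assoc]
      rw [u.inv_val, Matrix.mul_one]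
    rw [e]
    rcases hPQ with hh | hh
    · rw [← hh]; exact h _ hB
    · have := h _ (prod_transpose hB)
      rwa [hh, transpose_transpose] at this
  · rintro ⟨P, Q, hP, ⟨u, rfl⟩, hL, hPQ⟩ A hA
    have key : ∀ B ∈ ProdInv3 F n, P * B * u.1 ∈ ProdInv3 F n := by
      intro B hB
      have := hL _ (prod_conj hB u.inv u.1 u.val_inv)
      have e : P * u.1 * (u.inv * B * u.1) = P * B * u.1 := by
        calc _ = P * (u.1 * u.inv) * B * u.1 := by simp only [Matrix.mul_assoc]
          _ = _ := by rw [u.val_inv, Matrix.mul_one]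
      rwa [e] at this
    rcases hPQ with e | e
    · rw [e]; exact key A hA
    · rw [e]; exact key _ (prod_transpose hA)
end

section
/- Let F be a field with char(F) ∉ {2, 3} such that the polynomial x² + x + 1 is reducible in F[x]. Then Λ_3(F) = {I, −I}. -/
open Matrix Polynomial

section helpers

variable {F : Type*} [Field F]

lemma pi3_one : (1 : Matrix (Fin 3) (Fin 3) F) ∈ ProdInv3 F 3 :=
  ⟨1, 1, 1, by simp, by simp, by simp, by simp⟩

lemma pi3_neg {A : Matrix (Fin 3) (Fin 3) F} (h : A ∈ ProdInv3 F 3) : -A ∈ ProdInv3 F 3 := by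
  obtain ⟨J, K, L, hJ, hK, hL, rfl⟩ := h
  exact ⟨-J, K, L, by simpa using hJ, hK, hL, by simp⟩

lemma pi3_conj {A S M : Matrix (Fin 3) (Fin 3) F} (hS : S.det ≠ 0) (h : A * S = S * M)
    (hM : M ∈ ProdInv3 F 3) : A ∈ ProdInv3 F 3 := by
  obtain ⟨J, K, L, hJ, hK, hL, rfl⟩ := hM
  have hu : IsUnit S.det := isUnit_iff_ne_zero.mpr hS
  have h1 : S⁻¹ * S = 1 := Matrix.nonsing_inv_mul S hu
  have h2 : S * S⁻¹ = 1 := Matrix.mul_nonsing_inv S hu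
  have key : ∀ X Y : Matrix (Fin 3) (Fin 3) F,
      (S * X * S⁻¹) * (S * Y * S⁻¹) = S * (X * Y) * S⁻¹ := by
    intro X Y
    calc (S * X * S⁻¹) * (S * Y * S⁻¹) = S * X * (S⁻¹ * S) * Y * S⁻¹ := by
          simp only [Matrix.mul_assoc]
      _ = _ := by rw [h1]; simp only [Matrix.mul_assoc, Matrix.mul_one]
  refine ⟨S * J * S⁻¹, S * K * S⁻¹, S * L * S⁻¹, ?_, ?_, ?_, ?_⟩
  · rw [key, hJ, Matrix.mul_one, h2]
  · rw [key, hK, Matrix.mul_one, h2]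
  · rw [key, hL, Matrix.mul_one, h2]
  · rw [key, key, ← h, Matrix.mul_assoc, h2, Matrix.mul_one]

lemma pi3_companion (b c : F) : !![0, 0, -1; 1, 0, b; 0, 1, c] ∈ ProdInv3 F 3 := by
  refine ⟨!![0, 1, 0; 1, 0, 0; 0, 0, 1], !![1, 0, 0; 0, 0, 1; 0, 1, 0],
    !![1, 0, b; 0, 1, c; 0, 0, -1], ?_, ?_, ?_, ?_⟩ <;>
  · ext i j
    fin_cases i <;> fin_cases j <;> simp [Matrix.mul_apply, Fin.sum_univ_three]

/-- A matrix of determinant `-1` with a cyclic vector `(x, y, z)`. -/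
lemma pi3_cyclic (A : Matrix (Fin 3) (Fin 3) F) (hA : A.det = -1) (u : Fin 3 → F)
    (h : (Matrix.of ![u, A *ᵥ u, A *ᵥ (A *ᵥ u)]).det ≠ 0) : A ∈ ProdInv3 F 3 := by
  set S : Matrix (Fin 3) (Fin 3) F := (Matrix.of ![u, A *ᵥ u, A *ᵥ (A *ᵥ u)])ᵀ with hSdef
  have hS : S.det ≠ 0 := by rw [hSdef, Matrix.det_transpose]; exact h
  have hu : IsUnit S.det := isUnit_iff_ne_zero.mpr hS
  have h1 : S⁻¹ * S = 1 := Matrix.nonsing_inv_mul S hu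
  have h2 : S * S⁻¹ = 1 := Matrix.mul_nonsing_inv S hu
  set M := S⁻¹ * A * S with hM
  have hAS : A * S = S * M := by
    rw [hM, Matrix.mul_assoc, ← Matrix.mul_assoc S, h2, Matrix.one_mul]
  have c0 : S *ᵥ ![1, 0, 0] = u := by
    ext i; simp [hSdef, Matrix.mulVec, dotProduct, Fin.sum_univ_three]
  have c1 : S *ᵥ ![0, 1, 0] = A *ᵥ u := by
    ext i; simp [hSdef, Matrix.mulVec, dotProduct, Fin.sum_univ_three]
  have c2 : S *ᵥ ![0, 0, 1] = A *ᵥ (A *ᵥ u) := by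
    ext i; simp [-Matrix.mulVec_mulVec, hSdef, Matrix.mulVec, dotProduct, Fin.sum_univ_three]
  have m0 : M *ᵥ ![1, 0, 0] = ![0, 1, 0] := by
    rw [hM, Matrix.mul_assoc, ← Matrix.mulVec_mulVec, ← Matrix.mulVec_mulVec, c0, ← c1,
      Matrix.mulVec_mulVec, h1, Matrix.one_mulVec]
  have m1 : M *ᵥ ![0, 1, 0] = ![0, 0, 1] := by
    rw [hM, Matrix.mul_assoc, ← Matrix.mulVec_mulVec, ← Matrix.mulVec_mulVec, c1, ← c2,
      Matrix.mulVec_mulVec, h1, Matrix.one_mulVec]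
  have hdet : M.det = -1 := by
    have := congrArg Matrix.det hAS
    rw [Matrix.det_mul, Matrix.det_mul, hA] at this
    have h3 : S.det * (M.det - -1) = 0 := by rw [mul_sub, ← this]; ring
    rcases mul_eq_zero.mp h3 with h4 | h4
    · exact absurd h4 hS
    · exact sub_eq_zero.mp h4
  refine pi3_conj hS hAS ?_
  have a0 := congrFun m0 0
  have a1 := congrFun m0 1
  have a2 := congrFun m0 2
  have b0 := congrFun m1 0
  have b1 := congrFun m1 1
  have b2 := congrFun m1 2
  simp [Matrix.mulVec, dotProduct, Fin.sum_univ_three] at a0 a1 a2 b0 b1 b2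
  have e0 : M 0 2 = -1 := by
    rw [Matrix.det_fin_three, a0, a1, a2, b0, b1, b2] at hdet
    linear_combination hdet
  have : M = !![0, 0, -1; 1, 0, M 1 2; 0, 1, M 2 2] := by
    ext i j
    fin_cases i <;> fin_cases j <;> simp [a0, a1, a2, b0, b1, b2, e0]
  rw [this]
  exact pi3_companion _ _

lemma pi3_block (α g p : F) (h : α * g = 1) :
    !![α, 0, 0; 0, 0, g; 0, 1, p] ∈ ProdInv3 F 3 := by
  by_cases hg : g = 1
  · subst hg
    have : α = 1 := by simpa using h
    subst this
    refine ⟨!![1, 0, 0; 0, 0, 1; 0, 1, 0], !![1, 0, 0; 0, 1, 0; 0, 0, -1],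
      !![1, 0, 0; 0, 1, p; 0, 0, -1], ?_, ?_, ?_, ?_⟩ <;>
    · ext i j
      fin_cases i <;> fin_cases j <;> simp [Matrix.mul_apply, Fin.sum_univ_three]
  · obtain ⟨k, hk⟩ : ∃ k, k * (1 - g) = g * p := by
      have : 1 - g ≠ 0 := sub_ne_zero.mpr (Ne.symm hg)
      exact ⟨g * p / (1 - g), by field_simp⟩
    refine ⟨!![0, α, -k * α; g, 0, k; 0, 0, 1], !![0, 1, -k; 1, 0, k; 0, 0, 1],
      !![1, 0, 0; 0, -p, 1 - p ^ 2; 0, 1, p], ?_, ?_, ?_, ?_⟩ <;>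
    · ext i j
      fin_cases i <;> fin_cases j <;> simp [Matrix.mul_apply, Fin.sum_univ_three] <;> grind

lemma pi3_second_col (M : Matrix (Fin 3) (Fin 3) F) (hdet : M.det = -1)
    (h0 : M 0 1 = 0) (h1 : M 1 1 = 0) (h2 : M 2 1 = 1) : M ∈ ProdInv3 F 3 := by
  by_cases hb : M 0 2 = 0
  · by_cases hx : M 1 0 + M 0 0 * M 2 0 = 0
    · have hd := hdet
      rw [Matrix.det_fin_three, h0, h1, h2, hb] at hd
      refine pi3_conj (S := !![1, 0, 0; -M 2 0, 1, 0; 0, 0, 1])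
        (M := !![M 0 0, 0, 0; 0, 0, M 1 2; 0, 1, M 2 2]) ?_ ?_ (pi3_block _ _ _ ?_)
      · simp [Matrix.det_fin_three]
      · ext i j
        fin_cases i <;> fin_cases j <;>
          simp [Matrix.mul_apply, Fin.sum_univ_three, h0, h1, h2, hb] <;> grind
      · linear_combination -hd
    · refine pi3_cyclic M hdet ![1, -M 2 0, 0] ?_
      simp [Matrix.det_fin_three, Matrix.mulVec, dotProduct, Fin.sum_univ_three, Matrix.mul_apply, h0, h1, h2, hb]
      grind
  · refine pi3_cyclic M hdet ![0, 1, 0] ?_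
    simp [Matrix.det_fin_three, Matrix.mulVec, dotProduct, Fin.sum_univ_three, Matrix.mul_apply, h0, h1, h2, hb]

lemma exists_indep (A : Matrix (Fin 3) (Fin 3) F) (hA : ¬ ∃ c : F, A = c • 1) :
    ∃ w v : Fin 3 → F, (Matrix.of ![w, v, A *ᵥ v]).det ≠ 0 := by
  by_contra! hcon
  apply hA
  have p1 := hcon ![1, 0, 0] ![0, 1, 0]
  have p2 := hcon ![1, 0, 0] ![0, 0, 1]
  have p3 := hcon ![0, 1, 0] ![1, 0, 0]
  have p4 := hcon ![0, 1, 0] ![0, 0, 1]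
  have p5 := hcon ![0, 0, 1] ![1, 0, 0]
  have p6 := hcon ![0, 0, 1] ![0, 1, 0]
  have p7 := hcon ![1, 0, 0] ![0, 1, 1]
  have p8 := hcon ![0, 1, 0] ![1, 0, 1]
  simp [Matrix.det_fin_three, Matrix.mulVec, dotProduct, Fin.sum_univ_three] at p1 p2 p3 p4 p5 p6 p7 p8
  refine ⟨A 0 0, ?_⟩
  ext i j
  fin_cases i <;> fin_cases j <;> simp <;> grind

lemma pi3_nonscalar_neg (A : Matrix (Fin 3) (Fin 3) F) (hA : ¬ ∃ c : F, A = c • 1)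
    (hdA : A.det = -1) : A ∈ ProdInv3 F 3 := by
  obtain ⟨w, v, h⟩ := exists_indep A hA
  set S : Matrix (Fin 3) (Fin 3) F := (Matrix.of ![w, v, A *ᵥ v])ᵀ with hSdef
  have hS : S.det ≠ 0 := by rw [hSdef, Matrix.det_transpose]; exact h
  have hu : IsUnit S.det := isUnit_iff_ne_zero.mpr hS
  have h1 : S⁻¹ * S = 1 := Matrix.nonsing_inv_mul S hu
  have h2 : S * S⁻¹ = 1 := Matrix.mul_nonsing_inv S hu
  set M := S⁻¹ * A * S with hM
  have hAS : A * S = S * M := by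
    rw [hM, Matrix.mul_assoc, ← Matrix.mul_assoc S, h2, Matrix.one_mul]
  have c1 : S *ᵥ ![0, 1, 0] = v := by
    ext i; simp [hSdef, Matrix.mulVec, dotProduct, Fin.sum_univ_three]
  have c2 : S *ᵥ ![0, 0, 1] = A *ᵥ v := by
    ext i; simp [hSdef, Matrix.mulVec, dotProduct, Fin.sum_univ_three]
  have m1 : M *ᵥ ![0, 1, 0] = ![0, 0, 1] := by
    rw [hM, Matrix.mul_assoc, ← Matrix.mulVec_mulVec, ← Matrix.mulVec_mulVec, c1, ← c2,
      Matrix.mulVec_mulVec, h1, Matrix.one_mulVec]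
  have hdet : M.det = -1 := by
    have := congrArg Matrix.det hAS
    rw [Matrix.det_mul, Matrix.det_mul, hdA] at this
    have h3 : S.det * (M.det - -1) = 0 := by rw [mul_sub, ← this]; ring
    rcases mul_eq_zero.mp h3 with h4 | h4
    · exact absurd h4 hS
    · exact sub_eq_zero.mp h4
  have b0 := congrFun m1 0
  have b1 := congrFun m1 1
  have b2 := congrFun m1 2
  simp [Matrix.mulVec, dotProduct, Fin.sum_univ_three] at b0 b1 b2
  exact pi3_conj hS hAS (pi3_second_col M hdet b0 b1 b2)

lemma pi3_nonscalar (A : Matrix (Fin 3) (Fin 3) F) (hA : ¬ ∃ c : F, A = c • 1)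
    (hdA : A.det = 1 ∨ A.det = -1) : A ∈ ProdInv3 F 3 := by
  rcases hdA with h | h
  · rw [← neg_neg A]
    refine pi3_neg (pi3_nonscalar_neg (-A) ?_ ?_)
    · rintro ⟨c, hc⟩
      exact hA ⟨-c, by rw [neg_smul, ← hc, neg_neg]⟩
    · rw [Matrix.det_neg, h]; norm_num
  · exact pi3_nonscalar_neg A hA h

lemma trace_ne_zero (h3 : (3 : F) ≠ 0) (J : Matrix (Fin 3) (Fin 3) F) (hJ : J * J = 1) :
    J.trace ≠ 0 := by
  intro ht
  have h1 : J.adjugate = J.det • J := by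
    calc J.adjugate = J.adjugate * (J * J) := by rw [hJ, Matrix.mul_one]
      _ = J.det • J := by rw [← Matrix.mul_assoc, Matrix.adjugate_mul]; simp
  have h2 : J.adjugate.trace = 0 := by rw [h1, Matrix.trace_smul, ht]; simp
  have h4 : J.trace ^ 2 = (J * J).trace + 2 * J.adjugate.trace := by
    simp [Matrix.trace, Matrix.adjugate_fin_three, Matrix.mul_apply, Fin.sum_univ_three]
    ring
  rw [hJ, h2, ht, Matrix.trace_one] at h4
  apply h3
  simpa using h4.symm

lemma scalar_sq (h3 : (3 : F) ≠ 0) (c : F) (hc : c • (1 : Matrix (Fin 3) (Fin 3) F) ∈ ProdInv3 F 3) :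
    c ^ 2 = 1 := by
  obtain ⟨J, K, L, hJ, hK, hL, h⟩ := hc
  have hJK : J * K = c • L := by
    calc J * K = (J * K * L) * L := by rw [Matrix.mul_assoc _ L, hL, Matrix.mul_one]
      _ = c • L := by rw [← h]; simp
  have hL2 : c • (K * J) = L := by
    calc c • (K * J) = K * J * (c • 1) := by simp
      _ = K * (J * J) * K * L := by rw [h]; simp only [Matrix.mul_assoc]
      _ = L := by rw [hJ, Matrix.mul_one, hK, Matrix.one_mul]
  have t1 := congrArg Matrix.trace hJK
  have t2 := congrArg Matrix.trace hL2
  rw [Matrix.trace_smul, smul_eq_mul] at t1 t2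
  rw [Matrix.trace_mul_comm, t1] at t2
  have := trace_ne_zero h3 L hL
  apply mul_right_cancel₀ this
  linear_combination t2

lemma pi3_det {A : Matrix (Fin 3) (Fin 3) F} (h : A ∈ ProdInv3 F 3) : A.det = 1 ∨ A.det = -1 := by
  obtain ⟨J, K, L, hJ, hK, hL, rfl⟩ := h
  have a := congrArg Matrix.det hJ
  have b := congrArg Matrix.det hK
  have c := congrArg Matrix.det hL
  rw [Matrix.det_mul, Matrix.det_one] at a b c
  apply mul_self_eq_one_iff.mp
  rw [Matrix.det_mul, Matrix.det_mul]
  calc _ = (J.det * J.det) * (K.det * K.det) * (L.det * L.det) := by ring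
    _ = 1 := by rw [a, b, c]; ring

lemma exists_omega (hred : ¬ Irreducible (X ^ 2 + X + 1 : Polynomial F)) :
    ∃ ω : F, ω ^ 2 + ω + 1 = 0 := by
  by_contra! hcon
  apply hred
  have hd : (X ^ 2 + X + 1 : Polynomial F).natDegree = 2 := by compute_degree!
  refine (Polynomial.irreducible_iff_roots_eq_zero_of_degree_le_three (by omega) (by omega)).mpr ?_
  rw [Multiset.eq_zero_iff_forall_notMem]
  intro a ha
  have := Polynomial.isRoot_of_mem_roots ha
  apply hcon a
  simpa [Polynomial.IsRoot] using this

end helpers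

theorem stmt14 (F : Type*) [Field F] (hchar2 : ringChar F ≠ 2) (hchar3 : ringChar F ≠ 3)
    (hred : ¬ Irreducible (X ^ 2 + X + 1 : Polynomial F)) :
    LambdaSet F 3 = {1, -1} := by
  have h3 : (3 : F) ≠ 0 := by
    intro h
    have hdvd : ringChar F ∣ 3 := (ringChar.spec F 3).mp (by exact_mod_cast h)
    rcases (Nat.dvd_prime Nat.prime_three).mp hdvd with h1 | h1
    · have := (ringChar.spec F 1).mpr (by rw [h1])
      simp at this
    · exact hchar3 h1
  obtain ⟨ω, hω⟩ := exists_omega hred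
  ext P
  simp only [Set.mem_insert_iff, Set.mem_singleton_iff]
  constructor
  · intro hP
    have hPC : P ∈ ProdInv3 F 3 := by simpa using hP 1 pi3_one
    by_cases hs : ∃ c : F, P = c • 1
    · obtain ⟨c, rfl⟩ := hs
      have := scalar_sq h3 c hPC
      rcases mul_self_eq_one_iff.mp ((sq c).symm.trans this) with h | h
      · left; simp [h]
      · right; simp [h]
    · exfalso
      have hd := pi3_det hPC
      have hd0 : P.det ≠ 0 := by rcases hd with h | h <;> simp [h]
      have hu : IsUnit P.det := isUnit_iff_ne_zero.mpr hd0
      have hω3 : ω ^ 3 = 1 := by linear_combination (ω - 1) * hω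
      have hω0 : ω ≠ 0 := by rintro rfl; simp at hω
      have hB : ω • P⁻¹ ∈ ProdInv3 F 3 := by
        apply pi3_nonscalar
        · rintro ⟨c, hc⟩
          apply hs
          have h5 : ω • (1 : Matrix (Fin 3) (Fin 3) F) = c • P := by
            calc ω • (1 : Matrix (Fin 3) (Fin 3) F) = (ω • P⁻¹) * P := by
                  rw [Matrix.smul_mul, Matrix.nonsing_inv_mul P hu]
              _ = c • P := by rw [hc]; simp
          have hc0 : c ≠ 0 := by
            rintro rfl
            have := congrFun (congrFun h5 0) 0
            simp at this
            exact hω0 this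
          refine ⟨c⁻¹ * ω, ?_⟩
          rw [mul_smul, h5, smul_smul, inv_mul_cancel₀ hc0, one_smul]
        · rw [Matrix.det_smul, Fintype.card_fin, hω3, one_mul, Matrix.det_nonsing_inv]
          rcases hd with h | h <;> simp [h]
      have h6 := hP _ hB
      rw [Matrix.mul_smul, Matrix.mul_nonsing_inv P hu] at h6
      have h7 := scalar_sq h3 ω h6
      apply h3
      linear_combination (2 - ω) * hω + (ω - 1) * h7
  · rintro (rfl | rfl)
    · intro A hA; simpa using hA
    · intro A hA; simpa using pi3_neg hA
end

section
/- Let F be a field with char(F) ≠ 2 such that C_3 is a proper subset of D_3, and let T : M_3(F) → M_3(F) be a bijective linear map. Then T(C_3) ⊆ C_3 if and only if there exist a scalar α ∈ {−1, 1} and an invertible matrix P ∈ M_3(F) such that either T(X) = α·P·X·P⁻¹ for all X ∈ M_3(F), or T(X) = α·P·Xᵗ·P⁻¹ for all X ∈ M_3(F). -/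
open Matrix

/-- The set of matrices that are products of four involutions. -/
def ProdInv4 (F : Type*) [Field F] (n : ℕ) : Set (Matrix (Fin n) (Fin n) F) :=
  {A | ∃ J₁ J₂ J₃ J₄ : Matrix (Fin n) (Fin n) F,
    J₁ * J₁ = 1 ∧ J₂ * J₂ = 1 ∧ J₃ * J₃ = 1 ∧ J₄ * J₄ = 1 ∧ A = J₁ * J₂ * J₃ * J₄}


namespace PI

variable {F : Type*} [Field F]

abbrev M3 (F : Type*) := Matrix (Fin 3) (Fin 3) F

lemma sim {A M Q : M3 F} (hQ : Q.det ≠ 0) (h : A * Q = Q * M) (hM : M ∈ ProdInv3 F 3) :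
    A ∈ ProdInv3 F 3 := by
  obtain ⟨J₁, J₂, J₃, h1, h2, h3, rfl⟩ := hM
  have hu : IsUnit Q.det := isUnit_iff_ne_zero.mpr hQ
  have key : ∀ J : M3 F, J * J = 1 → (Q * J * Q⁻¹) * (Q * J * Q⁻¹) = 1 := by
    intro J hJ
    calc (Q * J * Q⁻¹) * (Q * J * Q⁻¹) = Q * J * (Q⁻¹ * Q) * J * Q⁻¹ := by noncomm_ring
      _ = Q * (J * J) * Q⁻¹ := by rw [Matrix.nonsing_inv_mul _ hu]; noncomm_ring
      _ = 1 := by rw [hJ, mul_one, Matrix.mul_nonsing_inv _ hu]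
  refine ⟨_, _, _, key _ h1, key _ h2, key _ h3, ?_⟩
  calc A = A * (Q * Q⁻¹) := by rw [Matrix.mul_nonsing_inv _ hu, mul_one]
    _ = Q * J₁ * 1 * J₂ * 1 * J₃ * Q⁻¹ := by rw [← mul_assoc, h]; noncomm_ring
    _ = Q * J₁ * (Q⁻¹ * Q) * J₂ * (Q⁻¹ * Q) * J₃ * Q⁻¹ := by rw [Matrix.nonsing_inv_mul _ hu]
    _ = _ := by noncomm_ring

lemma det_sq {A : M3 F} (hA : A ∈ ProdInv3 F 3) : A.det ^ 2 = 1 := by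
  obtain ⟨J₁, J₂, J₃, h1, h2, h3, rfl⟩ := hA
  have e1 := congrArg Matrix.det h1
  have e2 := congrArg Matrix.det h2
  have e3 := congrArg Matrix.det h3
  simp only [det_mul, det_one] at *
  grind

lemma det_sq4 {A : M3 F} (hA : A ∈ ProdInv4 F 3) : A.det ^ 2 = 1 := by
  obtain ⟨J₁, J₂, J₃, J₄, h1, h2, h3, h4, rfl⟩ := hA
  have e1 := congrArg Matrix.det h1
  have e2 := congrArg Matrix.det h2
  have e3 := congrArg Matrix.det h3
  have e4 := congrArg Matrix.det h4
  simp only [det_mul, det_one] at *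
  grind

lemma transpose_mem {A : M3 F} (hA : A ∈ ProdInv3 F 3) : Aᵀ ∈ ProdInv3 F 3 := by
  obtain ⟨J₁, J₂, J₃, h1, h2, h3, rfl⟩ := hA
  refine ⟨J₃ᵀ, J₂ᵀ, J₁ᵀ, ?_, ?_, ?_, ?_⟩
  · rw [← transpose_mul, h3, transpose_one]
  · rw [← transpose_mul, h2, transpose_one]
  · rw [← transpose_mul, h1, transpose_one]
  · simp [transpose_mul, mul_assoc]

lemma smul_mem {A : M3 F} (hA : A ∈ ProdInv3 F 3) {c : F} (hc : c * c = 1) :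
    c • A ∈ ProdInv3 F 3 := by
  obtain ⟨J₁, J₂, J₃, h1, h2, h3, rfl⟩ := hA
  refine ⟨c • J₁, J₂, J₃, ?_, h2, h3, ?_⟩
  · rw [smul_mul_smul_comm, hc, h1, one_smul]
  · simp

lemma one_mem : (1 : M3 F) ∈ ProdInv3 F 3 := ⟨1, 1, 1, by simp⟩

/-- companion case -/
lemma companion_mem (d s z : F) (hd : d ^ 2 = 1) :
    (!![0, 0, d; 1, 0, s; 0, 1, z] : M3 F) ∈ ProdInv3 F 3 := by
  -- B = [[0,0,d],[-1,-z,-z^2],[0,1,z]], J = [[-1,a,b],[0,1,0],[0,0,1]]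
  have hB : (!![0, 0, d; 1, 0, s; 0, 1, z] : M3 F) =
    !![0, 0, d; -1, -z, -z^2; 0, 1, z] * !![-1, -z, -z^2 - s; 0, 1, 0; 0, 0, 1] := by
    ext i j; fin_cases i <;> fin_cases j <;> simp [Matrix.mul_apply, Fin.sum_univ_three]
  refine ⟨!![1, 0, 0; 0, d * z, d * z^2 - d; 0, -d, -d * z],
    !![1, 0, 0; 0, d * z, d * z^2 - d; 0, -d, -d * z] * !![0, 0, d; -1, -z, -z^2; 0, 1, z],
    !![-1, -z, -z^2 - s; 0, 1, 0; 0, 0, 1], ?_, ?_, ?_, ?_⟩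
  · ext i j; fin_cases i <;> fin_cases j <;> simp [Matrix.mul_apply, Fin.sum_univ_three] <;> grind
  · ext i j; fin_cases i <;> fin_cases j <;> simp [Matrix.mul_apply, Fin.sum_univ_three] <;> grind
  · ext i j; fin_cases i <;> fin_cases j <;> simp [Matrix.mul_apply, Fin.sum_univ_three] <;> grind
  · rw [← mul_assoc, hB]
    congr 1
    ext i j; fin_cases i <;> fin_cases j <;> simp [Matrix.mul_apply, Fin.sum_univ_three] <;> grind

def krylov (A : M3 F) (u : Fin 3 → F) : M3 F :=
  (Matrix.of ![u, A *ᵥ u, A *ᵥ (A *ᵥ u)])ᵀ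

lemma cyclic_mem {A : M3 F} (hA : A.det ^ 2 = 1) (u : Fin 3 → F) (hu : (krylov A u).det ≠ 0) :
    A ∈ ProdInv3 F 3 := by
  have hU : IsUnit (krylov A u).det := isUnit_iff_ne_zero.mpr hu
  set Q := krylov A u with hQ
  set c := Q⁻¹ *ᵥ (A *ᵥ (A *ᵥ (A *ᵥ u))) with hc
  have hc' : Q *ᵥ c = A *ᵥ (A *ᵥ (A *ᵥ u)) := by
    rw [hc, mulVec_mulVec, Matrix.mul_nonsing_inv _ hU, one_mulVec]
  have h : A * Q = Q * !![0, 0, c 0; 1, 0, c 1; 0, 1, c 2] := by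
    have e0 := congrFun hc'
    ext i j
    have e := e0 i
    fin_cases j
    · simp [hQ, krylov, Matrix.mul_apply, Fin.sum_univ_three, mulVec, dotProduct]
    · simp [hQ, krylov, Matrix.mul_apply, Fin.sum_univ_three, mulVec, dotProduct]
      ring
    · rw [show (A * Q) i ((fun i => i) ⟨2, by decide⟩) = (A *ᵥ (A *ᵥ (A *ᵥ u))) i by
        simp [hQ, krylov, Matrix.mul_apply, Fin.sum_univ_three, mulVec, dotProduct]; ring, ← e]
      simp [Matrix.mul_apply, Fin.sum_univ_three, mulVec, dotProduct]
  have hd := congrArg Matrix.det h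
  rw [det_mul, det_mul, mul_comm] at hd
  have hd' := mul_left_cancel₀ hu hd
  have : A.det = c 0 := by rw [hd']; simp [det_fin_three]
  exact sim hu h (companion_mem _ _ _ (by rw [← this, hA]))

lemma derog_mem (h2 : (2 : F) ≠ 0) (r z : F) (hd : (z * (z^2 - r * z)) ^ 2 = 1) :
    (!![0, z^2 - r * z, 0; 1, r, 0; 0, 0, z] : M3 F) ∈ ProdInv3 F 3 := by
  have hz : z ≠ 0 := by rintro rfl; simp at hd
  by_cases hz1 : z ^ 2 = 1
  · refine ⟨!![0, 1, 0; 1, 0, 0; 0, 0, z], !![1, r, 0; 0, z^2 - r*z, 0; 0, 0, 1], 1, ?_, ?_, by simp, ?_⟩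
    · ext i j; fin_cases i <;> fin_cases j <;> simp [Matrix.mul_apply, Fin.sum_univ_three] <;> grind
    · have hr : r = 0 ∨ z^2 - r * z = -1 := by
        have : r * (r - 2 * z) * z^2 = 0 := by grind
        rcases mul_eq_zero.mp this with h | h
        · rcases mul_eq_zero.mp h with h | h
          · exact Or.inl h
          · right; grind
        · grind
      have hpp : (z^2 - r*z)*(z^2 - r*z) = 1 := by grind
      ext i j; fin_cases i <;> fin_cases j <;> simp [Matrix.mul_apply, Fin.sum_univ_three, hpp] <;>
        rcases hr with h | h <;> grind
    · ext i j; fin_cases i <;> fin_cases j <;> simp [Matrix.mul_apply, Fin.sum_univ_three]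
  · -- e = p z = ±1, B = [[0,p],[-1,1/z+e]] ⊕ z = A J
    set e := z * (z^2 - r*z) with he
    have hee : e * e = 1 := by rw [← sq, hd]
    have hp : z^2 - r*z = e * z⁻¹ := by rw [he]; field_simp
    rw [hp]
    set y := z⁻¹ with hy
    have hyz : y * z = 1 := by rw [hy]; field_simp
    have hD : (e - y) ≠ 0 := by
      intro h
      apply hz1
      have : e = y := by grind
      grind
    set D := (e - y)⁻¹ with hDD
    have hD1 : D * (e - y) = 1 := by rw [hDD]; field_simp
    -- Q = [[e,y,0],[1,1,0],[0,0,1]]; K swaps first and third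
    set Q : M3 F := !![e, y, 0; 1, 1, 0; 0, 0, 1] with hQ
    have hQd : Q.det ≠ 0 := by simpa [hQ, det_fin_three] using hD
    set J : M3 F := !![-1, y + e - r, 0; 0, 1, 0; 0, 0, 1] with hJ
    set Qi : M3 F := !![D, -D * y, 0; -D, D * e, 0; 0, 0, 1] with hQi
    have hQQ : Q * Qi = 1 := by
      ext i j; fin_cases i <;> fin_cases j <;> simp [hQ, hQi, Matrix.mul_apply, Fin.sum_univ_three] <;> grind
    set K1 : M3 F := !![0, 0, 1; 0, 1, 0; 1, 0, 0]
    set K2 : M3 F := !![0, 0, z; 0, e, 0; y, 0, 0]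
    have hK : (!![0, e * y, 0; -1, y + e, 0; 0, 0, z] : M3 F) * Q = Q * (K1 * K2) := by
      ext i j; fin_cases i <;> fin_cases j <;> simp [hQ, K1, K2, Matrix.mul_apply, Fin.sum_univ_three] <;> grind
    have hA : (!![0, e * y, 0; 1, r, 0; 0, 0, z] : M3 F) =
        (!![0, e * y, 0; -1, y + e, 0; 0, 0, z] : M3 F) * J := by
      ext i j; fin_cases i <;> fin_cases j <;> simp [hJ, Matrix.mul_apply, Fin.sum_univ_three] 
    refine sim (Q := Q) (M := K1 * K2 * (Qi * J * Q)) hQd ?_ ⟨K1, K2, Qi * J * Q, ?_, ?_, ?_, rfl⟩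
    · rw [hA]
      calc _ = (!![0, e * y, 0; -1, y + e, 0; 0, 0, z] : M3 F) * (Q * Qi) * J * Q := by rw [hQQ, mul_one]
        _ = ((!![0, e * y, 0; -1, y + e, 0; 0, 0, z] : M3 F) * Q) * (Qi * J * Q) := by noncomm_ring
        _ = _ := by rw [hK, mul_assoc Q]
    · ext i j; fin_cases i <;> fin_cases j <;> simp [K1, Matrix.mul_apply, Fin.sum_univ_three]
    · ext i j; fin_cases i <;> fin_cases j <;> simp [K2, Matrix.mul_apply, Fin.sum_univ_three] <;> grind
    · have hJJ : J * J = 1 := by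
        ext i j; fin_cases i <;> fin_cases j <;> simp [hJ, Matrix.mul_apply, Fin.sum_univ_three]
      calc _ = Qi * (J * (Q * Qi) * J) * Q := by noncomm_ring
        _ = 1 := by rw [hQQ, mul_one, hJJ, mul_one]; exact mul_eq_one_comm.mp hQQ

lemma hess_mem (h2 : (2 : F) ≠ 0) (p q r s w z : F)
    (hd : (!![0, p, q; 1, r, s; 0, w, z] : M3 F).det ^ 2 = 1) :
    (!![0, p, q; 1, r, s; 0, w, z] : M3 F) ∈ ProdInv3 F 3 := by
  by_cases hw : w = 0
  swap
  · refine cyclic_mem hd ![1, 0, 0] ?_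
    simpa [krylov, det_fin_three, mulVec, dotProduct, Fin.sum_univ_three] using hw
  subst hw
  by_cases hq : q + z * s = 0
  swap
  · refine cyclic_mem hd ![-s, 0, 1] ?_
    have : (q + z * s) ^ 2 ≠ 0 := pow_ne_zero _ hq
    simp [krylov, det_fin_three, mulVec, dotProduct, Fin.sum_univ_three]
    grind
  by_cases hp : z ^ 2 - r * z - p = 0
  swap
  · refine cyclic_mem hd ![1 - s, 0, 1] ?_
    simp [krylov, det_fin_three, mulVec, dotProduct, Fin.sum_univ_three]
    grind
  have hp' : p = z^2 - r*z := by grind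
  have hq' : q = -z * s := by grind
  subst hp' hq'
  refine sim (Q := !![1, 0, -s; 0, 1, 0; 0, 0, 1]) (by simp [det_fin_three]) ?_
    (derog_mem h2 r z ?_)
  · ext i j; fin_cases i <;> fin_cases j <;> simp [Matrix.mul_apply, Fin.sum_univ_three] <;> grind
  · simp [det_fin_three] at hd
    grind

lemma mem_of_det (h2 : (2 : F) ≠ 0) {A : M3 F} (hd : A.det ^ 2 = 1) (hs : ∀ c : F, A ≠ c • 1) :
    A ∈ ProdInv3 F 3 := by
  by_cases H : ∀ u w : Fin 3 → F, ((Matrix.of ![u, A *ᵥ u, w])ᵀ).det = 0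
  · exfalso
    have h1 := H ![1,0,0] ![0,1,0]
    have h2 := H ![1,0,0] ![0,0,1]
    have h3 := H ![0,1,0] ![1,0,0]
    have h4 := H ![0,1,0] ![0,0,1]
    have h5 := H ![0,0,1] ![1,0,0]
    have h6 := H ![0,0,1] ![0,1,0]
    have h7 := H ![1,1,0] ![0,0,1]
    have h8 := H ![1,0,1] ![0,1,0]
    simp [det_fin_three, mulVec, dotProduct, Fin.sum_univ_three] at h1 h2 h3 h4 h5 h6 h7 h8
    apply hs (A 0 0)
    ext i j; fin_cases i <;> fin_cases j <;> simp <;> grind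
  push Not at H
  obtain ⟨u, w, h⟩ := H
  set Q := (Matrix.of ![u, A *ᵥ u, w])ᵀ with hQ
  have hU : IsUnit Q.det := isUnit_iff_ne_zero.mpr h
  set M := Q⁻¹ * A * Q with hM
  have hAQ : A * Q = Q * M := by
    rw [hM, ← mul_assoc, ← mul_assoc, Matrix.mul_nonsing_inv _ hU, one_mul]
  have c0 : M *ᵥ ![1,0,0] = ![0,1,0] := by
    have e1 : Q *ᵥ ![1,0,0] = u := by
      ext i; simp [hQ, mulVec, dotProduct, Fin.sum_univ_three]
    have e2 : Q *ᵥ ![0,1,0] = A *ᵥ u := by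
      ext i; simp [hQ, mulVec, dotProduct, Fin.sum_univ_three]
    rw [hM, ← mulVec_mulVec, ← mulVec_mulVec, e1, ← e2, mulVec_mulVec,
      Matrix.nonsing_inv_mul _ hU, one_mulVec]
  have hMM : M = !![0, M 0 1, M 0 2; 1, M 1 1, M 1 2; 0, M 2 1, M 2 2] := by
    have f0 := congrFun c0 0
    have f1 := congrFun c0 1
    have f2 := congrFun c0 2
    simp [mulVec, dotProduct, Fin.sum_univ_three] at f0 f1 f2
    ext i j; fin_cases i <;> fin_cases j <;> simp [f0, f1, f2]
  have hMd : M.det = A.det := by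
    have := congrArg Matrix.det hAQ
    rw [det_mul, det_mul, mul_comm] at this
    exact (mul_left_cancel₀ h this).symm
  refine sim h hAQ ?_
  rw [← hMd, hMM] at hd
  rw [hMM]
  exact hess_mem h2 _ _ _ _ _ _ hd

lemma scalar_not (hF3 : (3 : F) ≠ 0) {c : F} (hc : c • (1 : M3 F) ∈ ProdInv3 F 3) :
    c ^ 2 = 1 := by
  obtain ⟨J₁, J₂, J₃, h1, h2, h3, h⟩ := hc
  have hc0 : c ≠ 0 := by
    rintro rfl
    have := det_sq (A := (0 : M3 F)) ⟨J₁, J₂, J₃, h1, h2, h3, by simpa using h⟩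
    simp at this
  have e1 : J₁ * J₂ = c • J₃ := by
    calc J₁ * J₂ = J₁ * J₂ * (J₃ * J₃) := by rw [h3, mul_one]
      _ = (J₁ * J₂ * J₃) * J₃ := by noncomm_ring
      _ = _ := by rw [← h]; simp
  have e2 : c • (J₂ * J₁) = J₃ := by
    calc c • (J₂ * J₁) = J₂ * J₁ * (c • 1) := by simp
      _ = J₂ * (J₁ * J₁) * J₂ * J₃ := by rw [h]; noncomm_ring
      _ = J₃ := by rw [h1, mul_one, h2, one_mul]
  have t : c * (c * J₃.trace) = J₃.trace := by
    conv_rhs => rw [← e2, trace_smul, trace_mul_comm, e1, trace_smul]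
    simp
  by_cases ht : J₃.trace = 0
  · exfalso
    have hd : J₃.det * J₃.det = 1 := by rw [← det_mul, h3, det_one]
    have hadj : J₃.adjugate = J₃.det • J₃ := by
      calc J₃.adjugate = J₃ * J₃ * J₃.adjugate := by rw [h3, one_mul]
        _ = J₃ * (J₃ * J₃.adjugate) := by noncomm_ring
        _ = _ := by rw [mul_adjugate]; simp
    have hch : J₃.adjugate = J₃ * J₃ - J₃.trace • J₃ + J₃.adjugate.trace • 1 := by
      rw [adjugate_fin_three]
      ext i j; fin_cases i <;> fin_cases j <;>
        simp [Matrix.mul_apply, Fin.sum_univ_three, trace_fin_three] <;> ring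
    rw [hadj, h3, ht, trace_smul, ht] at hch
    simp at hch
    have := congrArg Matrix.trace hch
    rw [trace_smul, ht] at this
    simp at this
    exact hF3 this.symm
  · have : (c ^ 2 - 1) * J₃.trace = 0 := by linear_combination t
    rcases mul_eq_zero.mp this with h | h
    · linear_combination h
    · exact absurd h ht

end PI

namespace PI
variable {F : Type*} [Field F]

/-- a cubic whose square is one at seven points is constant -/
lemma cubic_const (h2 : (2 : F) ≠ 0) {w : F} (hw : w ^ 2 + w + 1 = 0) (hw1 : w ≠ 1)
    (a b c d : F) (h : ∀ t : F, (a + b * t + c * t ^ 2 + d * t ^ 3) ^ 2 = 1) :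
    b = 0 ∧ c = 0 ∧ d = 0 := by
  have hw3 : w ^ 3 = 1 := by linear_combination (w - 1) * hw
  have h3 : (3 : F) ≠ 0 := by
    intro h3
    apply hw1
    have : (w - 1) ^ 2 = 0 := by linear_combination hw - w * h3
    have := pow_eq_zero_iff (two_ne_zero) |>.mp this
    linear_combination this
  have ev : ∀ t : F, a ^ 2 + (2 * a * c + b ^ 2) * t ^ 2 + (c ^ 2 + 2 * b * d) * (t ^ 2) ^ 2
      + d ^ 2 * (t ^ 2) ^ 3 = 1 := by
    intro t
    apply mul_left_cancel₀ h2
    linear_combination h t + h (-t)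
  generalize hq : 2 * a * c + b ^ 2 = q at ev
  generalize hr : c ^ 2 + 2 * b * d = r at ev
  have t0 := ev 0
  have t1 := ev 1
  have t2 := ev w
  have t3 := ev (w ^ 2)
  have e2 : w ^ 2 = - w - 1 := by linear_combination hw
  have e4 : (w ^ 2) ^ 2 = w := by linear_combination w * hw3
  have e6 : (w ^ 2) ^ 3 = 1 := by linear_combination (w ^ 3 + 1) * hw3
  have e8 : w ^ 3 = 1 := hw3
  rw [e4, e6, e2] at t2
  rw [e4, e2, e8] at t3
  have hs : d ^ 2 = 0 := by
    have : 3 * d ^ 2 = 0 := by linear_combination t1 + t2 + t3 - 3 * t0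
    simpa [h3] using this
  have hd : d = 0 := by simpa using hs
  have hqr : q = -r := by linear_combination t1 - t0 - hs
  subst hqr
  have hr0 : r = 0 := by
    have : 3 * r = 0 := by linear_combination (2 * w + 1) * (t3 - t0 - hs) + 4 * r * hw
    simpa [h3] using this
  subst hd hr0
  have hc : c = 0 := by simpa using hr
  subst hc
  have hb : b = 0 := by simpa using hq
  exact ⟨hb, rfl, rfl⟩

lemma det_add_smul (X R : M3 F) (t : F) : (X + t • R).det =
    X.det + (X.adjugate * R).trace * t + (X * R.adjugate).trace * t ^ 2 + R.det * t ^ 3 := by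
  simp only [adjugate_fin_three, det_fin_three, trace_fin_three, Matrix.mul_apply,
    Fin.sum_univ_three]
  simp
  ring

/-- weak preserver property -/
def WP (S : M3 F →ₗ[F] M3 F) (G : M3 F) : Prop :=
  ∀ X : M3 F, X.det ^ 2 = 1 → (∀ c : F, X ≠ c • G) → (S X).det ^ 2 = 1

lemma good (h2 : (2 : F) ≠ 0) {w : F} (hw : w ^ 2 + w + 1 = 0) (hw1 : w ≠ 1)
    {S : M3 F →ₗ[F] M3 F} {G : M3 F} (hS : WP S G) (R X : M3 F)
    (hX : ∀ t : F, (X + t • R).det ^ 2 = 1) (hX' : ∀ t c : F, X + t • R ≠ c • G) :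
    (S X * (S R).adjugate).trace = 0 ∧ (S R).det = 0 := by
  have := cubic_const h2 hw hw1 (S X).det ((S X).adjugate * S R).trace
    (S X * (S R).adjugate).trace (S R).det (by
      intro t
      rw [← det_add_smul, ← map_smul, ← map_add]
      exact hS _ (hX t) (hX' t))
  exact this.2

def E (i j : Fin 3) : M3 F := Matrix.single i j 1

lemma good_fam (h2 : (2 : F) ≠ 0) {w : F} (hw : w ^ 2 + w + 1 = 0) (hw1 : w ≠ 1)
    {S : M3 F →ₗ[F] M3 F} {G : M3 F} (hS : WP S G) (X : M3 F) (i k l : Fin 3) (hi : i ≠ 0)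
    (hk : ¬ (k = 0 ∧ l = 0)) (hkl : ¬ (k = i ∧ l = i))
    (hX : ∀ s t : F, (X + s • E k l + t • E 0 0).det ^ 2 = 1) (hXi : X i i = 1) :
    (S X * (S (E 0 0)).adjugate).trace = 0 ∧ (S (E k l) * (S (E 0 0)).adjugate).trace = 0
      ∧ (S (E 0 0)).det = 0 := by
  have main : ∀ s : F, (∀ t c : F, X + s • E k l + t • E 0 0 ≠ c • G) →
      ((S X * (S (E 0 0)).adjugate).trace + s * (S (E k l) * (S (E 0 0)).adjugate).trace = 0
      ∧ (S (E 0 0)).det = 0) := by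
    intro s hs
    have := good h2 hw hw1 hS (E 0 0) (X + s • E k l) (hX s) hs
    refine ⟨?_, this.2⟩
    rw [← this.1]
    simp [add_mul, Matrix.trace_add]
  have bad : ∀ s s' t t' c c' : F, X + s • E k l + t • E 0 0 = c • G →
      X + s' • E k l + t' • E 0 0 = c' • G → s = s' := by
    intro s s' t t' c c' h h'
    have a1 := congrFun (congrFun h i) i
    have a2 := congrFun (congrFun h' i) i
    have b1 := congrFun (congrFun h k) l
    have b2 := congrFun (congrFun h' k) l
    have z1 : (E k l : M3 F) i i = 0 := by simp [E, Matrix.single_apply, hkl]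
    have z2 : (E 0 0 : M3 F) i i = 0 := by simp [E, Matrix.single_apply, hi.symm]
    have z3 : (E 0 0 : M3 F) k l = 0 := by
      simp only [E, Matrix.single_apply]; rw [if_neg]; rintro ⟨rfl, rfl⟩; exact hk ⟨rfl, rfl⟩
    have z4 : (E k l : M3 F) k l = 1 := by simp [E]
    simp [z1, z2, z3, z4, hXi] at a1 a2 b1 b2
    have hG : G i i ≠ 0 := by intro h0; simp [h0] at a1
    have : c = c' := mul_right_cancel₀ hG (a1.symm.trans a2)
    subst this
    linear_combination b1 - b2
  have two : ∃ s s' : F, s ≠ s' ∧ (∀ t c : F, X + s • E k l + t • E 0 0 ≠ c • G) ∧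
      (∀ t c : F, X + s' • E k l + t • E 0 0 ≠ c • G) := by
    have h01 : (0 : F) ≠ 1 := zero_ne_one
    have h02 : (0 : F) ≠ -1 := by simp
    have h12 : (1 : F) ≠ -1 := by intro h; apply h2; linear_combination h
    by_cases g0 : ∀ t c : F, X + (0 : F) • E k l + t • E 0 0 ≠ c • G
    · by_cases g1 : ∀ t c : F, X + (1 : F) • E k l + t • E 0 0 ≠ c • G
      · exact ⟨0, 1, h01, g0, g1⟩
      · push Not at g1
        obtain ⟨t, c, g1⟩ := g1
        exact ⟨0, -1, h02, g0, fun t' c' h => h12 (bad _ _ _ _ _ _ g1 h)⟩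
    · push Not at g0
      obtain ⟨t, c, g0⟩ := g0
      exact ⟨1, -1, h12, fun t' c' h => h01 (bad _ _ _ _ _ _ g0 h),
        fun t' c' h => h02 (bad _ _ _ _ _ _ g0 h)⟩
  obtain ⟨s, s', hss, g, g'⟩ := two
  obtain ⟨m1, m2⟩ := main s g
  obtain ⟨m3, -⟩ := main s' g'
  have : (S (E k l) * (S (E 0 0)).adjugate).trace = 0 := by
    have : (s - s') * (S (E k l) * (S (E 0 0)).adjugate).trace = 0 := by
      linear_combination m1 - m3
    exact (mul_eq_zero.mp this).resolve_left (sub_ne_zero.mpr hss)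
  refine ⟨?_, this, m2⟩
  rw [this] at m1
  simpa using m1

lemma adj_E00 (h2 : (2 : F) ≠ 0) {w : F} (hw : w ^ 2 + w + 1 = 0) (hw1 : w ≠ 1)
    {S : M3 F →ₗ[F] M3 F} (hsurj : Function.Surjective S) {G : M3 F} (hS : WP S G) :
    (S (E 0 0)).adjugate = 0 := by
  have A1 : ∀ k l : Fin 3, ¬ (k = 0 ∧ l = 0) → ¬ (k = 2 ∧ l = 2) →
      (∀ s t : F, ((!![0, 1, 0; 1, 0, 0; 0, 0, 1] : M3 F) + s • E k l + t • E 0 0).det ^ 2 = 1) → _ :=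
    fun k l a b c => good_fam h2 hw hw1 hS !![0, 1, 0; 1, 0, 0; 0, 0, 1] 2 k l (by decide)
      a b c (by simp)
  have A2 : ∀ k l : Fin 3, ¬ (k = 0 ∧ l = 0) → ¬ (k = 1 ∧ l = 1) →
      (∀ s t : F, ((!![0, 0, 1; 0, 1, 0; 1, 0, 0] : M3 F) + s • E k l + t • E 0 0).det ^ 2 = 1) → _ :=
    fun k l a b c => good_fam h2 hw hw1 hS !![0, 0, 1; 0, 1, 0; 1, 0, 0] 1 k l (by decide)
      a b c (by simp)
  have a02 := A1 0 2 (by decide) (by decide) (by intro s t; simp [E, det_fin_three])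
  have a12 := A1 1 2 (by decide) (by decide) (by intro s t; simp [E, det_fin_three])
  have a20 := A1 2 0 (by decide) (by decide) (by intro s t; simp [E, det_fin_three])
  have a21 := A1 2 1 (by decide) (by decide) (by intro s t; simp [E, det_fin_three])
  have a01 := A2 0 1 (by decide) (by decide) (by intro s t; simp [E, det_fin_three])
  have a10 := A2 1 0 (by decide) (by decide) (by intro s t; simp [E, det_fin_three])
  have hX1 : (!![0, 1, 0; 1, 0, 0; 0, 0, 1] : M3 F) = E 0 1 + E 1 0 + E 2 2 := by
    ext i j; fin_cases i <;> fin_cases j <;> simp [E]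
  have hX2 : (!![0, 0, 1; 0, 1, 0; 1, 0, 0] : M3 F) = E 0 2 + E 2 0 + E 1 1 := by
    ext i j; fin_cases i <;> fin_cases j <;> simp [E]
  set B := (S (E 0 0)).adjugate with hB
  have b1 := a02.1
  have b2 := a01.1
  rw [hX1] at b1
  rw [hX2] at b2
  simp only [map_add, add_mul, Matrix.trace_add, a01.2.1, a10.2.1, a02.2.1, a20.2.1, zero_add] at b1 b2
  have b0 : (S (E 0 0) * B).trace = 0 := by
    rw [hB, mul_adjugate, a02.2.2]; simp
  have all : ∀ X : M3 F, (S X * B).trace = 0 := by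
    intro X
    have : X = ∑ i, ∑ j, X i j • E i j := by
      conv_lhs => rw [Matrix.matrix_eq_sum_single X]
      simp [E]
    rw [this]
    simp only [Fin.sum_univ_three, map_add, map_smul, add_mul, Matrix.trace_add, smul_mul_assoc,
      trace_smul, a01.2.1, a10.2.1, a02.2.1, a20.2.1, a12.2.1, a21.2.1, b0, b1, b2]
    simp
  ext i j
  obtain ⟨X, hX⟩ := hsurj (E j i)
  have := all X
  rw [hX] at this
  simpa [E, Matrix.trace_single_mul] using this

lemma exists_col {x : Fin 3 → F} (hx : x ≠ 0) : ∃ P : M3 F, P.det = 1 ∧ ∀ i, P i 0 = x i := by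
  by_cases h0 : x 0 = 0
  · by_cases h1 : x 1 = 0
    · have h2 : x 2 ≠ 0 := by
        intro h2; apply hx; ext i; fin_cases i <;> simp [h0, h1, h2]
      refine ⟨!![x 0, 1, 0; x 1, 0, (x 2)⁻¹; x 2, 0, 0], ?_, ?_⟩
      · simp [det_fin_three, h0, h1, h2]
      · intro i; fin_cases i <;> simp
    · refine ⟨!![x 0, 0, 1; x 1, 0, 0; x 2, (x 1)⁻¹, 0], ?_, ?_⟩
      · simp [det_fin_three, h0, h1]
      · intro i; fin_cases i <;> simp
  · refine ⟨!![x 0, 0, 0; x 1, (x 0)⁻¹, 0; x 2, 0, 1], ?_, ?_⟩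
    · simp [det_fin_three, h0]
    · intro i; fin_cases i <;> simp

lemma adj_rank_one (h2 : (2 : F) ≠ 0) {w : F} (hw : w ^ 2 + w + 1 = 0) (hw1 : w ≠ 1)
    {T : M3 F →ₗ[F] M3 F} (hT : Function.Surjective T) (hS : WP T 1) (x y : Fin 3 → F) :
    (T (vecMulVec x y)).adjugate = 0 := by
  by_cases hx : x = 0
  · subst hx; simp
  by_cases hy : y = 0
  · subst hy; simp
  obtain ⟨P, hP, hPx⟩ := exists_col hx
  obtain ⟨Q', hQ, hQy⟩ := exists_col hy
  set Q := Q'ᵀ with hQdef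
  have hQd : Q.det = 1 := by rw [hQdef, det_transpose, hQ]
  have hPu : IsUnit P.det := by simp [hP]
  have hQu : IsUnit Q.det := by simp [hQd]
  set S : M3 F →ₗ[F] M3 F := T ∘ₗ (LinearMap.mulLeft F P) ∘ₗ (LinearMap.mulRight F Q) with hSdef
  have hSa : ∀ X, S X = T (P * (X * Q)) := fun X => rfl
  have hinv : ∀ X, P * (P⁻¹ * X * Q⁻¹ * Q) = X := by
    intro X
    rw [mul_assoc (P⁻¹ * X), Matrix.nonsing_inv_mul _ hQu, mul_one, ← mul_assoc,
      Matrix.mul_nonsing_inv _ hPu, one_mul]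
  have hsurj : Function.Surjective S := by
    intro Y
    obtain ⟨X, rfl⟩ := hT Y
    exact ⟨P⁻¹ * X * Q⁻¹, by rw [hSa, hinv]⟩
  have hWP : WP S (P⁻¹ * Q⁻¹) := by
    intro X hX hXc
    rw [hSa]
    apply hS
    · simp [hP, hQd, hX]
    · intro c hc
      apply hXc c
      calc X = (P⁻¹ * P) * X * (Q * Q⁻¹) := by
            rw [Matrix.nonsing_inv_mul _ hPu, Matrix.mul_nonsing_inv _ hQu]; simp
        _ = P⁻¹ * (P * (X * Q)) * Q⁻¹ := by noncomm_ring
        _ = _ := by rw [hc]; simp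
  have := adj_E00 h2 hw hw1 hsurj hWP
  rw [hSa] at this
  convert this using 3
  ext i j
  simp [vecMulVec_apply, Matrix.mul_apply, Fin.sum_univ_three, E, Matrix.single_apply, hPx, hQdef, hQy]

def R1 (M : M3 F) : Prop := ∀ i j k l, M i j * M k l = M i l * M k j

lemma R1_of_adj {M : M3 F} (h : M.adjugate = 0) : R1 M := by
  rw [adjugate_fin_three] at h
  have e := fun i j => congrFun (congrFun h i) j
  have e00 := e 0 0
  have e01 := e 0 1
  have e02 := e 0 2
  have e10 := e 1 0
  have e11 := e 1 1
  have e12 := e 1 2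
  have e20 := e 2 0
  have e21 := e 2 1
  have e22 := e 2 2
  simp at e00 e01 e02 e10 e11 e12 e20 e21 e22
  clear h e
  intro i j k l
  fin_cases i <;> fin_cases j <;> fin_cases k <;> fin_cases l <;> simp only [Fin.zero_eta, Fin.mk_one, Fin.reduceFinMk] <;> grind

end PI

namespace PI
variable {F : Type*} [Field F]

lemma R1.exists {M : M3 F} (h : R1 M) : ∃ a b : Fin 3 → F, M = vecMulVec a b := by
  by_cases h0 : M = 0
  · exact ⟨0, 0, by simp [h0]⟩
  have : ∃ i j, M i j ≠ 0 := by
    by_contra H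
    push Not at H
    exact h0 (by ext i j; exact H i j)
  obtain ⟨i, j, hij⟩ := this
  refine ⟨fun k => M k j, fun l => M i l * (M i j)⁻¹, ?_⟩
  ext k l
  rw [vecMulVec_apply]
  field_simp
  linear_combination h k l i j

def Par (a b : Fin 3 → F) : Prop := ∀ i j, a i * b j = a j * b i

lemma Par.symm {a b : Fin 3 → F} (h : Par a b) : Par b a := fun i j => by
  linear_combination h j i

lemma Par.exists {a b : Fin 3 → F} (h : Par a b) (hb : b ≠ 0) : ∃ c : F, a = c • b := by
  obtain ⟨i, hi⟩ := Function.ne_iff.mp hb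
  have hi : b i ≠ 0 := hi
  refine ⟨a i * (b i)⁻¹, ?_⟩
  ext j
  simp only [Pi.smul_apply, smul_eq_mul]
  field_simp
  linear_combination - h i j

lemma Par.trans {a b c : Fin 3 → F} (h : Par a b) (h' : Par b c) (hb : b ≠ 0) : Par a c := by
  obtain ⟨k, rfl⟩ := h.exists hb
  intro i j
  simp only [Pi.smul_apply, smul_eq_mul]
  linear_combination k * h' i j

lemma adjacent {a b c d : Fin 3 → F} (h : R1 (vecMulVec a b + vecMulVec c d)) :
    Par a c ∨ Par b d := by
  by_contra H
  simp only [not_or, Par] at H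
  push Not at H
  obtain ⟨⟨i, k, h1⟩, ⟨j, l, h2⟩⟩ := H
  have := h i j k l
  simp only [Matrix.add_apply, vecMulVec_apply] at this
  have h3 : (a i * c k - a k * c i) * (b j * d l - b l * d j) = 0 := by
    linear_combination this
  rcases mul_eq_zero.mp h3 with h | h
  · exact h1 (sub_eq_zero.mp h)
  · exact h2 (sub_eq_zero.mp h)

/-- rank-one spaces have a common column or row -/
lemma typeLemma (L : (Fin 3 → F) →ₗ[F] M3 F) (hinj : Function.Injective L)
    (hL : ∀ y, R1 (L y)) :
    (∃ u : Fin 3 → F, ∀ y, ∃ v, L y = vecMulVec u v) ∨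
    (∃ u : Fin 3 → F, ∀ y, ∃ v, L y = vecMulVec v u) := by
  choose a b hab using fun y => (hL y).exists
  have adj : ∀ y y', Par (a y) (a y') ∨ Par (b y) (b y') := by
    intro y y'
    apply adjacent
    rw [← hab, ← hab, ← map_add]
    exact hL _
  have ha : ∀ y, y ≠ 0 → a y ≠ 0 := by
    intro y hy h
    apply hy; apply hinj; rw [hab y, h]; simp
  have hb : ∀ y, y ≠ 0 → b y ≠ 0 := by
    intro y hy h
    apply hy; apply hinj; rw [hab y, h]; simp
  by_cases H : ∀ y y', y ≠ 0 → y' ≠ 0 → Par (a y) (a y')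
  · left
    have h1 : (fun _ => 1 : Fin 3 → F) ≠ 0 := by
      intro h; simpa using congrFun h 0
    refine ⟨a (fun _ => 1), fun y => ?_⟩
    by_cases hy : y = 0
    · exact ⟨0, by simp [hy]⟩
    obtain ⟨c, hc⟩ := (H y _ hy h1).exists (ha _ h1)
    exact ⟨c • b y, by rw [hab, hc]; ext i j; simp [vecMulVec_apply]; ring⟩
  · right
    push Not at H
    obtain ⟨y1, y2, n1, n2, hn⟩ := H
    have hb12 := (adj y1 y2).resolve_left hn
    refine ⟨b y1, fun y => ?_⟩
    by_cases hy : y = 0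
    · exact ⟨0, by simp [hy]⟩
    have hp : Par (b y) (b y1) := by
      rcases adj y y1 with h | h
      · rcases adj y y2 with h' | h'
        · exact absurd (h.symm.trans h' (ha _ hy)) hn
        · exact h'.trans hb12.symm (hb _ n2)
      · exact h
    obtain ⟨c, hc⟩ := hp.exists (hb _ n1)
    exact ⟨c • a y, by rw [hab, hc]; ext i j; simp [vecMulVec_apply]; ring⟩

lemma toMat (L : (Fin 3 → F) →ₗ[F] M3 F) (hinj : Function.Injective L) (u : Fin 3 → F)
    (h : ∀ y, ∃ v, L y = vecMulVec u v) :
    u ≠ 0 ∧ ∃ N : M3 F, IsUnit N.det ∧ ∀ y, L y = vecMulVec u (y ᵥ* N) := by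
  have hu : u ≠ 0 := by
    rintro rfl
    obtain ⟨v, hv⟩ := h (fun _ => 1)
    have : (fun _ => 1 : Fin 3 → F) = 0 := hinj (by rw [hv]; simp)
    simpa using congrFun this 0
  refine ⟨hu, ?_⟩
  obtain ⟨i0, hi⟩ := Function.ne_iff.mp hu
  have hi : u i0 ≠ 0 := hi
  have key : ∀ y, L y = vecMulVec u (y ᵥ* (Matrix.of fun k j => L (Pi.single k 1) i0 j * (u i0)⁻¹)) := by
    intro y
    have hy : y = ∑ k, y k • Pi.single k (1 : F) := by
      ext j; simp [Finset.sum_apply, Pi.single_apply]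
    have e : ∀ j, L y i0 j = ∑ k, y k * L (Pi.single k 1) i0 j := by
      intro j
      conv_lhs => rw [hy]
      simp [Matrix.sum_apply]
    obtain ⟨v, hv⟩ := h y
    ext i j
    have e' := e j
    rw [vecMulVec_apply]
    simp only [vecMul, dotProduct, Matrix.of_apply, ← mul_assoc]
    rw [← Finset.sum_mul, ← e', hv, vecMulVec_apply, vecMulVec_apply]
    field_simp
  refine ⟨_, ?_, key⟩
  generalize (Matrix.of fun k j => L (Pi.single k 1) i0 j * (u i0)⁻¹ : M3 F) = N at key
  rw [isUnit_iff_ne_zero]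
  intro hdet
  obtain ⟨y, hy, hy0⟩ := Matrix.exists_vecMul_eq_zero_iff.mpr hdet
  apply hy
  apply hinj
  rw [key, hy0]; simp

lemma exists_not_par (N : M3 F) (hN : IsUnit N.det) (u : Fin 3 → F) (hu : u ≠ 0) :
    ∃ y, ¬ Par (y ᵥ* N) u := by
  by_contra H
  push Not at H
  have hs : ∀ z : Fin 3 → F, Par z u := by
    intro z
    have := H (z ᵥ* N⁻¹)
    rwa [vecMul_vecMul, Matrix.nonsing_inv_mul _ hN, vecMul_one] at this
  apply hu
  have h1 := hs ![1, 0, 0] 0 1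
  have h2 := hs ![1, 0, 0] 0 2
  have h3 := hs ![0, 1, 0] 1 0
  simp at h1 h2 h3
  ext i; fin_cases i <;> simp [h1, h2, h3]

lemma no_mixed (L L' : (Fin 3 → F) →ₗ[F] M3 F) (hinj : Function.Injective L)
    (hinj' : Function.Injective L') (hadj : ∀ y, R1 (L y + L' y)) (u u' : Fin 3 → F)
    (h : ∀ y, ∃ v, L y = vecMulVec u v) (h' : ∀ y, ∃ v, L' y = vecMulVec v u') : False := by
  obtain ⟨hu, N, hN, hL⟩ := toMat L hinj u h
  set Lt : (Fin 3 → F) →ₗ[F] M3 F := (Matrix.transposeLinearEquiv (Fin 3) (Fin 3) F F).toLinearMap ∘ₗ L'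
  have hLt : ∀ y, Lt y = (L' y)ᵀ := fun y => rfl
  obtain ⟨hu', N', hN', hL'⟩ := toMat Lt (fun x y hxy => hinj' (by
    simpa [hLt] using hxy)) u' (by
    intro y
    obtain ⟨v, hv⟩ := h' y
    exact ⟨v, by rw [hLt, hv, transpose_vecMulVec]⟩)
  have hL'' : ∀ y, L' y = vecMulVec (y ᵥ* N') u' := by
    intro y
    rw [← transpose_transpose (L' y), ← hLt, hL', transpose_vecMulVec]
  have cov : ∀ y, Par u (y ᵥ* N') ∨ Par (y ᵥ* N) u' := by
    intro y
    apply adjacent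
    rw [← hL, ← hL'']
    exact hadj y
  obtain ⟨y1, hy1⟩ := exists_not_par N' hN' u hu
  obtain ⟨y2, hy2⟩ := exists_not_par N hN u' hu'
  have c1 := (cov y1).resolve_left (fun h => hy1 h.symm)
  have c2 := (cov y2).resolve_right hy2
  rcases cov (y1 + y2) with h | h
  · apply hy1
    intro i j
    have e1 := h i j
    have e2 := c2 i j
    simp only [add_vecMul, Pi.add_apply] at e1
    linear_combination e2 - e1
  · apply hy2
    intro i j
    have e1 := h i j
    have e2 := c1 i j
    simp only [add_vecMul, Pi.add_apply] at e1
    linear_combination e1 - e2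

def rowMap (T : M3 F →ₗ[F] M3 F) (x : Fin 3 → F) : (Fin 3 → F) →ₗ[F] M3 F :=
  T ∘ₗ (vecMulVecBilin F F x)

lemma rowMap_apply (T : M3 F →ₗ[F] M3 F) (x y : Fin 3 → F) :
    rowMap T x y = T (vecMulVec x y) := rfl

lemma rowMap_inj {T : M3 F →ₗ[F] M3 F} (hT : Function.Injective T) (i : Fin 3) :
    Function.Injective (rowMap T (Pi.single i 1)) := by
  intro y y' h
  have := hT h
  ext j
  have := congrFun (congrFun this i) j
  simpa [vecMulVecBilin, vecMulVec_apply] using this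

lemma scalar_of_par (K : M3 F) (hK : ∀ z, Par z (z ᵥ* K)) : ∃ c : F, K = c • 1 := by
  have h1 := hK ![1,0,0]
  have h2 := hK ![0,1,0]
  have h3 := hK ![0,0,1]
  have h4 := hK ![1,1,0] 0 1
  have h5 := hK ![1,0,1] 0 2
  have a := h1 0 1
  have b := h1 0 2
  have c := h2 1 0
  have d := h2 1 2
  have e := h3 2 0
  have f := h3 2 1
  simp [vecMul, dotProduct, Fin.sum_univ_three] at a b c d e f h4 h5
  refine ⟨K 0 0, ?_⟩
  ext i j; fin_cases i <;> fin_cases j <;> simp <;> grind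

lemma col_form {T : M3 F →ₗ[F] M3 F} (hT : Function.Injective T)
    (hR : ∀ x y, R1 (T (vecMulVec x y)))
    (hcol : ∀ i : Fin 3, ∃ u : Fin 3 → F, ∀ y, ∃ v, rowMap T (Pi.single i 1) y = vecMulVec u v) :
    ∃ U N : M3 F, ∀ X, T X = U * X * N := by
  choose u hu using hcol
  have := fun i => toMat _ (rowMap_inj hT i) (u i) (hu i)
  choose hu0 N hN hL using this
  have hadj : ∀ i j y, Par (u i) (u j) ∨ Par (y ᵥ* N i) (y ᵥ* N j) := by
    intro i j y
    apply adjacent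
    rw [← hL, ← hL, rowMap_apply, rowMap_apply, ← map_add, ← add_vecMulVec]
    exact hR _ _
  have hnp : ∀ i j, i ≠ j → ¬ Par (u i) (u j) := by
    intro i j hij hp
    obtain ⟨c, hc⟩ := hp.exists (hu0 j)
    -- u i = c u j
    set y : Fin 3 → F := fun _ => 1
    have h1 : rowMap T (Pi.single i 1) y = rowMap T (Pi.single j 1) (c • (y ᵥ* N i ᵥ* (N j)⁻¹)) := by
      rw [hL, hL, smul_vecMul, vecMul_vecMul, Matrix.nonsing_inv_mul _ (hN j), vecMul_one, hc]
      ext k l; simp [vecMulVec_apply]; ring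
    rw [rowMap_apply, rowMap_apply] at h1
    have h2 := congrFun (congrFun (hT h1) i) 0
    simp [vecMulVec_apply, y, hij] at h2
  have hsc : ∀ j, ∃ c : F, N j = c • N 0 := by
    intro j
    by_cases hj : j = 0
    · exact ⟨1, by rw [hj, one_smul]⟩
    obtain ⟨c, hc⟩ := scalar_of_par ((N 0)⁻¹ * N j) (by
      intro z
      have := (hadj 0 j (z ᵥ* (N 0)⁻¹)).resolve_left (hnp 0 j (Ne.symm hj))
      rwa [vecMul_vecMul, Matrix.nonsing_inv_mul _ (hN 0), vecMul_one, vecMul_vecMul] at this)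
    refine ⟨c, ?_⟩
    calc N j = N 0 * ((N 0)⁻¹ * N j) := by
          rw [← mul_assoc, Matrix.mul_nonsing_inv _ (hN 0), one_mul]
      _ = _ := by rw [hc]; simp
  choose c hc using hsc
  refine ⟨Matrix.of fun k i => u i k * c i, N 0, fun X => ?_⟩
  have hX : X = ∑ i, vecMulVec (Pi.single i 1) (X i) := by
    ext k l
    simp [Matrix.sum_apply, vecMulVec_apply, Pi.single_apply]
  have hTX : T X = ∑ i, vecMulVec (u i) (X i ᵥ* N i) := by
    conv_lhs => rw [hX, map_sum]
    refine Finset.sum_congr rfl fun i _ => ?_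
    rw [← hL, rowMap_apply]
  rw [hTX]
  ext k l
  rw [Matrix.sum_apply, mul_assoc, Matrix.mul_apply]
  refine Finset.sum_congr rfl fun i _ => ?_
  rw [hc i, vecMulVec_apply, vecMul_smul]
  simp [Matrix.mul_apply, vecMul, dotProduct, mul_assoc]

lemma final_form (h2 : (2 : F) ≠ 0) {w : F} (hw : w ^ 2 + w + 1 = 0) (hw1 : w ≠ 1)
    {T : M3 F →ₗ[F] M3 F} (hT : Function.Bijective T)
    (hp : ∀ A ∈ ProdInv3 F 3, T A ∈ ProdInv3 F 3)
    (U N : M3 F) (hUN : ∀ X, T X = U * X * N) :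
    ∃ c : F, (c = 1 ∨ c = -1) ∧ IsUnit U ∧ ∀ X, T X = c • (U * X * U⁻¹) := by
  have hw3 : w ^ 3 = 1 := by linear_combination (w - 1) * hw
  have h3 : (3 : F) ≠ 0 := by
    intro h3
    apply hw1
    have : (w - 1) ^ 2 = 0 := by linear_combination hw - w * h3
    have := pow_eq_zero_iff (two_ne_zero) |>.mp this
    linear_combination this
  obtain ⟨G, hG⟩ := hT.2 1
  have hG' := hG
  rw [hUN] at hG'
  have d1 := det_sq (hp 1 one_mem)
  have d2 := congrArg Matrix.det hG'
  rw [hUN] at d1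
  simp only [det_mul, det_one] at d1 d2
  have dG : G.det ^ 2 = 1 := by
    have : G.det ^ 2 * (U.det * 1 * N.det) ^ 2 = 1 := by
      linear_combination (U.det * G.det * N.det + 1) * d2
    rwa [d1, mul_one] at this
  have hUu : IsUnit U.det := by
    rw [isUnit_iff_ne_zero]; intro h; simp [h] at d2
  have key : ∀ l : F, l ^ 3 = 1 → l ^ 2 ≠ 1 → l • G ∉ ProdInv3 F 3 := by
    intro l hl hl2 hmem
    have := hp _ hmem
    rw [map_smul, hG] at this
    exact hl2 (scalar_not h3 this)
  have hw2 : w ^ 2 ≠ 1 := by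
    intro h; apply hw1; linear_combination hw3 - w * h
  have hw4 : (w ^ 2) ^ 2 ≠ 1 := by
    intro h; apply hw1; linear_combination h - w * hw3
  have k1 := key w hw3 hw2
  have k2 := key (w ^ 2) (by linear_combination (w ^ 3 + 1) * hw3) hw4
  have hw0 : w ≠ 0 := by rintro rfl; simp at hw3
  have hsc : ∃ c : F, G = c • 1 := by
    by_contra H
    push Not at H
    apply k1
    apply mem_of_det h2
    · rw [det_smul, Fintype.card_fin, hw3, one_mul, dG]
    · intro c hc
      apply H (w⁻¹ * c)
      rw [mul_smul, ← hc, smul_smul, inv_mul_cancel₀ hw0, one_smul]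
  obtain ⟨c, rfl⟩ := hsc
  have hc6 : (c ^ 3) ^ 2 = 1 := by simpa [det_smul] using dG
  have n1 : (w * c) ^ 2 ≠ 1 := by
    intro h; apply k1; rw [smul_smul]; exact smul_mem one_mem (by rw [← sq, h])
  have n2 : (w ^ 2 * c) ^ 2 ≠ 1 := by
    intro h; apply k2; rw [smul_smul]; exact smul_mem one_mem (by rw [← sq, h])
  have hc2 : c ^ 2 = 1 := by
    have : (c ^ 2 - 1) * ((c ^ 2 - w) * (c ^ 2 - w ^ 2)) = 0 := by
      linear_combination hc6 - (c ^ 4 - c ^ 2) * hw + (c ^ 2 - 1) * hw3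
    rcases mul_eq_zero.mp this with h | h
    · linear_combination h
    rcases mul_eq_zero.mp h with h | h
    · exfalso; apply n1; linear_combination w ^ 2 * h + hw3
    · exfalso; apply n2; linear_combination w ^ 4 * h + (w ^ 3 + 1) * hw3
  refine ⟨c, ?_, (Matrix.isUnit_iff_isUnit_det U).mpr hUu, ?_⟩
  · have : (c - 1) * (c + 1) = 0 := by linear_combination hc2
    rcases mul_eq_zero.mp this with h | h
    · left; linear_combination h
    · right; linear_combination h
  · intro X
    have hN : N = c • U⁻¹ := by
      have e : c • (U * N) = 1 := by simpa using hG'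
      calc N = (U⁻¹ * U) * ((c ^ 2) • N) := by
            rw [Matrix.nonsing_inv_mul _ hUu, hc2]; simp
        _ = c • (U⁻¹ * (c • (U * N))) := by
            simp [smul_smul, sq, mul_assoc]
        _ = _ := by rw [e, mul_one]
    rw [hUN, hN]; simp

lemma forward (h2 : (2 : F) ≠ 0) {w : F} (hw : w ^ 2 + w + 1 = 0) (hw1 : w ≠ 1)
    {T : M3 F →ₗ[F] M3 F} (hT : Function.Bijective T)
    (hp : ∀ A ∈ ProdInv3 F 3, T A ∈ ProdInv3 F 3) :
    ∃ (α : F) (P : M3 F), (α = 1 ∨ α = -1) ∧ IsUnit P ∧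
        ((∀ X, T X = α • (P * X * P⁻¹)) ∨ (∀ X, T X = α • (P * Xᵀ * P⁻¹))) := by
  have hWP : WP T 1 := fun X hX hc => det_sq (hp _ (mem_of_det h2 hX hc))
  have hR : ∀ x y, R1 (T (vecMulVec x y)) := fun x y =>
    R1_of_adj (adj_rank_one h2 hw hw1 hT.2 hWP x y)
  have ht := fun i : Fin 3 => typeLemma _ (rowMap_inj hT.1 i) (fun y => hR _ y)
  by_cases hcol : ∀ i : Fin 3, ∃ u : Fin 3 → F, ∀ y, ∃ v, rowMap T (Pi.single i 1) y = vecMulVec u v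
  · obtain ⟨U, N, hUN⟩ := col_form hT.1 hR hcol
    obtain ⟨c, hc, hU, h⟩ := final_form h2 hw hw1 hT hp U N hUN
    exact ⟨c, U, hc, hU, Or.inl h⟩
  · rw [not_forall] at hcol
    obtain ⟨i, hi⟩ := hcol
    obtain ⟨ui, hui⟩ := (ht i).resolve_left hi
    have hrow : ∀ j : Fin 3, ∃ u : Fin 3 → F, ∀ y, ∃ v, rowMap T (Pi.single j 1) y = vecMulVec v u := by
      intro j
      rcases ht j with ⟨u, hu⟩ | h
      · exfalso
        refine no_mixed _ _ (rowMap_inj hT.1 j) (rowMap_inj hT.1 i) ?_ u ui hu hui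
        intro y
        rw [rowMap_apply, rowMap_apply, ← map_add, ← add_vecMulVec]
        exact hR _ _
      · exact h
    set T' : M3 F →ₗ[F] M3 F := (Matrix.transposeLinearEquiv (Fin 3) (Fin 3) F F).toLinearMap ∘ₗ T
    have hT' : ∀ X, T' X = (T X)ᵀ := fun X => rfl
    have hbij : Function.Bijective T' :=
      (Matrix.transposeLinearEquiv (Fin 3) (Fin 3) F F).bijective.comp hT
    obtain ⟨U, N, hUN⟩ := col_form hbij.1 (T := T') (by
      intro x y i j k l
      rw [hT']
      have := hR x y j i l k
      simp only [transpose_apply]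
      linear_combination hR x y j i l k) (by
      intro i
      obtain ⟨u, hu⟩ := hrow i
      refine ⟨u, fun y => ?_⟩
      obtain ⟨v, hv⟩ := hu y
      refine ⟨v, ?_⟩
      rw [rowMap_apply, hT', ← rowMap_apply, hv, transpose_vecMulVec])
    obtain ⟨c, hc, hU, h⟩ := final_form h2 hw hw1 hbij
      (fun A hA => by rw [hT']; exact transpose_mem (hp A hA)) U N hUN
    have hUd := (Matrix.isUnit_iff_isUnit_det U).mp hU
    refine ⟨c, (U⁻¹)ᵀ, hc, ?_, Or.inr ?_⟩
    · rw [Matrix.isUnit_iff_isUnit_det, det_transpose, ← Matrix.isUnit_iff_isUnit_det]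
      exact (Matrix.isUnit_nonsing_inv_iff).mpr hU
    · intro X
      rw [← transpose_transpose (T X), ← hT', h, transpose_smul, transpose_mul, transpose_mul,
        ← transpose_nonsing_inv, Matrix.nonsing_inv_nonsing_inv _ hUd, mul_assoc]

end PI

theorem stmt15 (F : Type*) [Field F] (hchar : ringChar F ≠ 2)
    (hproper : ProdInv3 F 3 ⊂ ProdInv4 F 3)
    (T : Matrix (Fin 3) (Fin 3) F →ₗ[F] Matrix (Fin 3) (Fin 3) F)
    (hT : Function.Bijective T) :
    (∀ A ∈ ProdInv3 F 3, T A ∈ ProdInv3 F 3) ↔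
      ∃ (α : F) (P : Matrix (Fin 3) (Fin 3) F), (α = 1 ∨ α = -1) ∧ IsUnit P ∧
        ((∀ X, T X = α • (P * X * P⁻¹)) ∨ (∀ X, T X = α • (P * Xᵀ * P⁻¹))) := by
  have h2 : (2 : F) ≠ 0 := Ring.two_ne_zero hchar
  constructor
  · intro hp
    obtain ⟨A, hA4, hA3⟩ := Set.exists_of_ssubset hproper
    have hd := PI.det_sq4 hA4
    have hsc : ∃ c : F, A = c • 1 := by
      by_contra H
      push Not at H
      exact hA3 (PI.mem_of_det h2 hd H)
    obtain ⟨c, rfl⟩ := hsc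
    have hc6 : (c ^ 3) ^ 2 = 1 := by simpa [det_smul] using hd
    have hc2 : c ^ 2 ≠ 1 := by
      intro h; exact hA3 (PI.smul_mem PI.one_mem (by rw [← sq, h]))
    refine PI.forward h2 (w := c ^ 2) ?_ hc2 hT hp
    have : (c ^ 2 - 1) * ((c ^ 2) ^ 2 + c ^ 2 + 1) = 0 := by linear_combination hc6
    exact (mul_eq_zero.mp this).resolve_left (sub_ne_zero.mpr hc2)
  · rintro ⟨α, P, hα, hP, h⟩ A hA
    have hPd := (Matrix.isUnit_iff_isUnit_det P).mp hP
    have hα2 : α * α = 1 := by rcases hα with rfl | rfl <;> simp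
    have conj : ∀ B ∈ ProdInv3 F 3, P * B * P⁻¹ ∈ ProdInv3 F 3 := by
      intro B hB
      refine PI.sim (Q := P) hPd.ne_zero ?_ hB
      rw [mul_assoc, Matrix.nonsing_inv_mul _ hPd, mul_one]
    rcases h with h | h
    · rw [h]; exact PI.smul_mem (conj _ hA) hα2
    · rw [h]; exact PI.smul_mem (conj _ (PI.transpose_mem hA)) hα2
end

section
/- Let F be a field with char(F) = 2. Then B_2 = C_2 = D_2; equivalently, a matrix A ∈ M_2(F) is a product of two involutions if and only if det(A) = 1. -/
open Matrix

/-- The set of matrices that are products of two involutions. -/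
def ProdInv2 (F : Type*) [Field F] (n : ℕ) : Set (Matrix (Fin n) (Fin n) F) :=
  {A | ∃ J₁ J₂ : Matrix (Fin n) (Fin n) F, J₁ * J₁ = 1 ∧ J₂ * J₂ = 1 ∧ A = J₁ * J₂}

theorem inv_mem_aux (F : Type*) [Field F] (h2 : (2 : F) = 0) (A J : Matrix (Fin 2) (Fin 2) F)
    (hJ : J * J = 1) (hK : (J * A) * (J * A) = 1) : A ∈ ProdInv2 F 2 :=
  ⟨J, J * A, hJ, hK, by rw [← Matrix.mul_assoc, hJ, Matrix.one_mul]⟩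

theorem det_inv_aux (F : Type*) [Field F] (h2 : (2 : F) = 0) (J : Matrix (Fin 2) (Fin 2) F)
    (hJ : J * J = 1) : J.det = 1 := by
  have h : J.det * J.det = 1 := by rw [← Matrix.det_mul, hJ, Matrix.det_one]
  have h' : (J.det - 1) ^ 2 = 0 := by linear_combination h + (1 - J.det) * h2
  exact sub_eq_zero.mp (pow_eq_zero_iff (two_ne_zero) |>.mp h')

theorem sq_aux (F : Type*) [Field F] (h2 : (2 : F) = 0) (J : Matrix (Fin 2) (Fin 2) F)
    (hd : J.det = 1) (ht : J 0 0 + J 1 1 = 0) : J * J = 1 := by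
  rw [Matrix.det_fin_two] at hd
  ext i j
  fin_cases i <;> fin_cases j <;> simp [Matrix.mul_apply, Fin.sum_univ_two]
  · linear_combination -hd + J 0 0 * ht - h2
  · linear_combination J 0 1 * ht
  · linear_combination J 1 0 * ht
  · linear_combination -hd + J 1 1 * ht - h2

theorem mem_aux (F : Type*) [Field F] (h2 : (2 : F) = 0) (A : Matrix (Fin 2) (Fin 2) F)
    (hd : A.det = 1) : A ∈ ProdInv2 F 2 := by
  have key : ∀ J : Matrix (Fin 2) (Fin 2) F, J.det = 1 → J 0 0 + J 1 1 = 0 →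
      (J * A) 0 0 + (J * A) 1 1 = 0 → A ∈ ProdInv2 F 2 := fun J h1 h3 h4 =>
    inv_mem_aux F h2 A J (sq_aux F h2 J h1 h3)
      (sq_aux F h2 _ (by rw [Matrix.det_mul, h1, hd, one_mul]) h4)
  by_cases hc : A 1 0 = 0
  · by_cases hb : A 0 1 = 0
    · refine key !![0, 1; 1, 0] ?_ ?_ ?_
      · simp [Matrix.det_fin_two]; linear_combination -h2
      · simp
      · simp [Matrix.mul_apply, Fin.sum_univ_two, hc, hb]
    · refine key !![1, 0; (A 0 0 + A 1 1) / A 0 1, 1] ?_ ?_ ?_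
      · simp [Matrix.det_fin_two]
      · simp; linear_combination h2
      · simp [Matrix.mul_apply, Fin.sum_univ_two]
        field_simp
        linear_combination (A 0 0 + A 1 1) * h2
  · refine key !![1, (A 0 0 + A 1 1) / A 1 0; 0, 1] ?_ ?_ ?_
    · simp [Matrix.det_fin_two]
    · simp; linear_combination h2
    · simp [Matrix.mul_apply, Fin.sum_univ_two]
      field_simp
      linear_combination (A 0 0 + A 1 1) * h2

theorem stmt16 (F : Type*) [Field F] (hchar : ringChar F = 2) :
    ProdInv2 F 2 = ProdInv3 F 2 ∧ ProdInv3 F 2 = ProdInv4 F 2 ∧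
      ∀ A : Matrix (Fin 2) (Fin 2) F, A ∈ ProdInv2 F 2 ↔ A.det = 1 := by
  have h2 : (2 : F) = 0 := by
    have := ringChar.Nat.cast_ringChar (R := F)
    rw [hchar] at this
    exact_mod_cast this
  have D := det_inv_aux F h2
  have M := mem_aux F h2
  refine ⟨?_, ?_, fun A => ⟨?_, M A⟩⟩
  · ext A
    constructor
    · rintro ⟨J, K, hJ, hK, rfl⟩
      exact ⟨J, K, 1, hJ, hK, by simp, by simp⟩
    · rintro ⟨J, K, L, hJ, hK, hL, rfl⟩
      exact M _ (by simp [Matrix.det_mul, D _ hJ, D _ hK, D _ hL])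
  · ext A
    constructor
    · rintro ⟨J, K, L, hJ, hK, hL, rfl⟩
      exact ⟨J, K, L, 1, hJ, hK, hL, by simp, by simp⟩
    · rintro ⟨J, K, L, N, hJ, hK, hL, hN, rfl⟩
      obtain ⟨P, Q, hP, hQ, h⟩ := M (J * K * L * N)
        (by simp [Matrix.det_mul, D _ hJ, D _ hK, D _ hL, D _ hN])
      exact ⟨P, Q, 1, hP, hQ, by simp, by simp [h]⟩
  · rintro ⟨J, K, hJ, hK, rfl⟩
    simp [Matrix.det_mul, D _ hJ, D _ hK]
end

section
/- Let F be a field with char(F) = 2, let S_2 be any one of the sets B_2, C_2, D_2, and let T : M_2(F) → M_2(F) be a bijective linear map. Then T(S_2) ⊆ S_2 if and only if there exist invertible matrices P, Q ∈ M_2(F) with det(PQ) = 1 such that either T(X) = P·X·Q for all X ∈ M_2(F), or T(X) = P·Xᵗ·Q for all X ∈ M_2(F). -/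
open Matrix

def GoodMap {F : Type*} [Field F] (f : Matrix (Fin 2) (Fin 2) F → Matrix (Fin 2) (Fin 2) F) : Prop :=
  ∃ P Q : Matrix (Fin 2) (Fin 2) F, P.det * Q.det = 1 ∧
    ((∀ X, f X = P * X * Q) ∨ (∀ X, f X = P * Xᵀ * Q))

section
variable {F : Type*} [Field F]

lemma inv_det_sq {J : Matrix (Fin 2) (Fin 2) F} (h2 : (2 : F) = 0) (h : J * J = 1) :
    J.det = 1 := by
  have h1 : J.det * J.det = 1 := by rw [← det_mul, h, det_one]
  have : (J.det - 1) * (J.det - 1) = 0 := by linear_combination h1 - (J.det - 1) * h2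
  have := mul_self_eq_zero.mp this
  linear_combination this

lemma inv_of {J : Matrix (Fin 2) (Fin 2) F} (h2 : (2 : F) = 0) (h : J.det = 1)
    (ht : J 0 0 + J 1 1 = 0) : J * J = 1 := by
  rw [det_fin_two] at h
  ext i j
  fin_cases i <;> fin_cases j <;> simp [mul_apply, Fin.sum_univ_two]
  · linear_combination J 0 0 * ht - h - h2
  · linear_combination J 0 1 * ht
  · linear_combination J 1 0 * ht
  · linear_combination J 1 1 * ht - h - h2

lemma two_of_det (h2 : (2 : F) = 0) {A : Matrix (Fin 2) (Fin 2) F} (h : A.det = 1) :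
    ∃ J₁ J₂ : Matrix (Fin 2) (Fin 2) F, J₁ * J₁ = 1 ∧ J₂ * J₂ = 1 ∧ A = J₁ * J₂ := by
  obtain ⟨J, hJ, hJ0, hJA⟩ : ∃ J : Matrix (Fin 2) (Fin 2) F, J.det = 1 ∧ J 0 0 + J 1 1 = 0 ∧
      (J * A) 0 0 + (J * A) 1 1 = 0 := by
    by_cases hz : A 1 0 = 0
    · by_cases hy : A 0 1 = 0
      · refine ⟨!![0, 1; 1, 0], ?_, ?_, ?_⟩
        · simp [det_fin_two]; linear_combination - h2
        · simp
        · simp [mul_apply, Fin.sum_univ_two, hz, hy]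
      · refine ⟨!![1, 0; (A 0 0 + A 1 1) / A 0 1, 1], ?_, ?_, ?_⟩
        · simp [det_fin_two]
        · simp; linear_combination h2
        · simp [mul_apply, Fin.sum_univ_two]; field_simp
          linear_combination (A 0 0 + A 1 1) * h2
    · refine ⟨!![1, (A 0 0 + A 1 1) / A 1 0; 0, 1], ?_, ?_, ?_⟩
      · simp [det_fin_two]
      · simp; linear_combination h2
      · simp [mul_apply, Fin.sum_univ_two]; field_simp
        linear_combination (A 0 0 + A 1 1) * h2
  have hJJ := inv_of h2 hJ hJ0
  refine ⟨J, J * A, hJJ, inv_of h2 (by rw [det_mul, hJ, h, one_mul]) hJA, ?_⟩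
  rw [← mul_assoc, hJJ, one_mul]

lemma S_iff (h2 : (2 : F) = 0) (S : Set (Matrix (Fin 2) (Fin 2) F))
    (hS : S = ProdInv2 F 2 ∨ S = ProdInv3 F 2 ∨ S = ProdInv4 F 2) (A) : A ∈ S ↔ A.det = 1 := by
  rcases hS with rfl | rfl | rfl
  · constructor
    · rintro ⟨J, K, hJ, hK, rfl⟩
      simp [inv_det_sq h2 hJ, inv_det_sq h2 hK]
    · exact fun h => two_of_det h2 h
  · constructor
    · rintro ⟨J, K, L, hJ, hK, hL, rfl⟩
      simp [inv_det_sq h2 hJ, inv_det_sq h2 hK, inv_det_sq h2 hL]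
    · intro h
      obtain ⟨J, K, hJ, hK, rfl⟩ := two_of_det h2 h
      exact ⟨J, K, 1, hJ, hK, by simp, by simp⟩
  · constructor
    · rintro ⟨J, K, L, M, hJ, hK, hL, hM, rfl⟩
      simp [inv_det_sq h2 hJ, inv_det_sq h2 hK, inv_det_sq h2 hL, inv_det_sq h2 hM]
    · intro h
      obtain ⟨J, K, hJ, hK, rfl⟩ := two_of_det h2 h
      exact ⟨J, K, 1, 1, hJ, hK, by simp, by simp, by simp⟩

lemma sing (T : Matrix (Fin 2) (Fin 2) F →ₗ[F] Matrix (Fin 2) (Fin 2) F)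
    (hT : Function.Injective T) (h : ∀ A, A.det = 1 → (T A).det = 1)
    (A N : Matrix (Fin 2) (Fin 2) F) (hN : N.det = 0) (hA : ∀ b : F, (A + b • N).det = 1) :
    (T N).det = 0 := by
  by_cases hb : ∃ b : F, b ≠ 0 ∧ b ≠ 1
  · obtain ⟨b, hb0, hb1⟩ := hb
    have e0 := h _ (hA 0)
    have e1 := h _ (hA 1)
    have e2 := h _ (hA b)
    simp only [map_add, map_smul, det_fin_two, Matrix.add_apply, Matrix.smul_apply, smul_eq_mul] at e0 e1 e2 ⊢
    have : b * (b - 1) * (T N 0 0 * T N 1 1 - T N 0 1 * T N 1 0) = 0 := by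
      linear_combination e2 - b * e1 - (1 - b) * e0
    exact (mul_eq_zero.mp this).resolve_left (mul_ne_zero hb0 (sub_ne_zero.mpr hb1))
  · push Not at hb
    have hF : Finite F := by
      refine Set.finite_univ_iff.mp ((Set.toFinite {(0 : F), 1}).subset ?_)
      intro x _
      by_cases hx : x = 0
      · simp [hx]
      · simp [hb x hx]
    by_contra hne
    have h1 := hb _ hne
    let g : {A : Matrix (Fin 2) (Fin 2) F // A.det = 1} → {A : Matrix (Fin 2) (Fin 2) F // A.det = 1} :=
      fun A => ⟨T A.1, h _ A.2⟩
    have hg : Function.Injective g := fun x y hxy => Subtype.ext (hT (congrArg Subtype.val hxy))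
    obtain ⟨x, hx⟩ := (Finite.injective_iff_surjective.mp hg) ⟨T N, h1⟩
    have := hT (congrArg Subtype.val hx)
    have h3 := x.2
    rw [this, hN] at h3
    exact zero_ne_one h3

lemma expand (T : Matrix (Fin 2) (Fin 2) F →ₗ[F] Matrix (Fin 2) (Fin 2) F)
    (X : Matrix (Fin 2) (Fin 2) F) :
    T X = X 0 0 • T !![1, 0; 0, 0] + X 0 1 • T !![0, 1; 0, 0] + X 1 0 • T !![0, 0; 1, 0]
      + X 1 1 • T !![0, 0; 0, 1] := by
  simp only [← map_smul, ← map_add]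
  congr 1
  ext i j
  fin_cases i <;> fin_cases j <;> simp

lemma det_pres (h2 : (2 : F) = 0) (T : Matrix (Fin 2) (Fin 2) F →ₗ[F] Matrix (Fin 2) (Fin 2) F)
    (hT : Function.Injective T) (h : ∀ A, A.det = 1 → (T A).det = 1) (X) :
    (T X).det = X.det := by
  have hm : (-1 : F) = 1 := by linear_combination -h2
  have a1 := sing T hT h !![0, 1; 1, 0] !![1, 0; 0, 0] (by simp) (by intro b; simp [det_fin_two, hm])
  have a2 := sing T hT h !![0, 1; 1, 0] !![0, 0; 0, 1] (by simp) (by intro b; simp [det_fin_two, hm])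
  have a3 := sing T hT h !![1, 0; 0, 1] !![0, 1; 0, 0] (by simp) (by intro b; simp [det_fin_two])
  have a4 := sing T hT h !![1, 0; 0, 1] !![0, 0; 1, 0] (by simp) (by intro b; simp [det_fin_two])
  have a5 := sing T hT h !![0, 1; 1, 1] !![1, 1; 0, 0] (by simp) (by intro b; simp [det_fin_two, hm])
  have a6 := sing T hT h !![0, 1; 1, 1] !![1, 0; 1, 0] (by simp) (by intro b; simp [det_fin_two, hm])
  have a7 := sing T hT h !![1, 1; 1, 0] !![0, 1; 0, 1] (by simp) (by intro b; simp [det_fin_two, hm])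
  have a8 := sing T hT h !![1, 1; 1, 0] !![0, 0; 1, 1] (by simp) (by intro b; simp [det_fin_two, hm])
  have a9 := h !![1, 0; 0, 1] (by simp)
  have a10 := h !![0, 1; 1, 0] (by simp [hm])
  rw [expand T] at a5 a6 a7 a8 a9 a10 ⊢
  generalize T !![1, 0; 0, 0] = A at *
  generalize T !![0, 1; 0, 0] = B at *
  generalize T !![0, 0; 1, 0] = C at *
  generalize T !![0, 0; 0, 1] = D at *
  simp [det_fin_two] at a1 a2 a3 a4 a5 a6 a7 a8 a9 a10 ⊢
  generalize X 0 0 = x at *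
  generalize X 0 1 = y at *
  generalize X 1 0 = z at *
  generalize X 1 1 = w at *
  linear_combination x^2 * a1 + w^2 * a2 + y^2 * a3 + z^2 * a4 + x*y*(a5 - a1 - a3)
    + x*z*(a6 - a1 - a4) + y*w*(a7 - a2 - a3) + z*w*(a8 - a2 - a4)
    + x*w*(a9 - a1 - a2) + y*z*(a10 - a3 - a4) + y*z*h2

lemma coreA (T : Matrix (Fin 2) (Fin 2) F →ₗ[F] Matrix (Fin 2) (Fin 2) F)
    (h : ∀ X, (T X).det = X.det) (hA : T !![1, 0; 0, 0] = !![1, 0; 0, 0])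
    (hD : T !![0, 0; 0, 1] = !![0, 0; 0, 1]) : GoodMap T := by
  have b1 := h !![0, 1; 0, 0]
  have b2 := h !![1, 1; 0, 0]
  have b3 := h !![0, 1; 0, 1]
  have c1 := h !![0, 0; 1, 0]
  have c2 := h !![1, 0; 1, 0]
  have c3 := h !![0, 0; 1, 1]
  have d := h !![0, 1; 1, 0]
  have E := expand T
  rw [expand T] at b2 b3 c2 c3 d
  rw [hA, hD] at *
  generalize T !![0, 1; 0, 0] = B at *
  generalize T !![0, 0; 1, 0] = C at *
  simp [det_fin_two] at b1 b2 b3 c1 c2 c3 d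
  have e1 : B 1 1 = 0 := by linear_combination b2 - b1
  have e2 : B 0 0 = 0 := by linear_combination b3 - b1
  have e3 : C 1 1 = 0 := by linear_combination c2 - c1
  have e4 : C 0 0 = 0 := by linear_combination c3 - c1
  simp [e1, e2, e3, e4] at b1 c1 d
  rcases b1 with hb | hb
  · simp [hb] at d
    have hC : C 0 1 ≠ 0 := by rintro h0; simp [h0] at d
    have hc := c1.resolve_left hC
    rw [hc, add_zero] at d
    refine ⟨!![1, 0; 0, B 1 0], !![1, 0; 0, C 0 1], by simp; linear_combination d, Or.inr fun X => ?_⟩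
    rw [E]
    ext i j
    fin_cases i <;> fin_cases j <;> simp [mul_apply, Fin.sum_univ_two, e1, e2, e3, e4, hb, hc, vecMul, vecHead, vecTail]
    all_goals first | ring1 | linear_combination - X 1 1 * d
  · simp [hb] at d
    have hC : C 1 0 ≠ 0 := by rintro h0; simp [h0] at d
    have hc := c1.resolve_right hC
    rw [hc, add_zero] at d
    refine ⟨!![1, 0; 0, C 1 0], !![1, 0; 0, B 0 1], by simp; linear_combination d, Or.inl fun X => ?_⟩
    rw [E]
    ext i j
    fin_cases i <;> fin_cases j <;> simp [mul_apply, Fin.sum_univ_two, e1, e2, e3, e4, hb, hc, vecMul, vecHead, vecTail]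
    all_goals first | ring1 | linear_combination - X 1 1 * d

lemma good_of_mul (f : Matrix (Fin 2) (Fin 2) F → Matrix (Fin 2) (Fin 2) F)
    (R R' U U' : Matrix (Fin 2) (Fin 2) F) (hR : R' * R = 1) (hU : U * U' = 1)
    (hd : R'.det * U'.det = 1)
    (hg : GoodMap fun X => R * f X * U) : GoodMap f := by
  obtain ⟨P, Q, hPQ, hf⟩ := hg
  have key : ∀ X, f X = R' * (R * f X * U) * U' := fun X => by
    calc f X = (R' * R) * f X * (U * U') := by rw [hR, hU]; simp
      _ = _ := by simp only [mul_assoc]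
  refine ⟨R' * P, Q * U', ?_, hf.imp (fun hf X => ?_) (fun hf X => ?_)⟩
  · rw [det_mul, det_mul]; linear_combination hPQ * (R'.det * U'.det) + hd
  · rw [key, show R * f X * U = _ from hf X]; simp only [mul_assoc]
  · rw [key, show R * f X * U = _ from hf X]; simp only [mul_assoc]

lemma conj_exists (M : Matrix (Fin 2) (Fin 2) F) (hd : M.det = 0) (ht : M 0 0 + M 1 1 = 1) :
    ∃ V : Matrix (Fin 2) (Fin 2) F, V.det ≠ 0 ∧ M * V = V * !![1, 0; 0, 0] := by
  rw [det_fin_two] at hd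
  by_cases ha : M 0 0 = 0
  · have h1 : M 1 1 = 1 := by linear_combination ht - ha
    have hbc : M 0 1 * M 1 0 = 0 := by linear_combination -hd + M 1 1 * ha
    refine ⟨!![M 0 1, 1; 1, - M 1 0], ?_, ?_⟩
    · simp [det_fin_two, hbc]
    · ext i j
      fin_cases i <;> fin_cases j <;>
        simp [mul_apply, Fin.sum_univ_two, ha, h1, hbc, vecMul, vecHead, vecTail]
      exact (mul_eq_zero.mp hbc).symm
  · refine ⟨!![M 0 0, M 0 1; M 1 0, - M 0 0], ?_, ?_⟩
    · have : (!![M 0 0, M 0 1; M 1 0, - M 0 0] : Matrix (Fin 2) (Fin 2) F).det = - M 0 0 := by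
        simp [det_fin_two]; linear_combination hd - M 0 0 * ht
      rw [this]; exact neg_ne_zero.mpr ha
    · ext i j
      fin_cases i <;> fin_cases j <;>
        simp [mul_apply, Fin.sum_univ_two, vecMul, vecHead, vecTail]
      · linear_combination M 0 0 * ht - hd
      · ring
      · linear_combination M 1 0 * ht
      · linear_combination -hd

lemma coreB (T : Matrix (Fin 2) (Fin 2) F →ₗ[F] Matrix (Fin 2) (Fin 2) F)
    (h : ∀ X, (T X).det = X.det) (h1 : T 1 = 1) : GoodMap T := by
  have hs : T !![1, 0; 0, 0] + T !![0, 0; 0, 1] = 1 := by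
    rw [← map_add, ← h1]; congr 1; ext i j; fin_cases i <;> fin_cases j <;> simp
  have hd : (T !![1, 0; 0, 0]).det = 0 := by rw [h]; simp
  have hd' : (T !![0, 0; 0, 1]).det = 0 := by rw [h]; simp
  have hD : T !![0, 0; 0, 1] = 1 - T !![1, 0; 0, 0] := by rw [← hs]; abel
  have ht : T !![1, 0; 0, 0] 0 0 + T !![1, 0; 0, 0] 1 1 = 1 := by
    rw [hD] at hd'
    simp [det_fin_two] at hd hd'
    linear_combination hd - hd'
  obtain ⟨V, hV, hMV⟩ := conj_exists _ hd ht
  have hVu : IsUnit V.det := hV.isUnit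
  have i1 := V.mul_nonsing_inv hVu
  have i2 := V.nonsing_inv_mul hVu
  have dd : V.det * V⁻¹.det = 1 := by rw [← det_mul, i1, det_one]
  apply good_of_mul T V⁻¹ V V V⁻¹ i1 i1 dd
  let T' : Matrix (Fin 2) (Fin 2) F →ₗ[F] Matrix (Fin 2) (Fin 2) F :=
    (LinearMap.mulRight F V) ∘ₗ (LinearMap.mulLeft F V⁻¹) ∘ₗ T
  have e11 : T' !![1, 0; 0, 0] = !![1, 0; 0, 0] := by
    change V⁻¹ * T _ * V = _
    rw [mul_assoc, hMV, ← mul_assoc, i2, one_mul]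
  refine coreA T' ?_ e11 ?_
  · intro X
    change (V⁻¹ * T X * V).det = _
    rw [det_mul, det_mul, h]; linear_combination X.det * dd
  · have : T' !![0, 0; 0, 1] = 1 - T' !![1, 0; 0, 0] := by
      change V⁻¹ * T _ * V = 1 - V⁻¹ * T _ * V
      rw [hD, mul_sub, sub_mul, mul_one, i2]
    rw [this, e11]
    ext i j; fin_cases i <;> fin_cases j <;> simp

lemma coreC (T : Matrix (Fin 2) (Fin 2) F →ₗ[F] Matrix (Fin 2) (Fin 2) F)
    (h : ∀ X, (T X).det = X.det) : GoodMap T := by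
  have hd : (T 1).det = 1 := by rw [h, det_one]
  have hu : IsUnit (T 1).det := by rw [hd]; exact isUnit_one
  have i1 := (T 1).mul_nonsing_inv hu
  have i2 := (T 1).nonsing_inv_mul hu
  have dd : (T 1).det * (T 1)⁻¹.det = 1 := by rw [← det_mul, i1, det_one]
  have dd' : (T 1)⁻¹.det = 1 := by rw [hd, one_mul] at dd; exact dd
  apply good_of_mul T (T 1)⁻¹ (T 1) 1 1 i1 (one_mul _) (by rw [hd, det_one, one_mul])
  simp only [mul_one]
  refine coreB ((LinearMap.mulLeft F (T 1)⁻¹) ∘ₗ T) ?_ i2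
  intro X
  change ((T 1)⁻¹ * T X).det = _
  rw [det_mul, dd', one_mul, h]

end

theorem stmt17 (F : Type*) [Field F] (hchar : ringChar F = 2)
    (S : Set (Matrix (Fin 2) (Fin 2) F))
    (hS : S = ProdInv2 F 2 ∨ S = ProdInv3 F 2 ∨ S = ProdInv4 F 2)
    (T : Matrix (Fin 2) (Fin 2) F →ₗ[F] Matrix (Fin 2) (Fin 2) F)
    (hT : Function.Bijective T) :
    (∀ A ∈ S, T A ∈ S) ↔
      ∃ P Q : Matrix (Fin 2) (Fin 2) F, IsUnit P ∧ IsUnit Q ∧ (P * Q).det = 1 ∧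
        ((∀ X, T X = P * X * Q) ∨ (∀ X, T X = P * Xᵀ * Q)) := by
  have h2 : (2 : F) = 0 := by
    have := (ringChar.spec F 2).mpr (by rw [hchar])
    exact_mod_cast this
  simp only [S_iff h2 S hS]
  constructor
  · intro h
    obtain ⟨P, Q, hPQ, hf⟩ := coreC T (det_pres h2 T hT.1 h)
    refine ⟨P, Q, ?_, ?_, by rw [det_mul, hPQ], hf⟩
    · rw [isUnit_iff_isUnit_det]; exact IsUnit.of_mul_eq_one _ hPQ
    · rw [isUnit_iff_isUnit_det]; exact IsUnit.of_mul_eq_one _ (by rw [mul_comm]; exact hPQ)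
  · rintro ⟨P, Q, -, -, hPQ, hf⟩ A hA
    rw [det_mul] at hPQ
    rcases hf with hf | hf
    · rw [hf, det_mul, det_mul, hA, mul_one, hPQ]
    · rw [hf, det_mul, det_mul, det_transpose, hA, mul_one, hPQ]
end
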